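/- arXiv:math/0609029 — 4 statements merged into one kernel-verified Lean document; each statement's English description precedes it below -/
import Mathlib

section
/- Let q be a power of a prime, let n ≥ 1, and let G = GL(n, 𝔽_q). For every irreducible complex character χ of G, the sum of the values of χ over the unipotent elements of G is nonzero: Σ_{g ∈ G, (g − 1)^n = 0} χ(g) ≠ 0. In other words, every irreducible complex character of G is directly linked across the set of unipotent elements to the trivial character. -/
section Corner

open scoped Classical

variable {A : Type*} [Ring A]

/-- The corner `a A b`, described by fixed-point equations. -/
def corner (a b : A) : AddSubgroup A where
  carrier := {x | a * x = x ∧ x * b = x}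
  zero_mem' := by simp
  add_mem' := by
    rintro x y ⟨hx, hx'⟩ ⟨hy, hy'⟩
    exact ⟨by rw [mul_add, hx, hy], by rw [add_mul, hx', hy']⟩
  neg_mem' := by
    rintro x ⟨hx, hx'⟩
    exact ⟨by rw [mul_neg, hx], by rw [neg_mul, hx']⟩

theorem mem_corner {a b x : A} : x ∈ corner a b ↔ a * x = x ∧ x * b = x := Iff.rfl

theorem mul_mem_corner {a b c d x y : A} (hx : x ∈ corner a b) (hy : y ∈ corner c d) :
    x * y ∈ corner a d :=
  ⟨by rw [← mul_assoc, hx.1], by rw [mul_assoc, hy.2]⟩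

theorem corner_mul_eq_zero {a b c d x y : A} (hx : x ∈ corner a b) (hy : y ∈ corner c d)
    (h : b * c = 0) : x * y = 0 := by
  rw [← hx.2, ← hy.1, mul_assoc, ← mul_assoc b, h, zero_mul, mul_zero]

theorem mul_eq_zero_assoc {a b : A} (h : a * b = 0) (c : A) : a * (b * c) = 0 := by
  rw [← mul_assoc, h, zero_mul]

theorem mul_eq_assoc {a b d : A} (h : a * b = d) (c : A) : a * (b * c) = d * c := by
  rw [← mul_assoc, h]

theorem corner_mono_left {a a' b : A} (h : a' * a = a) : corner a b ≤ corner a' b := by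
  rintro x ⟨hx, hx'⟩
  exact ⟨by rw [← hx, ← mul_assoc, h], hx'⟩

theorem corner_mono_right {a b b' : A} (h : b * b' = b) : corner a b ≤ corner a b' := by
  rintro x ⟨hx, hx'⟩
  exact ⟨hx, by rw [← hx', mul_assoc, h]⟩

theorem one_add_mul_one_add {a b x y : A} (hab : b * a = 0) (hx : x ∈ corner a b)
    (hy : y ∈ corner a b) : (1 + x) * (1 + y) = 1 + (x + y) := by
  have := corner_mul_eq_zero hx hy hab
  rw [add_mul, mul_add, mul_add, this]; simp [add_assoc, add_comm]

/-- Splitting the right idempotent splits the corner. -/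
def cornerAddRight (q : A) {p₁ p₂ : A} (h₁ : p₁ * p₁ = p₁) (h₂ : p₂ * p₂ = p₂)
    (h₁₂ : p₁ * p₂ = 0) (h₂₁ : p₂ * p₁ = 0) :
    corner q (p₁ + p₂) ≃ corner q p₁ × corner q p₂ where
  toFun x := (⟨x * p₁, by rw [← mul_assoc, x.2.1], by rw [mul_assoc, h₁]⟩,
    ⟨x * p₂, by rw [← mul_assoc, x.2.1], by rw [mul_assoc, h₂]⟩)
  invFun y := ⟨y.1 + y.2,
    add_mem (corner_mono_right (by rw [mul_add, h₁, h₁₂, add_zero]) y.1.2)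
      (corner_mono_right (by rw [mul_add, h₂, h₂₁, zero_add]) y.2.2)⟩
  left_inv x := Subtype.ext (by simpa [mul_add] using x.2.2)
  right_inv y := by
    have e₁ : (y.1 : A) * p₂ = 0 := by rw [← y.1.2.2, mul_assoc, h₁₂, mul_zero]
    have e₂ : (y.2 : A) * p₁ = 0 := by rw [← y.2.2.2, mul_assoc, h₂₁, mul_zero]
    ext <;> simp [add_mul, y.1.2.2, y.2.2.2, e₁, e₂]

/-- Splitting the left idempotent splits the corner. -/
def cornerAddLeft (p : A) {q₁ q₂ : A} (h₁ : q₁ * q₁ = q₁) (h₂ : q₂ * q₂ = q₂)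
    (h₁₂ : q₁ * q₂ = 0) (h₂₁ : q₂ * q₁ = 0) :
    corner (q₁ + q₂) p ≃ corner q₁ p × corner q₂ p where
  toFun x := (⟨q₁ * x, by rw [← mul_assoc, h₁], by rw [mul_assoc, x.2.2]⟩,
    ⟨q₂ * x, by rw [← mul_assoc, h₂], by rw [mul_assoc, x.2.2]⟩)
  invFun y := ⟨y.1 + y.2,
    add_mem (corner_mono_left (by rw [add_mul, h₁, h₂₁, add_zero]) y.1.2)
      (corner_mono_left (by rw [add_mul, h₂, h₁₂, zero_add]) y.2.2)⟩
  left_inv x := Subtype.ext (by simpa [add_mul] using x.2.1)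
  right_inv y := by
    have e₁ : q₂ * (y.1 : A) = 0 := by rw [← y.1.2.1, ← mul_assoc, h₂₁, zero_mul]
    have e₂ : q₁ * (y.2 : A) = 0 := by rw [← y.2.2.1, ← mul_assoc, h₁₂, zero_mul]
    ext <;> simp [mul_add, y.1.2.1, y.2.2.1, e₁, e₂]

variable {K M : Type*} [Field K] [AddCommGroup M] [Module K M] [Fintype A]

/-- The sum of the elements `1 + x`, for `x` in a corner, in a representation. -/
noncomputable def cornerSum (R : A →* Module.End K M) (a b : A) : Module.End K M :=
  ∑ x : corner a b, R (1 + x)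

theorem cornerSum_apply (R : A →* Module.End K M) (a b : A) (w : M) :
    cornerSum R a b w = ∑ x : corner a b, R (1 + x) w := by
  rw [cornerSum, LinearMap.sum_apply]

theorem apply_cornerSum (R : A →* Module.End K M) {a b x : A} (hab : b * a = 0)
    (hx : x ∈ corner a b) (w : M) : R (1 + x) (cornerSum R a b w) = cornerSum R a b w := by
  simp only [cornerSum_apply, map_sum]
  simp only [← Module.End.mul_apply, ← map_mul]
  exact Fintype.sum_equiv (Equiv.addLeft ⟨x, hx⟩) _ _ fun y => by
    rw [one_add_mul_one_add hab hx y.2]; rfl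

theorem cornerSum_apply_apply (R : A →* Module.End K M) {a b x : A} (hab : b * a = 0)
    (hx : x ∈ corner a b) (w : M) : cornerSum R a b (R (1 + x) w) = cornerSum R a b w := by
  simp only [cornerSum_apply]
  simp only [← Module.End.mul_apply, ← map_mul]
  exact Fintype.sum_equiv (Equiv.addRight ⟨x, hx⟩) _ _ fun y => by
    rw [one_add_mul_one_add hab y.2 hx]; rfl

theorem cornerSum_of_invariant (R : A →* Module.End K M) {a b : A} {w : M}
    (h : ∀ x ∈ corner a b, R (1 + x) w = w) :
    cornerSum R a b w = Nat.card (corner a b) • w := by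
  rw [cornerSum_apply, Finset.sum_congr rfl fun (x : corner a b) _ => h x x.2]
  simp

/-- The sum over a corner moves past a unit that normalizes the two corners into one another. -/
theorem cornerSum_conj (R : A →* Module.End K M) {a b c d g : A} (f f' : A → A)
    (hf : ∀ x ∈ corner a b, f x ∈ corner c d) (hf' : ∀ x ∈ corner c d, f' x ∈ corner a b)
    (h₁ : ∀ x ∈ corner a b, f' (f x) = x) (h₂ : ∀ x ∈ corner c d, f (f' x) = x)
    (h : ∀ x ∈ corner a b, (1 + x) * g = g * (1 + f x)) (w : M) :
    cornerSum R a b (R g w) = R g (cornerSum R c d w) := by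
  simp only [cornerSum_apply, map_sum]
  simp only [← Module.End.mul_apply, ← map_mul]
  refine Fintype.sum_equiv
    ⟨fun x => ⟨f x, hf x x.2⟩, fun x => ⟨f' x, hf' x x.2⟩, fun x => Subtype.ext (h₁ x x.2),
      fun x => Subtype.ext (h₂ x x.2)⟩ _ _ fun x => ?_
  rw [h x x.2]; rfl

theorem cornerSum_add_right (R : A →* Module.End K M) {q p₁ p₂ : A} (h₁ : p₁ * p₁ = p₁)
    (h₂ : p₂ * p₂ = p₂) (h₁₂ : p₁ * p₂ = 0) (h₂₁ : p₂ * p₁ = 0) (h : p₁ * q = 0) (w : M) :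
    cornerSum R q (p₁ + p₂) w = cornerSum R q p₁ (cornerSum R q p₂ w) := by
  rw [cornerSum_apply, cornerSum_apply R q p₁]
  simp only [cornerSum_apply, map_sum]
  simp only [← Module.End.mul_apply, ← map_mul]
  rw [← Fintype.sum_prod_type' (f := fun (x : corner q p₁) (y : corner q p₂) =>
    R ((1 + x) * (1 + y)) w)]
  refine Fintype.sum_equiv (cornerAddRight q h₁ h₂ h₁₂ h₂₁) _ _ fun x => ?_
  obtain ⟨y, rfl⟩ := (cornerAddRight q h₁ h₂ h₁₂ h₂₁).symm.surjective x
  rw [Equiv.apply_symm_apply]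
  have e := corner_mul_eq_zero y.1.2 y.2.2 h
  rw [add_mul, mul_add, mul_add, e]
  simp [cornerAddRight, add_assoc, add_comm]

theorem cornerSum_add_left (R : A →* Module.End K M) {p q₁ q₂ : A} (h₁ : q₁ * q₁ = q₁)
    (h₂ : q₂ * q₂ = q₂) (h₁₂ : q₁ * q₂ = 0) (h₂₁ : q₂ * q₁ = 0) (h : p * q₂ = 0) (w : M) :
    cornerSum R (q₁ + q₂) p w = cornerSum R q₁ p (cornerSum R q₂ p w) := by
  rw [cornerSum_apply, cornerSum_apply R q₁ p]
  simp only [cornerSum_apply, map_sum]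
  simp only [← Module.End.mul_apply, ← map_mul]
  rw [← Fintype.sum_prod_type' (f := fun (x : corner q₁ p) (y : corner q₂ p) =>
    R ((1 + x) * (1 + y)) w)]
  refine Fintype.sum_equiv (cornerAddLeft p h₁ h₂ h₁₂ h₂₁) _ _ fun x => ?_
  obtain ⟨y, rfl⟩ := (cornerAddLeft p h₁ h₂ h₁₂ h₂₁).symm.surjective x
  rw [Equiv.apply_symm_apply]
  have e := corner_mul_eq_zero y.1.2 y.2.2 h
  rw [add_mul, mul_add, mul_add, e]
  simp [cornerAddLeft, add_assoc, add_comm]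

end Corner

section HowlettLehrer

open scoped Classical

variable {A : Type*} [Ring A] {K M : Type*} [Field K] [AddCommGroup M] [Module K M]

theorem apply_apply_of_mul_eq (R : A →* Module.End K M) {g h h' : A} {w : M}
    (h₁ : h * g = g * h') (h₂ : R h' w = w) : R h (R g w) = R g w := by
  rw [← Module.End.mul_apply, ← map_mul, h₁, map_mul, Module.End.mul_apply, h₂]

variable [Fintype A]

theorem apply_cornerSum_of_mul_eq (R : A →* Module.End K M) {a b h : A} {w : M}
    (H : ∀ x ∈ corner a b, ∃ h', h * (1 + x) = (1 + x) * h' ∧ R h' w = w) :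
    R h (cornerSum R a b w) = cornerSum R a b w := by
  rw [cornerSum_apply, map_sum]
  refine Finset.sum_congr rfl fun (x : corner a b) _ => ?_
  obtain ⟨h', h₁, h₂⟩ := H x x.2
  exact apply_apply_of_mul_eq R h₁ h₂

theorem cornerSum_eq_zero_of_split_left (R : A →* Module.End K M) {p₁ p₂ q : A}
    (h₁ : p₁ * p₁ = p₁) (h₂ : p₂ * p₂ = p₂) (h₁₂ : p₁ * p₂ = 0) (h₂₁ : p₂ * p₁ = 0)
    (h₁q : p₁ * q = 0) (hq₁ : q * p₁ = 0) (h₂q : p₂ * q = 0)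
    (ih₁ : ∀ w, (∀ x ∈ corner p₁ q, R (1 + x) w = w) → cornerSum R q p₁ w = 0 → w = 0)
    (ih₂ : ∀ w, (∀ x ∈ corner p₂ q, R (1 + x) w = w) → cornerSum R q p₂ w = 0 → w = 0)
    {w : M} (hw : ∀ x ∈ corner (p₁ + p₂) q, R (1 + x) w = w)
    (h₀ : cornerSum R q (p₁ + p₂) w = 0) : cornerSum R p₁ p₂ w = 0 := by
  set v := cornerSum R p₁ p₂ w with hv
  have hvp : ∀ x ∈ corner (p₁ + p₂) q, R (1 + x) v = v := fun x hx => by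
    refine apply_cornerSum_of_mul_eq R fun n hn => ⟨1 + (x - n * x), ?_, hw _ ?_⟩
    · have e₁ := corner_mul_eq_zero hx hn hq₁
      have e₂ := corner_mul_eq_zero hn hn h₂₁
      simp only [add_mul, mul_add, mul_sub, one_mul, mul_one, e₁, mul_eq_zero_assoc e₂]
      abel
    · exact sub_mem hx (corner_mono_left (by rw [add_mul, h₁, h₂₁, add_zero])
        (mul_mem_corner hn hx))
  have hv₁₂ : ∀ x ∈ corner p₁ p₂, R (1 + x) v = v := fun x hx => apply_cornerSum R h₂₁ hx w
  have hv₀ : cornerSum R q (p₁ + p₂) v = 0 := by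
    rw [hv, cornerSum_apply R p₁ p₂, map_sum]
    refine Finset.sum_eq_zero fun (n : corner p₁ p₂) _ => ?_
    have hn : (n : A) * n = 0 := corner_mul_eq_zero n.2 n.2 h₂₁
    have hnr : ∀ y ∈ corner q (p₁ + p₂), y * n ∈ corner q (p₁ + p₂) := fun y hy =>
      corner_mono_right (by rw [mul_add, h₂₁, h₂, zero_add]) (mul_mem_corner hy n.2)
    rw [cornerSum_conj R (fun y => y + y * n) (fun y => y - y * n)
      (fun y hy => add_mem hy (hnr y hy)) (fun y hy => sub_mem hy (hnr y hy))
      (fun y _ => ?_) (fun y _ => ?_) (fun y hy => ?_), h₀, map_zero]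
    · simp only [add_mul, mul_assoc, hn, mul_zero]; abel
    · simp only [sub_mul, mul_assoc, hn, mul_zero]; abel
    · have e : (n : A) * y = 0 := corner_mul_eq_zero n.2 hy h₂q
      simp only [add_mul, mul_add, one_mul, mul_one, e, mul_eq_zero_assoc e]; abel
  refine ih₂ v (fun x hx => hvp x (corner_mono_left (by rw [add_mul, h₂, h₁₂, zero_add]) hx)) ?_
  refine ih₁ _ (fun x hx => ?_) ?_
  · refine apply_cornerSum_of_mul_eq R fun y hy => ⟨(1 + x) * (1 + x * y), ?_, ?_⟩
    · have e₁ := corner_mul_eq_zero hx hx hq₁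
      have e₂ := corner_mul_eq_zero hy hx h₂₁
      simp only [add_mul, mul_add, one_mul, mul_one, e₂, mul_eq_zero_assoc e₁,
        mul_eq_zero_assoc e₂, mul_zero]
      abel
    · rw [map_mul, Module.End.mul_apply, hv₁₂ _ (mul_mem_corner hx hy)]
      exact hvp x (corner_mono_left (by rw [add_mul, h₁, h₂₁, add_zero]) hx)
  · rw [← cornerSum_add_right R h₁ h₂ h₁₂ h₂₁ h₁q, hv₀]

theorem cornerSum_eq_zero_of_split_right (R : A →* Module.End K M) {p q₁ q₂ : A}
    (h₁ : q₁ * q₁ = q₁) (h₂ : q₂ * q₂ = q₂) (h₁₂ : q₁ * q₂ = 0) (h₂₁ : q₂ * q₁ = 0)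
    (hp₁ : p * q₁ = 0) (h₂p : q₂ * p = 0)
    (ih₁ : ∀ w, (∀ x ∈ corner p q₁, R (1 + x) w = w) → cornerSum R q₁ p w = 0 → w = 0)
    (ih₂ : ∀ w, (∀ x ∈ corner p q₂, R (1 + x) w = w) → cornerSum R q₂ p w = 0 → w = 0)
    {w : M} (hw : ∀ x ∈ corner p (q₁ + q₂), R (1 + x) w = w)
    (h₀ : cornerSum R (q₁ + q₂) p w = 0) : cornerSum R q₁ q₂ w = 0 := by
  set v := cornerSum R q₁ q₂ w with hv
  have hvp : ∀ x ∈ corner p (q₁ + q₂), R (1 + x) v = v := fun x hx => by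
    refine apply_cornerSum_of_mul_eq R fun n hn => ⟨1 + (x + x * n), ?_, hw _ ?_⟩
    · have e := corner_mul_eq_zero hn hx h₂p
      simp only [add_mul, mul_add, one_mul, mul_one, e, mul_eq_zero_assoc e]
      abel
    · exact add_mem hx (corner_mono_right (by rw [mul_add, h₂₁, h₂, zero_add])
        (mul_mem_corner hx hn))
  have hv₁₂ : ∀ x ∈ corner q₁ q₂, R (1 + x) v = v := fun x hx => apply_cornerSum R h₂₁ hx w
  have hv₀ : cornerSum R (q₁ + q₂) p v = 0 := by
    rw [hv, cornerSum_apply R q₁ q₂, map_sum]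
    refine Finset.sum_eq_zero fun (n : corner q₁ q₂) _ => ?_
    have hn : (n : A) * n = 0 := corner_mul_eq_zero n.2 n.2 h₂₁
    have hnr : ∀ y ∈ corner (q₁ + q₂) p, n * y ∈ corner (q₁ + q₂) p := fun y hy =>
      corner_mono_left (by rw [add_mul, h₂₁, h₁, add_zero]) (mul_mem_corner n.2 hy)
    rw [cornerSum_conj R (fun y => y - n * y) (fun y => y + n * y)
      (fun y hy => sub_mem hy (hnr y hy)) (fun y hy => add_mem hy (hnr y hy))
      (fun y _ => ?_) (fun y _ => ?_) (fun y hy => ?_), h₀, map_zero]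
    · simp only [mul_sub, mul_eq_zero_assoc hn]; abel
    · simp only [mul_add, mul_eq_zero_assoc hn]; abel
    · have e : y * (n : A) = 0 := corner_mul_eq_zero hy n.2 hp₁
      simp only [add_mul, mul_add, mul_sub, one_mul, mul_one, e, mul_eq_zero_assoc hn]; abel
  refine ih₁ v (fun x hx => hvp x (corner_mono_right (by rw [mul_add, h₁, h₁₂, add_zero]) hx)) ?_
  refine ih₂ _ (fun x hx => ?_) ?_
  · refine apply_cornerSum_of_mul_eq R fun y hy => ⟨(1 + x) * (1 + -(y * x)), ?_, ?_⟩
    · have e₁ := corner_mul_eq_zero hx hy h₂₁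
      have e₂ := corner_mul_eq_zero hy hy hp₁
      simp only [add_mul, mul_add, one_mul, mul_one, e₁, mul_neg, mul_eq_zero_assoc e₁,
        mul_eq_zero_assoc e₂, mul_zero]
      abel
    · rw [map_mul, Module.End.mul_apply, hv₁₂ _ (neg_mem (mul_mem_corner hy hx))]
      exact hvp x (corner_mono_right (by rw [mul_add, h₂, h₂₁, zero_add]) hx)
  · rw [← cornerSum_add_left R h₂ h₁ h₂₁ h₁₂ hp₁, add_comm, hv₀]

theorem eq_zero_of_card_corner_smul [CharZero K] {a b : A} {w : M}
    (h : Nat.card (corner a b) • w = 0) : w = 0 := by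
  rw [← Nat.cast_smul_eq_nsmul K, smul_eq_zero] at h
  exact h.resolve_left (Nat.cast_ne_zero.2 Nat.card_pos.ne')

/-- A cuspidal vector fixed by `1 + pAq` and killed by the sum over `1 + qAp` vanishes. -/
theorem eq_zero_of_cuspidal [CharZero K] (hreg : ∀ y : A, ∃ z, y * z * y = y)
    (R : A →* Module.End K M) {p q : A} (hp : p * p = p) (hq : q * q = q) (hpq : p * q = 0)
    (hqp : q * p = 0) {w : M} (hw : ∀ x ∈ corner p q, R (1 + x) w = w)
    (h₀ : cornerSum R q p w = 0)
    (hcp : ∀ a ∈ corner p p, a * a = a → a ≠ 0 → a ≠ p → cornerSum R (p - a) a w = 0)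
    (hcq : ∀ a ∈ corner q q, a * a = a → a ≠ 0 → a ≠ q → cornerSum R a (q - a) w = 0) :
    w = 0 := by
  have key : ∀ y ∈ corner q p, y ≠ 0 → cornerSum R p q (R (1 + y) w) = 0 := by
    intro y hy hy0
    obtain ⟨z₀, hz₀⟩ := hreg y
    obtain ⟨z, hz, hyzy, hzyz⟩ : ∃ z ∈ corner p q, y * z * y = y ∧ z * y * z = z := by
      have e : y * (p * z₀ * q) * y = y := by
        rw [show y * (p * z₀ * q) * y = (y * p) * z₀ * (q * y) by noncomm_ring, hy.1, hy.2, hz₀]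
      refine ⟨(p * z₀ * q) * y * (p * z₀ * q), ⟨?_, ?_⟩, ?_, ?_⟩
      · simp only [← mul_assoc, hp]
      · simp only [mul_assoc, hq]
      · rw [show y * ((p * z₀ * q) * y * (p * z₀ * q)) * y
          = (y * (p * z₀ * q) * y) * (p * z₀ * q) * y by noncomm_ring, e, e]
      · rw [show (p * z₀ * q) * y * (p * z₀ * q) * y * ((p * z₀ * q) * y * (p * z₀ * q))
          = (p * z₀ * q) * (y * (p * z₀ * q) * y * (p * z₀ * q) * y) * (p * z₀ * q) by
            noncomm_ring, e, e]
    have hyy : y * y = 0 := corner_mul_eq_zero hy hy hpq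
    have hzz : z * z = 0 := corner_mul_eq_zero hz hz hqp
    have hyzy' : y * (z * y) = y := by rw [← mul_assoc, hyzy]
    by_cases h₁ : z * y = p
    · by_cases h₂ : y * z = q
      · have e : 1 + y = (1 + z) * ((1 - p - q + y - z) * (1 + z)) := by
          simp only [add_mul, mul_add, sub_mul, mul_sub, one_mul, mul_one, hzz, h₁, h₂,
            hz.1, hz.2, mul_zero,
            show z * p = 0 by rw [← hz.2, mul_assoc, hqp, mul_zero],
            show q * z = 0 by rw [← hz.1, ← mul_assoc, hqp, zero_mul]]
          abel
        rw [e, map_mul, Module.End.mul_apply, cornerSum_apply_apply R hqp hz, map_mul,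
          Module.End.mul_apply, hw z hz]
        rw [cornerSum_conj R (fun x => -(y * x * y)) (fun x => -(z * x * z))
          (fun x hx => neg_mem (mul_mem_corner (mul_mem_corner hy hx) hy))
          (fun x hx => neg_mem (mul_mem_corner (mul_mem_corner hz hx) hz))
          (fun x hx => ?_) (fun x hx => ?_) (fun x hx => ?_), h₀, map_zero]
        · rw [show -(z * -(y * x * y) * z) = (z * y) * x * (y * z) by noncomm_ring, h₁, h₂, hx.1,
            hx.2]
        · rw [show -(y * -(z * x * z) * y) = (y * z) * x * (z * y) by noncomm_ring, h₁, h₂, hx.1,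
            hx.2]
        · have e₁ : x * p = 0 := by rw [← hx.2, mul_assoc, hqp, mul_zero]
          have e₂ : q * y = y := hy.1
          have e₃ : p * y = 0 := by rw [← hy.1, ← mul_assoc, hpq, zero_mul]
          have e₄ : x * z = 0 := corner_mul_eq_zero hx hz hqp
          simp only [add_mul, mul_add, sub_mul, mul_sub, one_mul, mul_one, mul_neg, mul_assoc,
            hx.2, e₁, e₄, mul_eq_assoc e₂, mul_eq_zero_assoc e₃, mul_eq_zero_assoc hyy,
            mul_eq_assoc h₁, mul_eq_assoc hx.1]
          abel
      · have hs : y * z ∈ corner q q := mul_mem_corner hy hz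
        have hs' : y * z * (y * z) = y * z := by rw [← mul_assoc, hyzy]
        have hc := hcq (y * z) hs hs' (fun h => hy0 (by rw [← hyzy, h, zero_mul])) h₂
        have e : ∀ φ ∈ corner (y * z) (q - y * z),
            cornerSum R p q (R (1 + y) (R (1 + φ) w)) = cornerSum R p q (R (1 + y) w) := by
          intro φ hφ
          have hx : -(z * φ) ∈ corner p q := neg_mem ⟨by rw [← mul_assoc, hz.1], by
            rw [mul_assoc]; congr 1
            exact (corner_mono_right (by rw [sub_mul, hq, hs.2]) hφ).2⟩
          have hφy : φ * y = 0 := by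
            rw [← hφ.2, mul_assoc, sub_mul, hy.1, hyzy, sub_self, mul_zero]
          have hφz : φ * z = 0 := by
            rw [← hφ.2, mul_assoc, sub_mul, mul_assoc, hzz, mul_zero, sub_zero, ← hz.1,
              ← mul_assoc q, hqp, zero_mul, mul_zero]
          have hyzφ : y * (z * φ) = φ := by rw [← mul_assoc, hφ.1]
          have e : (1 + -(z * φ)) * (1 + y) = (1 + y) * ((1 + φ) * (1 + -(z * φ))) := by
            have hyφ : y * φ = 0 := by
              rw [← hφ.1, ← mul_assoc, ← mul_assoc, hyy, zero_mul, zero_mul]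
            simp only [add_mul, mul_add, one_mul, mul_one, mul_neg, neg_mul, mul_assoc, hφy,
              mul_eq_zero_assoc hφz, hyzφ, hyφ, mul_zero]
            abel
          rw [← cornerSum_apply_apply R hqp hx (R (1 + y) w),
            ← Module.End.mul_apply (R (1 + -(z * φ))) (R (1 + y)), ← map_mul, e,
            map_mul, map_mul, Module.End.mul_apply, Module.End.mul_apply, hw _ hx]
        apply eq_zero_of_card_corner_smul (K := K) (a := y * z) (b := q - y * z)
        rw [← map_zero (cornerSum R p q), ← map_zero (R (1 + y)), ← hc, cornerSum_apply R (y * z),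
          map_sum, map_sum, Finset.sum_congr rfl fun (φ : corner (y * z) (q - y * z)) _ =>
            e φ φ.2]
        simp
    · have hs : z * y ∈ corner p p := mul_mem_corner hz hy
      have hs' : z * y * (z * y) = z * y := by rw [← mul_assoc, hzyz]
      have hc := hcp (z * y) hs hs' (fun h => hy0 (by rw [← hyzy, mul_assoc, h, mul_zero])) h₁
      have e : ∀ φ ∈ corner (p - z * y) (z * y),
          cornerSum R p q (R (1 + y) (R (1 + φ) w)) = cornerSum R p q (R (1 + y) w) := by
        intro φ hφ
        have hφp : p * φ = φ := (corner_mono_left (by rw [mul_sub, hp, hs.1]) hφ).1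
        have hx : φ * z ∈ corner p q := ⟨by rw [← mul_assoc, hφp], by rw [mul_assoc, hz.2]⟩
        have hyφ : y * φ = 0 := by
          rw [← hφ.1, ← mul_assoc, mul_sub, hy.2, hyzy', sub_self, zero_mul]
        have hφφ : φ * φ = 0 := by
          nth_rw 1 [← hφ.2]
          rw [mul_assoc, mul_assoc, hyφ, mul_zero, mul_zero]
        have hφzy : φ * (z * y) = φ := hφ.2
        have e : (1 + φ * z) * (1 + y) = (1 + y) * ((1 + φ) * (1 + φ * z)) := by
          simp only [add_mul, mul_add, one_mul, mul_one, mul_assoc, hφzy,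
            mul_eq_zero_assoc hφφ, mul_eq_zero_assoc hyφ, hyφ, mul_zero]
          abel
        rw [← cornerSum_apply_apply R hqp hx (R (1 + y) w),
          ← Module.End.mul_apply (R (1 + φ * z)) (R (1 + y)), ← map_mul, e,
          map_mul, map_mul, Module.End.mul_apply, Module.End.mul_apply, hw _ hx]
      apply eq_zero_of_card_corner_smul (K := K) (a := p - z * y) (b := z * y)
      rw [← map_zero (cornerSum R p q), ← map_zero (R (1 + y)), ← hc, cornerSum_apply R _ (z * y),
        map_sum, map_sum, Finset.sum_congr rfl fun (φ : corner (p - z * y) (z * y)) _ =>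
          e φ φ.2]
      simp
  apply eq_zero_of_card_corner_smul (K := K) (a := p) (b := q)
  rw [← map_zero (cornerSum R p q), ← h₀, cornerSum_apply R q p, map_sum,
    Finset.sum_eq_single (0 : corner q p)]
  · simp [cornerSum_of_invariant R hw]
  · exact fun y _ hy => key y y.2 (by simpa using hy)
  · simp

theorem card_corner_sub_lt {p a : A} (ha : a ∈ corner p p) (hp : p * p = p) (haa : a * a = a)
    (h0 : a ≠ 0) : Nat.card (corner (p - a) (p - a)) < Nat.card (corner p p) := by
  refine Set.ncard_lt_ncard (s := (corner (p - a) (p - a) : Set A)) (t := corner p p) ?_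
    (Set.toFinite _)
  refine ⟨fun x hx => corner_mono_left (by rw [mul_sub, hp, ha.1])
    (corner_mono_right (by rw [sub_mul, hp, ha.2]) hx), fun h => h0 ?_⟩
  rw [← (h ha).1, sub_mul, ha.1, haa, sub_self]

/-- The sums over two opposite unipotent radicals: the sum over `1 + qAp` is injective on the
vectors fixed by `1 + pAq`. -/
theorem eq_zero_of_cornerSum_eq_zero [CharZero K] (hreg : ∀ y : A, ∃ z, y * z * y = y)
    (R : A →* Module.End K M) {p q : A} (hp : p * p = p) (hq : q * q = q) (hpq : p * q = 0)
    (hqp : q * p = 0) {w : M} (hw : ∀ x ∈ corner p q, R (1 + x) w = w)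
    (h₀ : cornerSum R q p w = 0) : w = 0 := by
  induction hn : Nat.card (corner p p) + Nat.card (corner q q) using Nat.strong_induction_on
    generalizing p q w with
  | _ n ih =>
  subst hn
  have hsub : ∀ {p a : A}, p * p = p → a ∈ corner p p → a * a = a →
      (p - a) * (p - a) = p - a ∧ a * (p - a) = 0 ∧ (p - a) * a = 0 := fun {p a} hp ha haa => by
    refine ⟨?_, ?_, ?_⟩ <;> simp [sub_mul, mul_sub, hp, ha.1, ha.2, haa]
  have hlt : ∀ {p a : A}, p * p = p → a ∈ corner p p → a * a = a → a ≠ p →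
      Nat.card (corner a a) < Nat.card (corner p p) := fun {p a} hp ha haa hne => by
    obtain ⟨e₁, e₂, e₃⟩ := hsub hp ha haa
    have := card_corner_sub_lt (p := p) (a := p - a)
      ⟨by rw [mul_sub, hp, ha.1], by rw [sub_mul, hp, ha.2]⟩ hp e₁ (sub_ne_zero.2 hne.symm)
    rwa [sub_sub_cancel] at this
  refine eq_zero_of_cuspidal hreg R hp hq hpq hqp hw h₀ (fun a ha haa h0 h1 => ?_)
    (fun a ha haa h0 h1 => ?_)
  · obtain ⟨e₁, e₂, e₃⟩ := hsub hp ha haa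
    have haq : a * q = 0 := by rw [← ha.2, mul_assoc, hpq, mul_zero]
    have hqa : q * a = 0 := by rw [← ha.1, ← mul_assoc, hqp, zero_mul]
    have hbq : (p - a) * q = 0 := by rw [sub_mul, hpq, haq, sub_zero]
    have hqb : q * (p - a) = 0 := by rw [mul_sub, hqp, hqa, sub_zero]
    refine cornerSum_eq_zero_of_split_left R e₁ haa e₃ e₂ hbq hqb haq
      (fun w hw h₀ => ih _ ?_ e₁ hq hbq hqb hw h₀ rfl)
      (fun w hw h₀ => ih _ ?_ haa hq haq hqa hw h₀ rfl)
      (by rwa [sub_add_cancel]) (by rwa [sub_add_cancel])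
    · exact Nat.add_lt_add_right (card_corner_sub_lt ha hp haa h0) _
    · exact Nat.add_lt_add_right (hlt hp ha haa h1) _
  · obtain ⟨e₁, e₂, e₃⟩ := hsub hq ha haa
    have hap : a * p = 0 := by rw [← ha.2, mul_assoc, hqp, mul_zero]
    have hpa : p * a = 0 := by rw [← ha.1, ← mul_assoc, hpq, zero_mul]
    have hbp : (q - a) * p = 0 := by rw [sub_mul, hqp, hap, sub_zero]
    have hpb : p * (q - a) = 0 := by rw [mul_sub, hpq, hpa, sub_zero]
    refine cornerSum_eq_zero_of_split_right R haa e₁ e₂ e₃ hpa hbp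
      (fun w hw h₀ => ih _ ?_ hp haa hpa hap hw h₀ rfl)
      (fun w hw h₀ => ih _ ?_ hp e₁ hpb hbp hw h₀ rfl)
      (by rwa [add_sub_cancel]) (by rwa [add_sub_cancel])
    · exact Nat.add_lt_add_left (hlt hq ha haa h1) _
    · exact Nat.add_lt_add_left (card_corner_sub_lt ha hq haa h0) _

end HowlettLehrer

section Moebius

open scoped Classical

variable {F X : Type*} [Field F] [AddCommGroup X] [Module F X]

/-- Weisner's theorem for the lattice of subspaces. -/
theorem sum_moebius_sup_eq_zero [Fintype (Submodule F X)] {m : Submodule F X → ℤ}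
    (hm : ∀ W, W ≠ ⊥ → ∑ A with A ≤ W, m A = 0) {l : Submodule F X} (hl : l ≠ ⊥)
    (Z : Submodule F X) : ∑ A with A ⊔ l = Z, m A = 0 := by
  by_cases hlZ : l ≤ Z
  · induction Z using WellFoundedLT.induction with
    | _ Z ih =>
    have hZ : Z ≠ ⊥ := fun h => hl (le_bot_iff.1 (h ▸ hlZ))
    have h := hm Z hZ
    rw [← Finset.sum_fiberwise_of_maps_to (s := Finset.univ.filter (· ≤ Z))
      (t := Finset.univ.filter (· ≤ Z)) (g := fun A => A ⊔ l) (by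
        intro A hA
        simp only [Finset.mem_filter, Finset.mem_univ, true_and] at hA ⊢
        exact sup_le hA hlZ), Finset.sum_eq_single Z] at h
    · rw [← h, Finset.filter_filter]
      refine Finset.sum_congr (Finset.filter_congr fun A _ => ?_) fun _ _ => rfl
      exact ⟨fun h => ⟨h ▸ le_sup_left, h⟩, fun h => h.2⟩
    · intro Y hY hne
      simp only [Finset.mem_filter, Finset.mem_univ, true_and] at hY
      rw [Finset.filter_filter]
      by_cases hlY : l ≤ Y
      · rw [← ih Y (lt_of_le_of_ne hY hne) hlY]
        refine Finset.sum_congr (Finset.filter_congr fun A _ => ?_) fun _ _ => rfl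
        exact ⟨fun h => h.2, fun h => ⟨(h ▸ le_sup_left : A ≤ Y).trans hY, h⟩⟩
      · refine Finset.sum_eq_zero fun A hA => ?_
        simp only [Finset.mem_filter, Finset.mem_univ, true_and] at hA
        exact absurd (hA.2 ▸ le_sup_right) hlY
    · simp
  · refine Finset.sum_eq_zero fun A hA => ?_
    simp only [Finset.mem_filter, Finset.mem_univ, true_and] at hA
    exact absurd (hA ▸ le_sup_right) hlZ

theorem moebius_sign [Fintype (Submodule F X)] [FiniteDimensional F X] {m : Submodule F X → ℤ}
    (h₁ : m ⊥ = 1) (hm : ∀ W, W ≠ ⊥ → ∑ A with A ≤ W, m A = 0) (Z : Submodule F X) :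
    0 < (-1) ^ Module.finrank F Z * m Z := by
  induction hd : Module.finrank F Z generalizing Z with
  | zero =>
    rw [Submodule.finrank_eq_zero] at hd
    simp [hd, h₁]
  | succ d ih =>
    have hZ : Z ≠ ⊥ := by rintro rfl; simp at hd
    obtain ⟨v, hv, hv0⟩ := Submodule.exists_mem_ne_zero_of_ne_bot hZ
    have hl : F ∙ v ≠ ⊥ := by simpa using hv0
    have hlZ : F ∙ v ≤ Z := by simpa using hv
    have h := sum_moebius_sup_eq_zero hm hl Z
    rw [← Finset.add_sum_erase _ _ (a := Z) (by simpa using hv)] at h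
    have hA : ∀ A ∈ (Finset.univ.filter (fun A => A ⊔ (F ∙ v) = Z)).erase Z,
        0 < (-1) ^ d * m A := by
      intro A hA
      simp only [Finset.mem_erase, Finset.mem_filter, Finset.mem_univ, true_and] at hA
      refine ih A ?_
      have hvA : v ∉ A := fun h => hA.1 (by
        rw [← hA.2, left_eq_sup, Submodule.span_singleton_le_iff_mem]; exact h)
      have e := Submodule.finrank_sup_add_finrank_inf_eq A (F ∙ v)
      have e' : A ⊓ (F ∙ v) = ⊥ := by
        rw [← disjoint_iff]
        exact (Submodule.disjoint_span_singleton' hv0).2 hvA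
      rw [hA.2, e', finrank_bot, hd, finrank_span_singleton hv0] at e
      omega
    have hne : ((Finset.univ.filter (fun A => A ⊔ (F ∙ v) = Z)).erase Z).Nonempty := by
      obtain ⟨C, hC⟩ := exists_isCompl (F ∙ v)
      refine ⟨C ⊓ Z, ?_⟩
      simp only [Finset.mem_erase, Finset.mem_filter, Finset.mem_univ, true_and]
      constructor
      · intro h
        exact hl (le_bot_iff.1 (hC.1 le_rfl (hlZ.trans (inf_eq_right.1 h))))
      · rw [sup_comm, ← sup_inf_assoc_of_le _ hlZ, hC.sup_eq_top, top_inf_eq]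
    have hpos := Finset.sum_pos hA hne
    rw [← Finset.mul_sum] at hpos
    rw [pow_succ]
    linear_combination hpos + (-1) ^ d * h

/-- Weights on subspaces summing to `1` over the nonzero subspaces of any nonzero subspace. -/
theorem exists_moebius_weights (F X : Type*) [Field F] [AddCommGroup X] [Module F X]
    [FiniteDimensional F X] [Fintype (Submodule F X)] :
    ∃ μ : Submodule F X → ℤ, (∀ Z, Z ≠ ⊥ → μ Z ≠ 0) ∧
      ∀ W, W ≠ ⊥ → ∑ Z with Z ≠ ⊥ ∧ Z ≤ W, μ Z = 1 := by
  let _ : LocallyFiniteOrder (Submodule F X) := Fintype.toLocallyFiniteOrder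
  let m : Submodule F X → ℤ := fun Z => IncidenceAlgebra.mu ℤ ⊥ Z
  have h₁ : m ⊥ = 1 := IncidenceAlgebra.mu_self _
  have hm : ∀ W, W ≠ ⊥ → ∑ A with A ≤ W, m A = 0 := fun W hW => by
    have := IncidenceAlgebra.sum_Icc_mu_right (𝕜 := ℤ) (⊥ : Submodule F X) W
    rw [if_neg hW.symm] at this
    rw [← this]
    exact Finset.sum_congr (by ext; simp) fun _ _ => rfl
  refine ⟨fun Z => -m Z, fun Z _ h => ?_, fun W hW => ?_⟩
  · have := moebius_sign h₁ hm Z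
    rw [neg_eq_zero.1 h] at this
    simp at this
  · have h := hm W hW
    rw [← Finset.add_sum_erase _ _ (a := ⊥) (by simp), h₁] at h
    rw [Finset.sum_neg_distrib, neg_eq_iff_eq_neg, eq_neg_iff_add_eq_zero, add_comm, ← h]
    congr 1
    exact Finset.sum_congr (by ext; simp) fun _ _ => rfl

end Moebius

section Counting

variable {A : Type*} [Ring A]

theorem isNilpotent_mul_of_mul {a b : A} (h : IsNilpotent (a * b)) : IsNilpotent (b * a) := by
  obtain ⟨n, hn⟩ := h
  refine ⟨n + 1, ?_⟩
  have : ∀ n, (b * a) ^ (n + 1) = b * (a * b) ^ n * a := fun n => by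
    induction n with
    | zero => simp
    | succ n ih => rw [pow_succ, ih, pow_succ]; simp only [mul_assoc]
  rw [this, hn, mul_zero, zero_mul]

theorem isNilpotent_corner_sub_iff {e z h : A} (hee : e * e = e) (hez : e * z = z)
    (hze : z * e = z) (hzz : z * z = z) (heh : e * h = h) (hhe : h * e = h) (hhz : h * z = z) :
    IsNilpotent ((e - z) * h * (e - z) - (e - z)) ↔ IsNilpotent (h - e) := by
  have h₁ : (e - z) * (h - e) = (e - z) * h * (e - z) - (e - z) := by
    simp only [sub_mul, mul_sub, mul_assoc, hee, hze, hzz, heh, hhe, hhz]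
    abel
  have h₂ : (h - e) * (e - z) = h - e := by
    simp only [sub_mul, mul_sub, hee, hez, hhe, hhz]
    abel
  rw [← h₁]
  constructor
  · intro h
    rw [← h₂]
    exact isNilpotent_mul_of_mul h
  · intro h
    rw [← h₂] at h
    exact isNilpotent_mul_of_mul h

theorem eq_zero_of_isNilpotent_sub {e h y : A} (hn : IsNilpotent (h - e)) (hey : e * y = y)
    (hy : h * y = 0) : y = 0 := by
  obtain ⟨n, hn⟩ := hn
  have : ∀ n : ℕ, (h - e) ^ n * y = (-1) ^ n * y := fun n => by
    induction n with
    | zero => simp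
    | succ n ih =>
      rw [pow_succ, mul_assoc, sub_mul, hy, hey, zero_sub, mul_neg, ih, pow_succ]
      simp
  have h' := this n
  rw [hn, zero_mul] at h'
  have h'' : (-1) ^ n * ((-1) ^ n * y) = y := by
    rw [← mul_assoc, ← pow_add, ← two_mul, pow_mul]; simp
  rw [← h'', ← h', mul_zero]

/-- A nilpotent element stabilizing the range of a nonzero idempotent kills a nonzero element
of it. -/
theorem exists_ne_zero_of_isNilpotent {n f : A} (hn : IsNilpotent n) (hf : f ≠ 0)
    (hff : f * f = f) (h : f * (n * f) = n * f) : ∃ y, y ≠ 0 ∧ f * y = y ∧ n * y = 0 := by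
  classical
  have hex : ∃ k, n ^ k * f = 0 := by
    obtain ⟨k, hk⟩ := hn
    exact ⟨k, by rw [hk, zero_mul]⟩
  have hfix : ∀ k, f * (n ^ k * f) = n ^ k * f := fun k => by
    induction k with
    | zero => simpa using hff
    | succ k ih =>
      rw [pow_succ', mul_assoc, ← ih, ← mul_assoc n, ← mul_assoc f, h]
  cases hk : Nat.find hex with
  | zero =>
    have := Nat.find_spec hex
    rw [hk] at this
    exact absurd (by simpa using this) hf
  | succ k =>
    have h₁ := Nat.find_spec hex
    rw [hk] at h₁
    refine ⟨n ^ k * f, Nat.find_min hex (by omega), hfix k, ?_⟩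
    rw [← mul_assoc, ← pow_succ', h₁]

/-- `φ ∈ pAq` such that `g (1 + φ)` is unipotent in the corner ring of `p + q`. -/
def UnipShift (p q g φ : A) : Prop :=
  φ ∈ corner p q ∧ IsNilpotent (g * (p + q + φ) - (p + q))

/-- Pairs `(φ, ψ)` such that the unipotent `g (1 + φ)` stabilizes the range of the idempotent
`q - ψ`. -/
def UnipShiftPair (p q g : A) (x : A × A) : Prop :=
  UnipShift p q g x.1 ∧ x.2 ∈ corner p q ∧ (p + x.2) * (g * (p + q + x.1)) * (q - x.2) = 0

section AddFixed

variable {z p q g : A}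

theorem unipShift_add_iff (hzz : z * z = z) (hpp : p * p = p) (hqq : q * q = q)
    (hzp : z * p = 0) (hpz : p * z = 0) (hzq : z * q = 0) (hqz : q * z = 0) (hpq : p * q = 0)
    (hqp : q * p = 0) (heg : (z + p + q) * g = g) (hgz : g * z = z) {a φ : A}
    (ha : a ∈ corner z q) (hφ : φ ∈ corner p q) :
    UnipShift (z + p) q g (a + φ) ↔ UnipShift p q ((p + q) * g * (p + q)) φ := by
  obtain ⟨ha₁, ha₂⟩ := ha
  obtain ⟨hφ₁, hφ₂⟩ := hφ
  have haz : a * z = 0 := by rw [← ha₂, mul_assoc, hqz, mul_zero]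
  have hap : a * p = 0 := by rw [← ha₂, mul_assoc, hqp, mul_zero]
  have hpa : p * a = 0 := by rw [← ha₁, ← mul_assoc, hpz, zero_mul]
  have hqa : q * a = 0 := by rw [← ha₁, ← mul_assoc, hqz, zero_mul]
  have hφz : φ * z = 0 := by rw [← hφ₂, mul_assoc, hqz, mul_zero]
  have hφp : φ * p = 0 := by rw [← hφ₂, mul_assoc, hqp, mul_zero]
  have hzφ : z * φ = 0 := by rw [← hφ₁, ← mul_assoc, hzp, zero_mul]
  have hqφ : q * φ = 0 := by rw [← hφ₁, ← mul_assoc, hqp, zero_mul]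
  have hga : g * a = a := by rw [← ha₁, ← mul_assoc, hgz]
  have hmem : a + φ ∈ corner (z + p) q :=
    ⟨by simp only [add_mul, mul_add, ha₁, hpa, hzφ, hφ₁]; abel,
      by simp only [add_mul, ha₂, hφ₂]⟩
  have key := isNilpotent_corner_sub_iff (e := z + p + q) (z := z)
    (h := g * (z + p + q + (a + φ)))
    (by simp only [add_mul, mul_add, hzz, hpp, hqq, hzp, hpz, hzq, hqz, hpq, hqp]; abel)
    (by simp only [add_mul, hzz, hpz, hqz]; abel)
    (by simp only [mul_add, hzz, hzp, hzq]; abel) hzz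
    (by rw [← mul_assoc, heg])
    (by
      rw [mul_assoc]; congr 1
      simp only [add_mul, mul_add, hzz, hpp, hqq, hzp, hpz, hzq, hqz, hpq, hqp, haz, hap, ha₂,
        hφz, hφp, hφ₂]; abel)
    (by
      simp only [add_mul, mul_add, mul_assoc, hzz, hpz, hqz, haz, hφz, hgz, mul_zero]; abel)
  have e₁ : z + p + q - z = p + q := by abel
  have e₂ : (p + q) * (g * (z + p + q + (a + φ))) * (p + q)
      = (p + q) * g * (p + q) * (p + q + φ) := by
    simp only [add_mul, mul_add, mul_assoc, hpp, hqq, hzp, hzq, hpq, hqp, hφp, hφ₂, hφ₁, hqφ, hga, hpa, hqa, mul_zero, zero_mul]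
    abel
  rw [e₁, e₂] at key
  rw [UnipShift, UnipShift, key]
  simp only [hmem, true_and, mem_corner, hφ₁, hφ₂, true_and]

theorem unipShiftPair_add_iff (hzz : z * z = z) (hpp : p * p = p) (hqq : q * q = q)
    (hzp : z * p = 0) (hpz : p * z = 0) (hzq : z * q = 0) (hqz : q * z = 0) (hpq : p * q = 0)
    (hqp : q * p = 0) (heg : (z + p + q) * g = g) (hgz : g * z = z) {a φ b ψ : A}
    (ha : a ∈ corner z q) (hφ : φ ∈ corner p q) (hb : b ∈ corner z q) (hψ : ψ ∈ corner p q) :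
    UnipShiftPair (z + p) q g (a + φ, b + ψ) ↔
      a = -((z + b) * (g * (z + p + q + φ)) * (q - ψ - b)) ∧
        UnipShiftPair p q ((p + q) * g * (p + q)) (φ, ψ) := by
  have hmem : b + ψ ∈ corner (z + p) q :=
    add_mem (corner_mono_left (by rw [add_mul, hzz, hpz, add_zero]) hb)
      (corner_mono_left (by rw [add_mul, hpp, hzp, zero_add]) hψ)
  have hga : g * a = a := by rw [← ha.1, ← mul_assoc, hgz]
  have hgb : g * b = b := by rw [← hb.1, ← mul_assoc, hgz]
  have hpb : p * b = 0 := by rw [← hb.1, ← mul_assoc, hpz, zero_mul]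
  have hqb : q * b = 0 := by rw [← hb.1, ← mul_assoc, hqz, zero_mul]
  have hpa : p * a = 0 := by rw [← ha.1, ← mul_assoc, hpz, zero_mul]
  have hzψ : z * ψ = 0 := by rw [← hψ.1, ← mul_assoc, hzp, zero_mul]
  have hqψ : q * ψ = 0 := by rw [← hψ.1, ← mul_assoc, hqp, zero_mul]
  have hzφ : z * φ = 0 := by rw [← hφ.1, ← mul_assoc, hzp, zero_mul]
  have hqφ : q * φ = 0 := by rw [← hφ.1, ← mul_assoc, hqp, zero_mul]
  have haψ : a * ψ = 0 := corner_mul_eq_zero ha hψ hqp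
  have hab : a * b = 0 := corner_mul_eq_zero ha hb hqz
  have hba : b * a = 0 := corner_mul_eq_zero hb ha hqz
  have hbb : b * b = 0 := corner_mul_eq_zero hb hb hqz
  have hψa : ψ * a = 0 := corner_mul_eq_zero hψ ha hqz
  have hψb : ψ * b = 0 := corner_mul_eq_zero hψ hb hqz
  have hψψ : ψ * ψ = 0 := corner_mul_eq_zero hψ hψ hqp
  have hφb : φ * b = 0 := corner_mul_eq_zero hφ hb hqz
  have hφψ : φ * ψ = 0 := corner_mul_eq_zero hφ hψ hqp
  have hψp : ψ * p = 0 := by rw [← hψ.2, mul_assoc, hqp, mul_zero]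
  set r := g * (z + p + q + (a + φ)) * (q - (b + ψ)) with hr
  have hz : (z + b) * r = a + (z + b) * (g * (z + p + q + φ)) * (q - ψ - b) := by
    simp only [hr, add_mul, mul_add, mul_sub, mul_assoc, hga, ha.2, hb.1, ha.1, hab,
      haψ, hba, mul_zero]
    abel
  have hp : (p + ψ) * r =
      (p + ψ) * ((p + q) * g * (p + q) * (p + q + φ)) * (q - ψ) := by
    have e₁ : (z + p + q + (a + φ)) * (q - (b + ψ)) = (p + q + φ) * (q - ψ) + (a - b) := by
      simp only [add_mul, mul_add, mul_sub, hzq, hpq, hqq, ha.2, hφ.2, hb.1, hpb, hqb, hab, hφb,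
        hzψ, hψ.1, hqψ, haψ, hφψ]
      abel
    have e₂ : (p + ψ) * (p + q) = p + ψ := by
      simp only [add_mul, mul_add, hpp, hpq, hψp, hψ.2]; abel
    have e₃ : (p + q) * (p + q + φ) = p + q + φ := by
      simp only [add_mul, mul_add, hpp, hpq, hqp, hqq, hφ.1, hqφ]; abel
    have e₄ : (p + ψ) * (g * (a - b)) = 0 := by
      simp only [add_mul, mul_sub, hga, hgb, hpa, hpb, hψa, hψb]; abel
    rw [hr, mul_assoc, e₁, mul_add, mul_add, e₄, add_zero, mul_assoc _ (p + q), e₃]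
    simp only [mul_assoc]
    rw [← mul_assoc (p + ψ) (p + q), e₂]
  have hsplit : (z + p + (b + ψ)) * r = (z + b) * r + (p + ψ) * r := by
    rw [← add_mul]; congr 1; abel
  have hiff : (z + p + (b + ψ)) * (g * (z + p + q + (a + φ))) * (q - (b + ψ)) = 0 ↔
      (z + b) * r = 0 ∧ (p + ψ) * r = 0 := by
    rw [mul_assoc, ← hr, hsplit]
    refine ⟨fun h => ?_, fun h => by rw [h.1, h.2, add_zero]⟩
    have h₁ : (z + b) * r = 0 := by
      have := congrArg (z * ·) h
      simpa only [mul_add, add_mul, ← mul_assoc, hzz, hb.1, hzp, hzψ, zero_mul, mul_zero,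
        add_zero] using this
    rw [h₁, zero_add] at h
    exact ⟨h₁, h⟩
  rw [UnipShiftPair, UnipShiftPair]
  simp only [unipShift_add_iff hzz hpp hqq hzp hpz hzq hqz hpq hqp heg hgz ha hφ, hmem, hψ,
    true_and, hiff, hz, hp, add_eq_zero_iff_eq_neg]
  tauto

theorem card_unipShift_add (hzz : z * z = z) (hpp : p * p = p) (hqq : q * q = q)
    (hzp : z * p = 0) (hpz : p * z = 0) (hzq : z * q = 0) (hqz : q * z = 0) (hpq : p * q = 0)
    (hqp : q * p = 0) (heg : (z + p + q) * g = g) (hgz : g * z = z) :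
    Nat.card {φ // UnipShift (z + p) q g φ} =
      Nat.card (corner z q) * Nat.card {φ // UnipShift p q ((p + q) * g * (p + q)) φ} := by
  rw [← Nat.card_prod]
  have iff {a φ : A} (ha : a ∈ corner z q) (hφ : φ ∈ corner p q) :=
    unipShift_add_iff hzz hpp hqq hzp hpz hzq hqz hpq hqp heg hgz ha hφ
  let E := cornerAddLeft q hzz hpp hzp hpz
  have hE (φ : corner (z + p) q) : (φ : A) = (E φ).1 + (E φ).2 :=
    congrArg Subtype.val (E.symm_apply_apply φ).symm
  refine Nat.card_congr ⟨fun φ => ((E ⟨φ, φ.2.1⟩).1, ⟨(E ⟨φ, φ.2.1⟩).2, ?_⟩),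
    fun x => ⟨x.1 + x.2, (iff x.1.2 x.2.2.1).2 x.2.2⟩, fun φ => ?_, fun x => ?_⟩
  · exact (iff (E ⟨φ, φ.2.1⟩).1.2 (E ⟨φ, φ.2.1⟩).2.2).1 (hE ⟨φ, φ.2.1⟩ ▸ φ.2)
  · exact Subtype.ext (hE ⟨φ, φ.2.1⟩).symm
  · have := E.apply_symm_apply (x.1, ⟨x.2, x.2.2.1⟩)
    exact Prod.ext (Prod.ext_iff.1 this).1
      (Subtype.ext (congrArg (fun y => (y.2 : A)) this))

theorem card_unipShiftPair_add (hzz : z * z = z) (hpp : p * p = p) (hqq : q * q = q)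
    (hzp : z * p = 0) (hpz : p * z = 0) (hzq : z * q = 0) (hqz : q * z = 0) (hpq : p * q = 0)
    (hqp : q * p = 0) (heg : (z + p + q) * g = g) (hgz : g * z = z) :
    Nat.card {x // UnipShiftPair (z + p) q g x} =
      Nat.card (corner z q) * Nat.card {x // UnipShiftPair p q ((p + q) * g * (p + q)) x} := by
  rw [← Nat.card_prod]
  have iff {a φ b ψ : A} (ha : a ∈ corner z q) (hφ : φ ∈ corner p q) (hb : b ∈ corner z q)
    (hψ : ψ ∈ corner p q) :=
    unipShiftPair_add_iff hzz hpp hqq hzp hpz hzq hqz hpq hqp heg hgz ha hφ hb hψ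
  let E := cornerAddLeft q hzz hpp hzp hpz
  have hE (φ : corner (z + p) q) : (φ : A) = (E φ).1 + (E φ).2 :=
    congrArg Subtype.val (E.symm_apply_apply φ).symm
  have hE' {a φ : A} (ha : a ∈ corner z q) (hφ : φ ∈ corner p q) (h : a + φ ∈ corner (z + p) q) :
      E ⟨a + φ, h⟩ = (⟨a, ha⟩, ⟨φ, hφ⟩) := E.apply_symm_apply (⟨a, ha⟩, ⟨φ, hφ⟩)
  have key (x : {x // UnipShiftPair (z + p) q g x}) :=
    (iff (E ⟨_, x.2.1.1⟩).1.2 (E ⟨_, x.2.1.1⟩).2.2 (E ⟨_, x.2.2.1⟩).1.2 (E ⟨_, x.2.2.1⟩).2.2).1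
      (by rw [← hE, ← hE]; exact x.2)
  let a : A × A × A → A := fun y =>
    -((z + y.1) * (g * (z + p + q + y.2.1)) * (q - y.2.2 - y.1))
  have ha {b φ ψ : A} (hb : b ∈ corner z q) (hψ : ψ ∈ corner p q) :
      a (b, φ, ψ) ∈ corner z q := by
    refine neg_mem ⟨?_, ?_⟩
    · rw [← mul_assoc, ← mul_assoc, mul_add, hzz, hb.1]
    · rw [mul_assoc, sub_mul, sub_mul, hqq, hψ.2, hb.2]
  have hinv (x : corner z q × {x // UnipShiftPair p q ((p + q) * g * (p + q)) x}) :=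
    (iff (ha x.1.2 x.2.2.2.1) x.2.2.1.1 x.1.2 x.2.2.2.1).2 ⟨rfl, x.2.2⟩
  refine Nat.card_congr ⟨fun x => ((E ⟨_, x.2.2.1⟩).1,
      ⟨((E ⟨_, x.2.1.1⟩).2, (E ⟨_, x.2.2.1⟩).2), (key x).2⟩),
    fun x => ⟨(a (x.1, x.2.1.1, x.2.1.2) + x.2.1.1, x.1 + x.2.1.2), hinv x⟩,
    fun x => Subtype.ext (Prod.ext ?_ ?_), fun x => ?_⟩
  · exact (congrArg (· + _) (key x).1.symm).trans (hE ⟨_, x.2.1.1⟩).symm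
  · exact (hE ⟨_, x.2.2.1⟩).symm
  · have h₁ := hE' (ha x.1.2 x.2.2.2.1) x.2.2.1.1 (hinv x).1.1
    have h₂ := hE' x.1.2 x.2.2.2.1 (hinv x).2.1
    exact Prod.ext (Prod.ext_iff.1 h₂).1
      (Subtype.ext (Prod.ext (congrArg (fun y => (y.2 : A)) h₁)
        (congrArg (fun y => (y.2 : A)) h₂)))

end AddFixed

end Counting

section Fixed

variable {A : Type*} [Ring A] {z p q g φ₀ : A}

theorem mem_corner_sub_iff (hpp : p * p = p) (hqq : q * q = q) (hqp : q * p = 0)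
    (hzz : z * z = z) (hez : (p + q) * z = z) (hze : z * (p + q) = z) (hzp : z * p = 0) {x : A} :
    x ∈ corner (p - p * z) (q - z + p * z) ↔ x ∈ corner p q ∧ x * z = 0 := by
  have hzq : z * q = z := by rwa [mul_add, hzp, zero_add] at hze
  have hqz : q * z = z - p * z := by rw [eq_sub_iff_add_eq, add_comm, ← add_mul, hez]
  constructor
  · rintro ⟨h₁, h₂⟩
    refine ⟨⟨?_, ?_⟩, ?_⟩
    · rw [← h₁, ← mul_assoc, mul_sub, ← mul_assoc, hpp]
    · nth_rw 1 [← h₂]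
      rw [mul_assoc, add_mul, sub_mul, hqq, mul_assoc, hzq, h₂]
    · rw [← h₂, mul_assoc, add_mul, sub_mul, hzz, mul_assoc, hzz, hqz]
      simp
  · rintro ⟨⟨h₁, h₂⟩, h₃⟩
    have hzx : z * x = 0 := by rw [← h₁, ← mul_assoc, hzp, zero_mul]
    have hxp : x * p = 0 := by rw [← h₂, mul_assoc, hqp, mul_zero]
    refine ⟨?_, ?_⟩
    · rw [sub_mul, h₁, mul_assoc, hzx, mul_zero, sub_zero]
    · rw [mul_add, mul_sub, h₂, h₃, ← mul_assoc, hxp, zero_mul, sub_zero, add_zero]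

theorem corner_shift_eq (hpp : p * p = p) (hqq : q * q = q) (hpq : p * q = 0) (hqp : q * p = 0)
    (hzz : z * z = z) (hez : (p + q) * z = z) (hze : z * (p + q) = z) (hzp : z * p = 0)
    {φ : A} (hφ₀ : φ₀ ∈ corner p q) (hφ : φ ∈ corner p q) (hφz : φ * z = 0) :
    (p + q - z) * (g * (p + q + φ₀)) * (p + q - z) * (p + q - z + φ) =
      (p + q - z) * (g * (p + q + (φ₀ + φ))) * (p + q - z) := by
  have hee : (p + q) * (p + q) = p + q := by
    simp only [add_mul, mul_add, hpp, hqq, hpq, hqp]; abel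
  have hright : φ * (p + q) = φ := by
    rw [mul_add, hφ.2, ← hφ.2, mul_assoc, hqp, mul_zero, zero_add]
  have hleft : (p + q) * φ = φ := by
    rw [add_mul, hφ.1, ← hφ.1, ← mul_assoc q, hqp, zero_mul, add_zero]
  have hφφ : φ₀ * φ = 0 := corner_mul_eq_zero hφ₀ hφ hqp
  have hzφ : z * φ = 0 := by rw [← hφ.1, ← mul_assoc, hzp, zero_mul]
  generalize p + q = e at *
  have h₁ : (e - z) * (e - z + φ) = e - z + φ := by
    simp only [mul_add, sub_mul, mul_sub, hee, hez, hze, hzz, hleft, hzφ]; abel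
  have h₂ : (e + (φ₀ + φ)) * (e - z) = (e + φ₀) * (e - z + φ) := by
    simp only [add_mul, mul_add, mul_sub, hright, hleft, hφz, hφφ]; abel
  rw [mul_assoc _ (e - z), h₁, mul_assoc _ _ (e - z), mul_assoc g, h₂, mul_assoc (e - z),
    mul_assoc g]

theorem unipShift_sub_iff (hpp : p * p = p) (hqq : q * q = q) (hpq : p * q = 0) (hqp : q * p = 0)
    (hzz : z * z = z) (hez : (p + q) * z = z) (hze : z * (p + q) = z) (hzp : z * p = 0)
    (heg : (p + q) * g = g) (hφ₀ : UnipShift p q g φ₀)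
    (hfix : g * (p + q + φ₀) * z = z) {φ : A} :
    UnipShift (p - p * z) (q - z + p * z)
        ((p + q - z) * (g * (p + q + φ₀)) * (p + q - z)) φ ↔
      UnipShift p q g (φ₀ + φ) ∧ g * (p + q + (φ₀ + φ)) * z = z := by
  rw [UnipShift, UnipShift, mem_corner_sub_iff hpp hqq hqp hzz hez hze hzp,
    add_mem_cancel_left hφ₀.1]
  by_cases hφ : φ ∈ corner p q
  swap
  · simp [hφ]
  have hee : (p + q) * (p + q) = p + q := by
    simp only [add_mul, mul_add, hpp, hqq, hpq, hqp]; abel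
  have hright {x : A} (hx : x ∈ corner p q) : x * (p + q) = x := by
    rw [mul_add, hx.2, ← hx.2, mul_assoc, hqp, mul_zero, zero_add]
  have hleft {x : A} (hx : x ∈ corner p q) : (p + q) * x = x := by
    rw [add_mul, hx.1, ← hx.1, ← mul_assoc q, hqp, zero_mul, add_zero]
  have hφφ : φ₀ * φ = 0 := corner_mul_eq_zero hφ₀.1 hφ hqp
  have hzφ : z * φ = 0 := by rw [← hφ.1, ← mul_assoc, hzp, zero_mul]
  have hsum : p - p * z + (q - z + p * z) = p + q - z := by abel
  rw [hsum]
  set e := p + q with he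
  set k := g * (e + φ₀) with hk
  have hh : g * (e + (φ₀ + φ)) = k + g * φ := by rw [hk]; simp only [mul_add]; abel
  have hkφ : k * φ = g * φ := by rw [hk, mul_assoc, add_mul, hleft hφ, hφφ, add_zero]
  have hke : k * e = k := by rw [hk, mul_assoc, add_mul, hee, hright hφ₀.1]
  have hek : e * k = k := by rw [hk, ← mul_assoc, heg]
  rw [hh]
  have hiff : (k + g * φ) * z = z ↔ φ * z = 0 := by
    rw [add_mul, hfix, add_eq_left]
    refine ⟨fun h => ?_, fun h => by rw [mul_assoc, h, mul_zero]⟩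
    refine eq_zero_of_isNilpotent_sub hφ₀.2 (by rw [← mul_assoc, hleft hφ]) ?_
    rw [← hk, ← mul_assoc, hkφ, h]
  rw [hiff]
  by_cases hφz : φ * z = 0
  swap
  · simp [hφz]
  have key := isNilpotent_corner_sub_iff (h := k + g * φ) hee hez hze hzz
    (by rw [mul_add, hek, ← mul_assoc, heg]) (by rw [add_mul, hke, mul_assoc, hright hφ])
    (hiff.2 hφz)
  have e₂ : (e - z) * k * (e - z) * (e - z + φ) = (e - z) * (k + g * φ) * (e - z) := by
    rw [hk, corner_shift_eq hpp hqq hpq hqp hzz hez hze hzp hφ₀.1 hφ hφz, hh]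
  rw [e₂, key]
  simp [hφ, hφz]

theorem unipShiftPair_sub_iff (hpp : p * p = p) (hqq : q * q = q) (hpq : p * q = 0)
    (hqp : q * p = 0) (hzz : z * z = z) (hez : (p + q) * z = z) (hze : z * (p + q) = z)
    (hzp : z * p = 0) (heg : (p + q) * g = g) (hφ₀ : UnipShift p q g φ₀)
    (hfix : g * (p + q + φ₀) * z = z) {φ ψ : A} :
    UnipShiftPair (p - p * z) (q - z + p * z)
        ((p + q - z) * (g * (p + q + φ₀)) * (p + q - z)) (φ, ψ) ↔
      UnipShiftPair p q g (φ₀ + φ, -(p * z) + ψ) ∧ g * (p + q + (φ₀ + φ)) * z = z ∧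
        (p + (-(p * z) + ψ)) * z = 0 := by
  have hzq : z * q = z := by rwa [mul_add, hzp, zero_add] at hze
  have hpz : -(p * z) ∈ corner p q :=
    neg_mem ⟨by rw [← mul_assoc, hpp], by rw [mul_assoc, hzq]⟩
  have hsum : p - p * z + (q - z + p * z) = p + q - z := by abel
  have hπz : (p + (-(p * z) + ψ)) * z = ψ * z := by
    simp only [add_mul, neg_mul, mul_assoc, hzz]; abel
  have hiff := unipShift_sub_iff hpp hqq hpq hqp hzz hez hze hzp heg hφ₀ hfix (φ := φ)
  have hmem := mem_corner_sub_iff hpp hqq hqp hzz hez hze hzp (x := ψ)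
  simp only [UnipShiftPair]
  rw [hiff, hmem, add_mem_cancel_left hpz, hπz, hsum]
  have main : UnipShift p q g (φ₀ + φ) → g * (p + q + (φ₀ + φ)) * z = z → ψ ∈ corner p q →
      ψ * z = 0 → (p - p * z + ψ) * ((p + q - z) * (g * (p + q + φ₀)) * (p + q - z) *
        (p + q - z + φ)) * (q - z + p * z - ψ) = (p + (-(p * z) + ψ)) *
          (g * (p + q + (φ₀ + φ))) * (q - (-(p * z) + ψ)) := by
    intro h₁ h₂ h₃ h₄
    have hφ : φ ∈ corner p q := (add_mem_cancel_left hφ₀.1).1 h₁.1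
    have hφz : φ * z = 0 := (mem_corner_sub_iff hpp hqq hqp hzz hez hze hzp |>.1
      (hiff.2 ⟨h₁, h₂⟩).1).2
    have hψ := add_mem hpz h₃
    have hs : (p + q) * (q - (-(p * z) + ψ)) = q - (-(p * z) + ψ) := by
      rw [mul_sub, add_mul _ _ (-(p * z) + ψ), hψ.1, ← hψ.1, ← mul_assoc q, hqp, zero_mul,
        add_zero, hψ.1, add_mul, hpq, hqq, zero_add]
    have hπ : (p + (-(p * z) + ψ)) * (p + q - z) = p + (-(p * z) + ψ) := by
      rw [mul_sub, hπz, h₄, sub_zero]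
      nth_rw 1 [add_mul]
      rw [mul_add, hpp, hpq, add_zero, mul_add, hψ.2, ← hψ.2, mul_assoc, hqp, mul_zero, zero_add,
        hψ.2]
    rw [corner_shift_eq hpp hqq hpq hqp hzz hez hze hzp hφ₀.1 hφ hφz,
      show p - p * z + ψ = p + (-(p * z) + ψ) by abel,
      show q - z + p * z - ψ = q - (-(p * z) + ψ) - z by abel, mul_assoc (p + q - z),
      ← mul_assoc _ (p + q - z), hπ]
    generalize p + (-(p * z) + ψ) = π at *
    generalize q - (-(p * z) + ψ) = s at *
    generalize p + q = e at *
    generalize g * (e + (φ₀ + φ)) = h at *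
    simp only [mul_sub, sub_mul, mul_assoc, hs, hez, h₂, hπz, h₄, zero_mul]
    abel
  constructor
  · rintro ⟨⟨h₁, h₂⟩, ⟨h₃, h₄⟩, h₅⟩
    exact ⟨⟨h₁, h₃, (main h₁ h₂ h₃ h₄).symm.trans h₅⟩, h₂, h₄⟩
  · rintro ⟨⟨h₁, h₃, h₅⟩, h₂, h₄⟩
    exact ⟨⟨h₁, h₂⟩, ⟨h₃, h₄⟩, (main h₁ h₂ h₃ h₄).trans h₅⟩

theorem card_unipShift_fixed_eq (hpp : p * p = p) (hqq : q * q = q) (hpq : p * q = 0)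
    (hqp : q * p = 0) (hzz : z * z = z) (hez : (p + q) * z = z) (hze : z * (p + q) = z)
    (hzp : z * p = 0) (heg : (p + q) * g = g)
    (ih : ∀ g', (p + q - z) * g' = g' →
      Nat.card {φ // UnipShift (p - p * z) (q - z + p * z) g' φ} =
        Nat.card {x // UnipShiftPair (p - p * z) (q - z + p * z) g' x}) :
    Nat.card {φ // UnipShift p q g φ ∧ g * (p + q + φ) * z = z} =
      Nat.card {x : A × A // UnipShiftPair p q g x ∧ g * (p + q + x.1) * z = z ∧
        (p + x.2) * z = 0} := by
  by_cases h : ∃ φ₀, UnipShift p q g φ₀ ∧ g * (p + q + φ₀) * z = z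
  · obtain ⟨φ₀, hφ₀, hfix⟩ := h
    have hee : (p + q - z) * (p + q - z) = p + q - z := by
      rw [sub_mul, mul_sub, mul_sub, hez, hze, hzz]
      simp only [add_mul, mul_add, hpp, hqq, hpq, hqp]; abel
    have e := ih ((p + q - z) * (g * (p + q + φ₀)) * (p + q - z))
      (by rw [← mul_assoc, ← mul_assoc, hee])
    refine (Nat.card_congr ((Equiv.addLeft φ₀).subtypeEquiv fun φ => ?_)).symm.trans (e.trans
      (Nat.card_congr (((Equiv.addLeft φ₀).prodCongr (Equiv.addLeft (-(p * z)))).subtypeEquiv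
        fun x => ?_)))
    · exact unipShift_sub_iff hpp hqq hpq hqp hzz hez hze hzp heg hφ₀ hfix
    · exact unipShiftPair_sub_iff hpp hqq hpq hqp hzz hez hze hzp heg hφ₀ hfix
  · have h₁ : IsEmpty {φ // UnipShift p q g φ ∧ g * (p + q + φ) * z = z} :=
      ⟨fun φ => h ⟨φ, φ.2⟩⟩
    have h₂ : IsEmpty {x : A × A // UnipShiftPair p q g x ∧ g * (p + q + x.1) * z = z ∧
        (p + x.2) * z = 0} := ⟨fun x => h ⟨x.1.1, x.2.1.1, x.2.2.1⟩⟩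
    rw [Nat.card_of_isEmpty, Nat.card_of_isEmpty]

end Fixed

section Endomorphisms

open scoped Classical

variable {F X : Type*} [Field F] [AddCommGroup X] [Module F X]

theorem sum_eq_sum_moebius [Fintype (Submodule F X)] {μ : Submodule F X → ℤ}
    (hμ : ∀ W, W ≠ ⊥ → ∑ Z with Z ≠ ⊥ ∧ Z ≤ W, μ Z = 1) {ι N : Type*} [Fintype ι]
    [AddCommGroup N] (f : ι → N) (P : ι → Prop) (W : ι → Submodule F X)
    (hW : ∀ i, P i → W i ≠ ⊥) :
    ∑ i with P i, f i = ∑ Z with Z ≠ ⊥, μ Z • ∑ i with P i ∧ Z ≤ W i, f i := by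
  simp only [Finset.smul_sum, ← Finset.filter_filter (fun i => P i)]
  simp only [Finset.sum_filter (fun i => _ ≤ W i)]
  rw [Finset.sum_comm]
  refine Finset.sum_congr rfl fun i hi => ?_
  rw [← Finset.sum_filter, Finset.filter_filter, ← Finset.sum_smul,
    hμ _ (hW i (Finset.mem_filter.1 hi).2), one_smul]

theorem card_eq_sum_moebius [Fintype (Submodule F X)] {μ : Submodule F X → ℤ}
    (hμ : ∀ W, W ≠ ⊥ → ∑ Z with Z ≠ ⊥ ∧ Z ≤ W, μ Z = 1) {ι : Type*} [Fintype ι]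
    (P : ι → Prop) (W : ι → Submodule F X) (hW : ∀ i, P i → W i ≠ ⊥) :
    (Nat.card {i // P i} : ℤ) = ∑ Z with Z ≠ ⊥, μ Z * Nat.card {i // P i ∧ Z ≤ W i} := by
  have := sum_eq_sum_moebius hμ (fun _ => (1 : ℤ)) P W hW
  simpa [Nat.card_eq_fintype_card, Fintype.card_subtype] using this

/-- Two disjoint subspaces are the range and contained in the kernel of an idempotent. -/
theorem exists_idempotent_of_disjoint {Z Y : Submodule F X} (h : Disjoint Z Y) :
    ∃ z : Module.End F X, z * z = z ∧ LinearMap.range z = Z ∧ Y ≤ LinearMap.ker z := by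
  obtain ⟨C, hYC, hC⟩ := h.symm.exists_isCompl
  refine ⟨Z.projection C hC.symm, Submodule.isIdempotentElem_projection hC.symm, ?_, ?_⟩
  · simp
  · simpa using hYC

theorem mul_eq_right_of_range_le {f z : Module.End F X}
    (h : ∀ x ∈ LinearMap.range z, f x = x) : f * z = z :=
  LinearMap.ext fun x => h _ ⟨x, rfl⟩

theorem le_ker_iff_mul_eq_zero {f z : Module.End F X} {Z : Submodule F X}
    (h : LinearMap.range z = Z) : Z ≤ LinearMap.ker f ↔ f * z = 0 := by
  rw [← h, LinearMap.range_le_ker_iff]; rfl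

theorem le_ker_sub_one_iff {f z : Module.End F X} {Z : Submodule F X}
    (h : LinearMap.range z = Z) : Z ≤ LinearMap.ker (f - 1) ↔ f * z = z := by
  rw [le_ker_iff_mul_eq_zero h, sub_mul, one_mul, sub_eq_zero]

theorem card_unipShift_eq_of_fixed_free {p q g : Module.End F X} [FiniteDimensional F X]
    [Finite (Submodule F X)] [Finite (Module.End F X)]
    (hpp : p * p = p) (hqq : q * q = q) (hpq : p * q = 0) (hqp : q * p = 0)
    (heg : (p + q) * g = g) (hq : q ≠ 0) (hfix : ∀ v, p v = v → g v = v → v = 0)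
    (ih : ∀ z : Module.End F X, z ≠ 0 → z * z = z → (p + q) * z = z → z * (p + q) = z →
      z * p = 0 → ∀ g', (p + q - z) * g' = g' →
        Nat.card {φ // UnipShift (p - p * z) (q - z + p * z) g' φ} =
          Nat.card {x // UnipShiftPair (p - p * z) (q - z + p * z) g' x}) :
    Nat.card {φ // UnipShift p q g φ} = Nat.card {x // UnipShiftPair p q g x} := by
  have := Fintype.ofFinite (Submodule F X)
  have := Fintype.ofFinite (Module.End F X)
  have hee : (p + q) * (p + q) = p + q := by
    simp only [add_mul, mul_add, hpp, hqq, hpq, hqp]; abel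
  have hleft {x : Module.End F X} (hx : x ∈ corner p q) : (p + q) * x = x := by
    rw [add_mul, hx.1, ← hx.1, ← mul_assoc q, hqp, zero_mul, add_zero]
  have hright {x : Module.End F X} (hx : x ∈ corner p q) : x * (p + q) = x := by
    rw [mul_add, hx.2, ← hx.2, mul_assoc, hqp, mul_zero, zero_add]
  obtain ⟨μ, -, hμ⟩ := exists_moebius_weights F X
  -- a stabilized idempotent contains a nonzero vector fixed by a unipotent
  have hex (φ f : Module.End F X) (hφ : UnipShift p q g φ) (hf : f ≠ 0) (hff : f * f = f)
      (hef : (p + q) * f = f) (hst : f * (g * (p + q + φ) * f) = g * (p + q + φ) * f) :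
      ∃ v, v ≠ 0 ∧ f v = v ∧ (g * (p + q + φ)) v = v := by
    obtain ⟨y, hy0, hfy, hny⟩ := exists_ne_zero_of_isNilpotent hφ.2 hf hff
      (by rw [sub_mul, mul_sub, hst, hef, hff])
    obtain ⟨x, hx⟩ : ∃ x, y x ≠ 0 := by
      by_contra! h
      exact hy0 (LinearMap.ext h)
    refine ⟨y x, hx, LinearMap.congr_fun hfy x, ?_⟩
    rw [sub_mul, sub_eq_zero] at hny
    have h₁ : (p + q) * y = y := by rw [← hfy, ← mul_assoc, hef]
    rw [h₁] at hny
    exact LinearMap.congr_fun hny x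
  have he0 : p + q ≠ 0 := fun h => hq (by
    have := congrArg (q * ·) h
    simpa only [mul_add, hqp, hqq, zero_add, mul_zero] using this)
  have h₁ := card_eq_sum_moebius hμ (UnipShift p q g)
    (fun φ => LinearMap.ker (g * (p + q + φ) - 1)) (fun φ hφ h => by
      obtain ⟨v, hv0, -, hv⟩ := hex φ (p + q) hφ he0 hee hee (by
        rw [← mul_assoc, ← mul_assoc, heg])
      exact hv0 (by rw [← Submodule.mem_bot F, ← h, LinearMap.mem_ker,
        LinearMap.sub_apply, hv, Module.End.one_apply, sub_self]))
  have h₂ := card_eq_sum_moebius hμ (UnipShiftPair p q g)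
    (fun x => LinearMap.ker (g * (p + q + x.1) - 1) ⊓ LinearMap.ker (p + x.2)) (fun x hx h => by
      obtain ⟨hφ, hψ, hst⟩ := hx
      have hqψ : q * x.2 = 0 := by rw [← hψ.1, ← mul_assoc, hqp, zero_mul]
      have hψψ : x.2 * x.2 = 0 := corner_mul_eq_zero hψ hψ hqp
      have hff : (q - x.2) * (q - x.2) = q - x.2 := by
        simp only [sub_mul, mul_sub, hqq, hqψ, hψ.2, hψψ]; abel
      have hπ : (p + x.2) * (q - x.2) = 0 := by
        simp only [add_mul, mul_sub, hpq, hψ.1, hψ.2, hψψ]; abel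
      have hsum : q - x.2 = p + q - (p + x.2) := by abel
      obtain ⟨v, hv0, hfv, hv⟩ := hex x.1 (q - x.2) hφ (fun h => hq (by
        have := congrArg (q * ·) h
        simpa only [mul_sub, hqq, hqψ, sub_zero, mul_zero] using this)) hff
        (by rw [mul_sub, hleft hψ, add_mul, hpq, hqq, zero_add])
        (by
          nth_rw 1 [hsum]
          rw [sub_mul, ← mul_assoc (p + x.2), hst, sub_zero, ← mul_assoc, ← mul_assoc, heg])
      refine hv0 ?_
      rw [← Submodule.mem_bot F, ← h, Submodule.mem_inf, LinearMap.mem_ker, LinearMap.mem_ker,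
        LinearMap.sub_apply, hv, Module.End.one_apply, sub_self]
      refine ⟨rfl, ?_⟩
      rw [← hfv, ← Module.End.mul_apply, hπ, LinearMap.zero_apply])
  have key : (Nat.card {φ // UnipShift p q g φ} : ℤ) = Nat.card {x // UnipShiftPair p q g x} := by
    rw [h₁, h₂]
    refine Finset.sum_congr rfl fun Z hZ => ?_
    congr 2
    by_cases h : ∃ φ, UnipShift p q g φ ∧ Z ≤ LinearMap.ker (g * (p + q + φ) - 1)
    · obtain ⟨φ, hφ, hZφ⟩ := h
      have hh (v : X) (hv : v ∈ Z) : (g * (p + q + φ)) v = v := by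
        simpa only [LinearMap.mem_ker, LinearMap.sub_apply, Module.End.one_apply,
          sub_eq_zero] using hZφ hv
      have heZ (v : X) (hv : v ∈ Z) : (p + q) v = v := by
        rw [← hh v hv, ← Module.End.mul_apply, ← mul_assoc, heg]
      have hφp : (p + q + φ) * p = p := by
        rw [add_mul, add_mul, hpp, hqp, ← hφ.1.2, mul_assoc, hqp, mul_zero, add_zero, add_zero]
      have hdisj : Disjoint Z (LinearMap.range p ⊔ LinearMap.ker (p + q)) := by
        rw [Submodule.disjoint_def]
        intro v hv hv'
        obtain ⟨_, ⟨u, rfl⟩, w, hw, hvw⟩ := Submodule.mem_sup.1 hv'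
        have hpu : p (p u) = p u := by rw [← Module.End.mul_apply, hpp]
        have hpe : (p + q) * p = p := by rw [add_mul, hpp, hqp, add_zero]
        have hvu : v = p u := by
          rw [← heZ v hv, ← hvw, map_add, LinearMap.mem_ker.1 hw, add_zero,
            ← Module.End.mul_apply, hpe]
        rw [hvu] at hv ⊢
        refine hfix _ hpu ?_
        have := hh _ hv
        rw [Module.End.mul_apply, ← Module.End.mul_apply _ p, hφp] at this
        exact this
      obtain ⟨z, hzz, hrange, hker⟩ := exists_idempotent_of_disjoint hdisj
      have hz0 : z ≠ 0 := by
        rintro rfl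
        exact (Finset.mem_filter.1 hZ).2 (by rw [← hrange, LinearMap.range_zero])
      have hzp : z * p = 0 := LinearMap.range_le_ker_iff.1 (le_sup_left.trans hker)
      have hze : z * (p + q) = z := by
        have : z * (1 - (p + q)) = 0 := by
          refine LinearMap.range_le_ker_iff.1 (le_trans ?_ (le_sup_right.trans hker))
          rw [LinearMap.range_le_ker_iff]
          change (p + q) * (1 - (p + q)) = 0
          rw [mul_sub, mul_one, hee, sub_self]
        rw [mul_sub, mul_one, sub_eq_zero] at this
        exact this.symm
      have hez : (p + q) * z = z := mul_eq_right_of_range_le fun x hx => heZ x (hrange ▸ hx)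
      simp only [le_inf_iff, le_ker_sub_one_iff hrange, le_ker_iff_mul_eq_zero (f := p + _) hrange]
      exact card_unipShift_fixed_eq hpp hqq hpq hqp hzz hez hze hzp heg
        (ih z hz0 hzz hez hze hzp)
    · have h₁ : IsEmpty {φ // UnipShift p q g φ ∧ Z ≤ LinearMap.ker (g * (p + q + φ) - 1)} :=
        ⟨fun φ => h ⟨φ, φ.2⟩⟩
      have h₂ : IsEmpty {x // UnipShiftPair p q g x ∧
          Z ≤ LinearMap.ker (g * (p + q + x.1) - 1) ⊓ LinearMap.ker (p + x.2)} :=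
        ⟨fun x => h ⟨x.1.1, x.2.1.1, x.2.2.trans inf_le_left⟩⟩
      rw [Nat.card_of_isEmpty, Nat.card_of_isEmpty]
  exact_mod_cast key

/-- Every coset of the unipotent radical `1 + pAq` has, on average over the idempotents
conjugate to `q` under the radical, as many unipotent elements stabilizing the conjugate as it
has unipotent elements. -/
theorem card_unipShift_eq [FiniteDimensional F X] [Finite (Submodule F X)]
    [Finite (Module.End F X)] {p q g : Module.End F X}
    (hpp : p * p = p) (hqq : q * q = q) (hpq : p * q = 0) (hqp : q * p = 0)
    (heg : (p + q) * g = g) :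
    Nat.card {φ // UnipShift p q g φ} = Nat.card {x // UnipShiftPair p q g x} := by
  have := Fintype.ofFinite (Module.End F X)
  induction hn : Nat.card (corner (p + q) (p + q)) using Nat.strong_induction_on
    generalizing p q g with
  | _ n ih =>
  subst hn
  have hee : (p + q) * (p + q) = p + q := by
    simp only [add_mul, mul_add, hpp, hqq, hpq, hqp]; abel
  have hlt (z : Module.End F X) (hz0 : z ≠ 0) (hzz : z * z = z) (hez : (p + q) * z = z)
      (hze : z * (p + q) = z) := card_corner_sub_lt (p := p + q) ⟨hez, hze⟩ hee hzz hz0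
  by_cases hq : q = 0
  · subst hq
    refine Nat.card_congr ⟨fun φ => ⟨(φ, 0), φ.2, zero_mem _, by simp⟩, fun x => ⟨x.1.1, x.2.1⟩,
      fun φ => rfl, fun x => Subtype.ext (Prod.ext rfl ?_)⟩
    have := x.2.2.1.2
    rw [mul_zero] at this
    exact this
  by_cases hfix : ∃ v, p v = v ∧ g v = v ∧ v ≠ 0
  · obtain ⟨v, hpv, hgv, hv0⟩ := hfix
    have hdisj : Disjoint (F ∙ v) (LinearMap.ker p) := by
      rw [Submodule.disjoint_def]
      intro w hw hw'
      obtain ⟨c, rfl⟩ := Submodule.mem_span_singleton.1 hw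
      rw [LinearMap.mem_ker, map_smul, hpv] at hw'
      exact hw'
    obtain ⟨z, hzz, hrange, hker⟩ := exists_idempotent_of_disjoint hdisj
    have hfix (f : Module.End F X) (hf : f v = v) : f * z = z :=
      mul_eq_right_of_range_le fun x hx => by
        rw [hrange] at hx
        obtain ⟨c, rfl⟩ := Submodule.mem_span_singleton.1 hx
        rw [map_smul, hf]
    have hz0 : z ≠ 0 := by
      rintro rfl
      rw [LinearMap.range_zero, eq_comm, Submodule.span_singleton_eq_bot] at hrange
      exact hv0 hrange
    have hpz : p * z = z := hfix p hpv
    have hzp : z * p = z := by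
      have : z * (1 - p) = 0 := by
        refine LinearMap.range_le_ker_iff.1 (le_trans ?_ hker)
        rw [LinearMap.range_le_ker_iff]
        change p * (1 - p) = 0
        rw [mul_sub, mul_one, hpp, sub_self]
      rw [mul_sub, mul_one, sub_eq_zero] at this
      exact this.symm
    have hzq : z * q = 0 := by rw [← hzp, mul_assoc, hpq, mul_zero]
    have hqz : q * z = 0 := by rw [← hpz, ← mul_assoc, hqp, zero_mul]
    have hp' : z + (p - z) = p := by abel
    have hlt := hlt z hz0 hzz (by rw [add_mul, hpz, hqz, add_zero])
      (by rw [mul_add, hzp, hzq, add_zero])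
    rw [show p + q - z = p - z + q by abel] at hlt
    have h₁ : (p - z) * (p - z) = p - z := by
      simp only [mul_sub, sub_mul, hpp, hpz, hzp, hzz]; abel
    have h₂ : z * (p - z) = 0 := by rw [mul_sub, hzp, hzz, sub_self]
    have h₃ : (p - z) * z = 0 := by rw [sub_mul, hpz, hzz, sub_self]
    have h₄ : (p - z) * q = 0 := by rw [sub_mul, hpq, hzq, sub_self]
    have h₅ : q * (p - z) = 0 := by rw [mul_sub, hqp, hqz, sub_self]
    have e₁ := card_unipShift_add (g := g) hzz h₁ hqq h₂ h₃ hzq hqz h₄ h₅ (by rwa [hp'])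
      (hfix g hgv)
    have e₂ := card_unipShiftPair_add (g := g) hzz h₁ hqq h₂ h₃ hzq hqz h₄ h₅ (by rwa [hp'])
      (hfix g hgv)
    rw [hp'] at e₁ e₂
    rw [e₁, e₂, ih _ hlt h₁ hqq h₄ h₅ _ rfl]
    have : (p - z + q) * (p - z + q) = p - z + q := by
      simp only [add_mul (p - z), mul_add, h₁, h₄, h₅, hqq]; abel
    rw [← mul_assoc, ← mul_assoc, this]
  · push Not at hfix
    refine card_unipShift_eq_of_fixed_free hpp hqq hpq hqp heg hq hfix
      fun z hz0 hzz hez hze hzp g' hg' => ?_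
    have hzq : z * q = z := by rwa [mul_add, hzp, zero_add] at hze
    have hqz : q * z = z - p * z := by rw [eq_sub_iff_add_eq, add_comm, ← add_mul, hez]
    have hsum : p - p * z + (q - z + p * z) = p + q - z := by abel
    have hpzp : p * z * p = 0 := by rw [mul_assoc, hzp, mul_zero]
    have hlt := hlt z hz0 hzz hez hze
    refine ih _ (by rwa [hsum]) ?_ ?_ ?_ ?_ (by rwa [hsum]) rfl
    all_goals
      simp only [add_mul, mul_add, sub_mul, mul_sub, mul_assoc, mul_eq_assoc hpp,
        mul_eq_zero_assoc hzp, mul_eq_zero_assoc hqp, hpp, hqq, hpq, hqp, hzz,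
        hzp, hzq, hqz, mul_zero]
      try abel

end Endomorphisms

section UnipotentSum

open scoped Classical

theorem sum_card_smul_eq {B ι N : Type*} [Fintype ι] [AddCommGroup N] (s : Finset B)
    (P : B → ι → Prop) (f : B → N) :
    ∑ g ∈ s, Nat.card {i // P g i} • f g = ∑ i, ∑ g ∈ s with P g i, f g := by
  simp only [Finset.sum_filter]
  rw [Finset.sum_comm]
  refine Finset.sum_congr rfl fun g _ => ?_
  rw [← Finset.sum_filter, Finset.sum_const, Nat.card_eq_fintype_card, Fintype.card_subtype]

variable {A : Type*} [Ring A] {p q : A}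

theorem add_mul_self_of_orthogonal (hpp : p * p = p) (hqq : q * q = q) (hpq : p * q = 0)
    (hqp : q * p = 0) : (p + q) * (p + q) = p + q := by
  simp only [add_mul, mul_add, hpp, hqq, hpq, hqp]; abel

theorem corner_le_corner_add (hpp : p * p = p) (hqq : q * q = q) (hqp : q * p = 0) :
    corner p q ≤ corner (p + q) (p + q) := fun _ hx =>
  corner_mono_left (by rw [add_mul, hpp, hqp, add_zero])
    (corner_mono_right (by rw [mul_add, hqp, hqq, zero_add]) hx)

theorem isNilpotent_mul_mul_unit_iff {u u' N : A} (hu : u' * u = 1) :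
    IsNilpotent (u * N * u') ↔ IsNilpotent N := by
  constructor
  · intro h
    have := isNilpotent_mul_of_mul h
    rwa [← mul_assoc, hu, one_mul] at this
  · intro h
    apply isNilpotent_mul_of_mul
    rwa [← mul_assoc, hu, one_mul]

/-- Nilpotency of block triangular elements. -/
theorem isNilpotent_iff_of_triangular {N : A} (hpp : p * p = p) (hqq : q * q = q)
    (hN : N ∈ corner (p + q) (p + q)) (h : p * N * q = 0) :
    IsNilpotent N ↔ IsNilpotent (p * N * p) ∧ IsNilpotent (q * N * q) := by
  have hp : p * N = p * N * p := by
    nth_rw 1 [← hN.2]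
    rw [← mul_assoc, mul_add, h, add_zero]
  have hq : N * q = q * N * q := by
    nth_rw 1 [← hN.1]
    rw [add_mul, add_mul, h, zero_add]
  have ha : p * N * p * p = p * N * p := by rw [mul_assoc, hpp]
  have ha' : p * (p * N * p) = p * N * p := by rw [← mul_assoc, ← mul_assoc, hpp]
  have hb : q * (q * N * q) = q * N * q := by rw [← mul_assoc, ← mul_assoc, hqq]
  have hb' : q * N * q * q = q * N * q := by rw [mul_assoc, hqq]
  generalize p * N * p = a at *
  generalize q * N * q = b at *
  have hpk (k : ℕ) : a ^ k * p = p * N ^ k := by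
    induction k with
    | zero => simp
    | succ k ih => rw [pow_succ, mul_assoc, ha, pow_succ, ← mul_assoc, ← ih, mul_assoc, hp]
  have hqk (k : ℕ) : q * b ^ k = N ^ k * q := by
    induction k with
    | zero => simp
    | succ k ih => rw [pow_succ', ← mul_assoc, hb, pow_succ', mul_assoc, ← ih, ← mul_assoc, hq]
  constructor
  · rintro ⟨k, hk⟩
    refine ⟨⟨k + 1, ?_⟩, ⟨k + 1, ?_⟩⟩
    · rw [pow_succ, ← ha', ← mul_assoc, ha', hpk, hk, mul_zero, zero_mul]
    · rw [pow_succ', ← hb', mul_assoc, hb', hqk, hk, zero_mul, mul_zero]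
  · rintro ⟨⟨k, hk⟩, ⟨l, hl⟩⟩
    have h₁ := hpk k
    have h₂ := hqk l
    rw [hk, zero_mul] at h₁
    rw [hl, mul_zero] at h₂
    refine ⟨l + (k + 1), ?_⟩
    have h₃ : (p + q) * N ^ (k + 1) = N ^ (k + 1) := by rw [pow_succ', ← mul_assoc, hN.1]
    rw [pow_add, ← h₃, add_mul, mul_add, ← mul_assoc (N ^ l) q, ← h₂, zero_mul, add_zero,
      pow_succ, ← mul_assoc p, ← h₁, zero_mul, mul_zero]

variable {K M : Type*} [Field K] [AddCommGroup M] [Module K M] [Fintype A]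

/-- The sum of the unipotent elements of the corner ring of `e`, in a representation. -/
noncomputable def unipSum (R : A →* Module.End K M) (e : A) : Module.End K M :=
  ∑ N with N ∈ corner e e ∧ IsNilpotent N, R (1 + N)

theorem unipSum_apply (R : A →* Module.End K M) (e : A) (w : M) :
    unipSum R e w = ∑ N with N ∈ corner e e ∧ IsNilpotent N, R (1 + N) w := by
  rw [unipSum, LinearMap.sum_apply]

/-- Conjugating the index set of a sum over nilpotent elements. -/
theorem sum_nilpotent_conj (R : A →* Module.End K M) {e u u' : A} (S : A → Prop)
    (h₁ : u * u' = 1) (h₂ : u' * u = 1) (he : u * e = e * u) (he' : u' * e = e * u') (w : M) :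
    ∑ N with N ∈ corner e e ∧ IsNilpotent N ∧ S (u' * N * u), R (1 + N) (R u w) =
      R u (∑ N with N ∈ corner e e ∧ IsNilpotent N ∧ S N, R (1 + N) w) := by
  have hmem {u u' : A} (he : u * e = e * u) (he' : u' * e = e * u') {N : A}
      (hN : N ∈ corner e e) : u * N * u' ∈ corner e e :=
    ⟨by rw [← mul_assoc, ← mul_assoc, ← he, mul_assoc u, hN.1],
      by rw [mul_assoc, he', ← mul_assoc, mul_assoc u, hN.2]⟩
  rw [map_sum]
  refine Finset.sum_bij' (fun N _ => u' * N * u) (fun N _ => u * N * u') ?_ ?_ ?_ ?_ ?_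
  · intro N hN
    simp only [Finset.mem_filter, Finset.mem_univ, true_and] at hN ⊢
    exact ⟨hmem he' he hN.1, (isNilpotent_mul_mul_unit_iff h₁).2 hN.2.1, hN.2.2⟩
  · intro N hN
    simp only [Finset.mem_filter, Finset.mem_univ, true_and] at hN ⊢
    refine ⟨hmem he he' hN.1, (isNilpotent_mul_mul_unit_iff h₂).2 hN.2.1, ?_⟩
    rw [show u' * (u * N * u') * u = u' * u * N * (u' * u) by simp only [mul_assoc], h₂, one_mul,
      mul_one]
    exact hN.2.2
  · intro N _
    rw [show u * (u' * N * u) * u' = u * u' * N * (u * u') by simp only [mul_assoc], h₁, one_mul,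
      mul_one]
  · intro N _
    rw [show u' * (u * N * u') * u = u' * u * N * (u' * u) by simp only [mul_assoc], h₂, one_mul,
      mul_one]
  · intro N _
    rw [← Module.End.mul_apply, ← Module.End.mul_apply, ← map_mul, ← map_mul]
    congr 2
    rw [mul_add, add_mul, mul_one, one_mul, ← mul_assoc, ← mul_assoc, h₁, one_mul]

theorem unipSum_cornerSum (R : A →* Module.End K M) (hpp : p * p = p) (hqq : q * q = q)
    (hqp : q * p = 0) (w : M) :
    unipSum R (p + q) (cornerSum R p q w) = cornerSum R p q (unipSum R (p + q) w) := by
  rw [cornerSum_apply, cornerSum_apply, map_sum]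
  refine Finset.sum_congr rfl fun (x : corner p q) _ => ?_
  have hx := corner_le_corner_add hpp hqq hqp x.2
  have hxx : (x : A) * x = 0 := corner_mul_eq_zero x.2 x.2 hqp
  have := sum_nilpotent_conj R (e := p + q) (u := 1 + x) (u' := 1 - x) (fun _ => True)
    (by simp only [add_mul, mul_sub, mul_one, one_mul, hxx]; abel)
    (by simp only [sub_mul, mul_add, mul_one, one_mul, hxx]; abel)
    (by rw [add_mul, mul_add _ 1, hx.1, hx.2, one_mul, mul_one])
    (by rw [sub_mul, mul_sub, hx.1, hx.2, one_mul, mul_one]) w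
  simpa only [and_true, ← unipSum_apply] using this

/-- Changing variables from the coset `g (1 + pAq)` to its unipotent elements. -/
theorem sum_shift_eq (R : A →* Module.End K M) (hpp : p * p = p) (hqq : q * q = q)
    (hpq : p * q = 0) (hqp : q * p = 0) {w : M} (hw : ∀ x ∈ corner p q, R (1 + x) w = w)
    {φ : A} (hφ : φ ∈ corner p q) (S : A → Prop) :
    ∑ g with g ∈ corner (p + q) (p + q) ∧ IsNilpotent (g * (p + q + φ) - (p + q)) ∧
        S (g * (p + q + φ)), R (1 - (p + q) + g) w =
      ∑ N with N ∈ corner (p + q) (p + q) ∧ IsNilpotent N ∧ S (p + q + N), R (1 + N) w := by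
  have hee := add_mul_self_of_orthogonal hpp hqq hpq hqp
  have hφe := corner_le_corner_add hpp hqq hqp hφ
  have hφφ : φ * φ = 0 := corner_mul_eq_zero hφ hφ hqp
  have hw' := hw _ (neg_mem hφ)
  generalize p + q = e at *
  have h₁ : (e + φ) * (e - φ) = e := by
    simp only [add_mul, mul_sub, hee, hφe.1, hφe.2, hφφ]; abel
  have h₂ : (e - φ) * (e + φ) = e := by
    simp only [sub_mul, mul_add, hee, hφe.1, hφe.2, hφφ]; abel
  have hmem : e ∈ corner e e := ⟨hee, hee⟩
  have key {N : A} (hN : N ∈ corner e e) : (e + N) * (e - φ) * (e + φ) = e + N := by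
    rw [mul_assoc, h₂, (add_mem hmem hN).2]
  refine Finset.sum_bij' (fun g _ => g * (e + φ) - e) (fun N _ => (e + N) * (e - φ)) ?_ ?_ ?_ ?_ ?_
  · intro g hg
    simp only [Finset.mem_filter, Finset.mem_univ, true_and, add_sub_cancel] at hg ⊢
    exact ⟨sub_mem (mul_mem_corner hg.1 (add_mem hmem hφe)) hmem, hg.2⟩
  · intro N hN
    simp only [Finset.mem_filter, Finset.mem_univ, true_and] at hN ⊢
    rw [key hN.1, add_sub_cancel_left]
    exact ⟨mul_mem_corner (add_mem hmem hN.1) (sub_mem hmem hφe), hN.2⟩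
  · intro g hg
    simp only [Finset.mem_filter, Finset.mem_univ, true_and] at hg
    rw [add_sub_cancel, mul_assoc, h₁, hg.1.2]
  · intro N hN
    simp only [Finset.mem_filter, Finset.mem_univ, true_and] at hN
    rw [key hN.1, add_sub_cancel_left]
  · intro g hg
    simp only [Finset.mem_filter, Finset.mem_univ, true_and] at hg
    nth_rw 2 [← hw']
    rw [← Module.End.mul_apply, ← map_mul]
    congr 2
    simp only [mul_add, add_mul, sub_mul, mul_neg, mul_one, one_mul, mul_assoc, hφφ, hφe.1,
      hg.1.2, mul_zero]
    abel

end UnipotentSum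

section UnipotentSumInvariant

open scoped Classical

variable {F X : Type*} [Field F] [AddCommGroup X] [Module F X]
  {K M : Type*} [Field K] [CharZero K] [AddCommGroup M] [Module K M]

/-- On vectors fixed by `1 + pAq`, the sum of the unipotents can be restricted, with multiplicity,
to those stabilizing the range of an idempotent `q - ψ`. -/
theorem unipSum_eq_sum_of_invariant [FiniteDimensional F X] [Finite (Submodule F X)]
    [Fintype (Module.End F X)] (R : Module.End F X →* Module.End K M) {p q : Module.End F X}
    (hpp : p * p = p) (hqq : q * q = q) (hpq : p * q = 0) (hqp : q * p = 0) {v : M}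
    (hv : ∀ x ∈ corner p q, R (1 + x) v = v) :
    unipSum R (p + q) v = ∑ ψ : corner p q,
      ∑ N with N ∈ corner (p + q) (p + q) ∧ IsNilpotent N ∧
        (p + ψ) * (p + q + N) * (q - ψ) = 0, R (1 + N) v := by
  have hcard (g : Module.End F X) (hg : g ∈ corner (p + q) (p + q)) :
      Nat.card {φ : corner p q // IsNilpotent (g * (p + q + φ) - (p + q))} =
        Nat.card {x : corner p q × corner p q // IsNilpotent (g * (p + q + x.1) - (p + q)) ∧
          (p + x.2) * (g * (p + q + x.1)) * (q - x.2) = 0} := by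
    refine Eq.trans ?_ ((card_unipShift_eq hpp hqq hpq hqp hg.1).trans ?_)
    · exact Nat.card_congr ⟨fun x => ⟨x.1, x.1.2, x.2⟩, fun x => ⟨⟨x.1, x.2.1⟩, x.2.2⟩,
        fun _ => rfl, fun _ => rfl⟩
    · exact Nat.card_congr ⟨fun x => ⟨(⟨x.1.1, x.2.1.1⟩, ⟨x.1.2, x.2.2.1⟩), x.2.1.2, x.2.2.2⟩,
        fun x => ⟨(x.1.1, x.1.2), ⟨x.1.1.2, x.2.1⟩, x.1.2.2, x.2.2⟩, fun _ => rfl, fun _ => rfl⟩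
  have hsum : ∑ g with g ∈ corner (p + q) (p + q),
        Nat.card {φ : corner p q // IsNilpotent (g * (p + q + φ) - (p + q))} •
          R (1 - (p + q) + g) v =
      ∑ g with g ∈ corner (p + q) (p + q),
        Nat.card {x : corner p q × corner p q // IsNilpotent (g * (p + q + x.1) - (p + q)) ∧
          (p + x.2) * (g * (p + q + x.1)) * (q - x.2) = 0} • R (1 - (p + q) + g) v :=
    Finset.sum_congr rfl fun g hg => by rw [hcard g (Finset.mem_filter.1 hg).2]
  rw [sum_card_smul_eq, sum_card_smul_eq, Fintype.sum_prod_type] at hsum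
  simp only [Finset.filter_filter] at hsum
  have h₁ (φ : corner p q) := sum_shift_eq R hpp hqq hpq hqp hv φ.2 (fun _ => True)
  have h₂ (φ ψ : corner p q) := sum_shift_eq R hpp hqq hpq hqp hv φ.2
    (fun h => (p + ψ) * h * (q - ψ) = 0)
  simp only [and_true, ← unipSum_apply] at h₁
  simp only [h₁, h₂, Finset.sum_const, Finset.card_univ, ← Nat.card_eq_fintype_card] at hsum
  rw [← sub_eq_zero, ← smul_sub] at hsum
  exact sub_eq_zero.1 (eq_zero_of_card_corner_smul (K := K) hsum)

/-- On vectors fixed by `1 + pAq`, the sum of the unipotents factors through the sum of the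
unipotents that are block triangular. -/
theorem unipSum_eq_cornerSum_of_invariant [FiniteDimensional F X] [Finite (Submodule F X)]
    [Fintype (Module.End F X)] (R : Module.End F X →* Module.End K M) {p q : Module.End F X}
    (hpp : p * p = p) (hqq : q * q = q) (hpq : p * q = 0) (hqp : q * p = 0) {v : M}
    (hv : ∀ x ∈ corner p q, R (1 + x) v = v) :
    unipSum R (p + q) v = cornerSum R p q
      (∑ N with N ∈ corner (p + q) (p + q) ∧ IsNilpotent N ∧ p * N * q = 0, R (1 + N) v) := by
  rw [unipSum_eq_sum_of_invariant R hpp hqq hpq hqp hv, cornerSum_apply]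
  refine Fintype.sum_equiv (Equiv.neg _) _ _ fun ψ => ?_
  have hψ := corner_le_corner_add hpp hqq hqp ψ.2
  have hψψ : (ψ : Module.End F X) * ψ = 0 := corner_mul_eq_zero ψ.2 ψ.2 hqp
  have hpψ := ψ.2.1
  have hψq := ψ.2.2
  have hψp : (ψ : Module.End F X) * p = 0 := by rw [← hψq, mul_assoc, hqp, mul_zero]
  have hqψ : q * (ψ : Module.End F X) = 0 := by rw [← hpψ, ← mul_assoc, hqp, zero_mul]
  have := sum_nilpotent_conj R (e := p + q) (u := 1 - ψ) (u' := 1 + ψ)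
    (fun N => p * N * q = 0)
    (by simp only [sub_mul, mul_add, mul_one, one_mul, hψψ]; abel)
    (by simp only [add_mul, mul_sub, mul_one, one_mul, hψψ]; abel)
    (by rw [sub_mul, mul_sub, hψ.1, hψ.2, one_mul, mul_one])
    (by rw [add_mul, mul_add _ 1, hψ.1, hψ.2, one_mul, mul_one]) v
  have hneg : R (1 - ψ) v = v := by simpa [sub_eq_add_neg] using hv _ (neg_mem ψ.2)
  rw [hneg] at this
  have hiff (N : Module.End F X) : p * ((1 + ψ) * N * (1 - ψ)) * q = 0 ↔
      (p + ψ) * (p + q + N) * (q - ψ) = 0 := by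
    have e₁ : p * ((1 + ψ) * N * (1 - ψ)) * q = (p + ψ) * N * (q - ψ) := by
      rw [← mul_assoc, ← mul_assoc, mul_add, mul_one, hpψ, mul_assoc, sub_mul, one_mul, hψq]
    have e₂ : (p + ψ) * (p + q) * (q - ψ) = 0 := by
      simp only [add_mul, mul_add, mul_sub, hpp, hpq, hψp, hψq, hpψ, hψψ]
      simp
    rw [e₁, mul_add, add_mul _ _ (q - _), e₂, zero_add]
  simp only [hiff] at this
  rw [this]
  simp [sub_eq_add_neg]

end UnipotentSumInvariant

section Levi

open scoped Classical

variable {A : Type*} [Ring A] {p q : A} {K M : Type*} [Field K] [AddCommGroup M] [Module K M]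

theorem exists_unit_eq_one_add {a : A} (ha : a ∈ corner p p) (hn : IsNilpotent a) :
    ∃ u : Aˣ, (u : A) = 1 + a ∧ Commute p u := by
  obtain ⟨u, hu⟩ := hn.isUnit_one_add
  refine ⟨u, hu, ?_⟩
  rw [hu, Commute, SemiconjBy, mul_add, add_mul, ha.1, ha.2, mul_one, one_mul]

/-- The invariance under `1 + pAq` is preserved by the unipotent sums of the diagonal blocks. -/
theorem apply_unipSum_left [Fintype A] (R : A →* Module.End K M) (hqp : q * p = 0) {w : M}
    (hw : ∀ x ∈ corner p q, R (1 + x) w = w) {x : A} (hx : x ∈ corner p q) :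
    R (1 + x) (unipSum R p w) = unipSum R p w := by
  rw [unipSum_apply, map_sum]
  refine Finset.sum_congr rfl fun a ha => ?_
  obtain ⟨ha, hn⟩ := (Finset.mem_filter.1 ha).2
  obtain ⟨u, hu, hup⟩ := exists_unit_eq_one_add ha hn
  have hxa : x * a = 0 := corner_mul_eq_zero hx ha hqp
  refine apply_apply_of_mul_eq R (h' := 1 + (u⁻¹ : Aˣ) * x) ?_ (hw _ ⟨?_, ?_⟩)
  · rw [← hu, mul_add, ← mul_assoc, Units.mul_inv, hu, add_mul, mul_add x, hxa]
    simp
  · rw [← mul_assoc, hup.units_inv_right.eq, mul_assoc, hx.1]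
  · rw [mul_assoc, hx.2]

theorem apply_unipSum_right [Fintype A] (R : A →* Module.End K M) (hqp : q * p = 0) {w : M}
    (hw : ∀ x ∈ corner p q, R (1 + x) w = w) {x : A} (hx : x ∈ corner p q) :
    R (1 + x) (unipSum R q w) = unipSum R q w := by
  rw [unipSum_apply, map_sum]
  refine Finset.sum_congr rfl fun b hb => ?_
  obtain ⟨hb, hn⟩ := (Finset.mem_filter.1 hb).2
  have hbx : b * x = 0 := corner_mul_eq_zero hb hx hqp
  refine apply_apply_of_mul_eq R (h' := 1 + (x + x * b)) ?_
    (hw _ (add_mem hx (mul_mem_corner hx hb)))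
  simp only [mul_add, add_mul, one_mul, mul_one, ← mul_assoc, hbx, zero_mul]
  abel

/-- The unipotents that are block triangular, factored. -/
theorem sum_triangular_eq [Fintype A] (R : A →* Module.End K M) (hpp : p * p = p)
    (hqq : q * q = q) (hpq : p * q = 0) (hqp : q * p = 0) (w : M) :
    ∑ N with N ∈ corner (p + q) (p + q) ∧ IsNilpotent N ∧ p * N * q = 0, R (1 + N) w =
      cornerSum R q p (unipSum R p (unipSum R q w)) := by
  have hfac : cornerSum R q p (unipSum R p (unipSum R q w)) =
      ∑ a with a ∈ corner p p ∧ IsNilpotent a, ∑ b with b ∈ corner q q ∧ IsNilpotent b,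
        ∑ c : corner q p, R (1 + (a + b + c)) w := by
    rw [unipSum_apply, map_sum]
    refine Finset.sum_congr rfl fun a ha => ?_
    obtain ⟨ha, hn⟩ := (Finset.mem_filter.1 ha).2
    rw [unipSum_apply, map_sum, map_sum]
    refine Finset.sum_congr rfl fun b hb => ?_
    obtain ⟨hb, -⟩ := (Finset.mem_filter.1 hb).2
    rw [cornerSum_apply]
    obtain ⟨u, hu, hup⟩ := exists_unit_eq_one_add ha hn
    refine Fintype.sum_equiv
      ⟨fun c => ⟨c * u, by rw [← mul_assoc, c.2.1], by rw [mul_assoc, ← hup.eq, ← mul_assoc, c.2.2]⟩,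
        fun c => ⟨c * (u⁻¹ : Aˣ), by rw [← mul_assoc, c.2.1],
          by rw [mul_assoc, ← hup.units_inv_right.eq, ← mul_assoc, c.2.2]⟩,
        fun c => Subtype.ext (Units.mul_inv_cancel_right (c : A) u),
        fun c => Subtype.ext (Units.inv_mul_cancel_right (c : A) u)⟩ _ _ fun c => ?_
    have hab : a * b = 0 := corner_mul_eq_zero ha hb hpq
    have hcb : (c : A) * b = 0 := corner_mul_eq_zero c.2 hb hpq
    rw [← Module.End.mul_apply, ← Module.End.mul_apply, ← map_mul, ← map_mul]
    congr 2
    simp only [Equiv.coe_fn_mk, hu, mul_add, add_mul, mul_one, one_mul, hab, hcb, mul_assoc]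
    simp only [mul_zero]
    abel
  rw [hfac, ← Finset.sum_product', ← Finset.sum_product']
  have hz {a b c x : A} (hx : x ∈ corner a b) (h : b * c = 0) : x * c = 0 := by
    rw [← hx.2, mul_assoc, h, mul_zero]
  have hz' {a b c x : A} (hx : x ∈ corner a b) (h : c * a = 0) : c * x = 0 := by
    rw [← hx.1, ← mul_assoc, h, zero_mul]
  have hdec {N : A} (hN : N ∈ corner (p + q) (p + q)) (h : p * N * q = 0) :
      p * N * p + q * N * q + q * N * p = N := by
    conv_rhs => rw [← hN.2, ← hN.1]
    simp only [mul_add, add_mul, h]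
    abel
  have hcorner (a b N : A) (ha : a * a = a) (hb : b * b = b) : a * N * b ∈ corner a b :=
    ⟨by rw [← mul_assoc, ← mul_assoc, ha], by rw [mul_assoc, hb]⟩
  have hblocks {a b c : A} (ha : a ∈ corner p p) (hb : b ∈ corner q q) (hc : c ∈ corner q p) :
      p * (a + b + c) = a ∧ (a + b + c) * q = b ∧ q * (a + b + c) * p = c ∧
        a + b + c ∈ corner (p + q) (p + q) := by
    simp only [mem_corner, mul_add, add_mul, ha.1, ha.2, hb.1, hb.2, hc.1, hc.2, hz ha hpq,
      hz hb hqp, hz hc hpq, hz' ha hqp, hz' hb hpq, hz' hc hpq, add_zero, zero_add, true_and]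
    abel
  refine Finset.sum_bij'
    (fun N _ => ((p * N * p, q * N * q), ⟨q * N * p, hcorner q p N hqq hpp⟩))
    (fun x _ => x.1.1 + x.1.2 + x.2) ?_ ?_ ?_ ?_ ?_
  · intro N hN
    obtain ⟨hN, hn, h⟩ := (Finset.mem_filter.1 hN).2
    have := (isNilpotent_iff_of_triangular hpp hqq hN h).1 hn
    simp only [Finset.mem_product, Finset.mem_filter, Finset.mem_univ, true_and, and_true]
    exact ⟨⟨hcorner p p N hpp hpp, this.1⟩, hcorner q q N hqq hqq, this.2⟩
  · rintro ⟨⟨a, b⟩, c⟩ hx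
    simp only [Finset.mem_product, Finset.mem_filter, Finset.mem_univ, true_and, and_true] at hx ⊢
    obtain ⟨⟨ha, hna⟩, hb, hnb⟩ := hx
    obtain ⟨h₁, h₂, -, h₄⟩ := hblocks ha hb c.2
    have h₀ : p * (a + b + c) * q = 0 := by rw [h₁, hz ha hpq]
    refine ⟨h₄, (isNilpotent_iff_of_triangular hpp hqq h₄ h₀).2 ?_, h₀⟩
    rw [h₁, mul_assoc q, h₂, ha.2, hb.1]
    exact ⟨hna, hnb⟩
  · intro N hN
    obtain ⟨hN, -, h⟩ := (Finset.mem_filter.1 hN).2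
    exact hdec hN h
  · rintro ⟨⟨a, b⟩, c⟩ hx
    simp only [Finset.mem_product, Finset.mem_filter, Finset.mem_univ, true_and, and_true] at hx
    obtain ⟨⟨ha, -⟩, hb, -⟩ := hx
    obtain ⟨h₁, h₂, h₃, -⟩ := hblocks ha hb c.2
    refine Prod.ext (Prod.ext ?_ ?_) (Subtype.ext h₃)
    · exact (congrArg (· * p) h₁).trans ha.2
    · exact (mul_assoc _ _ _).trans ((congrArg (q * ·) h₂).trans hb.1)
  · intro N hN
    obtain ⟨hN, -, h⟩ := (Finset.mem_filter.1 hN).2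
    rw [hdec hN h]

end Levi

section Injectivity

open scoped Classical

variable {A : Type*} [Ring A] {p r : A}

theorem isNilpotent_add_corner (hpp : p * p = p) (hrr : r * r = r)
    (hrp : r * p = 0) {N φ : A} (hN : N ∈ corner (r + p) (r + p)) (hNp : N * p = 0)
    (hφ : φ ∈ corner p r) (hn : IsNilpotent N) : IsNilpotent (N + φ) := by
  have hφp : φ * p = 0 := by rw [← hφ.2, mul_assoc, hrp, mul_zero]
  have hrφ : r * φ = 0 := by rw [← hφ.1, ← mul_assoc, hrp, zero_mul]
  have hφe : φ ∈ corner (r + p) (r + p) := by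
    rw [add_comm r]
    exact corner_le_corner_add hpp hrr hrp hφ
  rw [isNilpotent_iff_of_triangular hrr hpp hN (by rw [mul_assoc, hNp, mul_zero])] at hn
  rw [isNilpotent_iff_of_triangular hrr hpp (add_mem hN hφe)
    (by rw [mul_assoc, add_mul, hNp, hφp, add_zero, mul_zero]), mul_add, hrφ, add_zero,
    mul_assoc p, add_mul, hφp, add_zero, ← mul_assoc]
  exact hn

variable {K M : Type*} [Field K] [AddCommGroup M] [Module K M]

/-- Averaging over `1 + pAr` the sum of the unipotents fixing the range of `p`. -/
theorem card_smul_sum_annihilating [Fintype A] (R : A →* Module.End K M) (hpp : p * p = p)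
    (hrr : r * r = r) (hrp : r * p = 0) (w : M) :
    Nat.card (corner p r) •
        ∑ N with (N ∈ corner (r + p) (r + p) ∧ IsNilpotent N) ∧ N * p = 0, R (1 + N) w =
      ∑ N with (N ∈ corner (r + p) (r + p) ∧ IsNilpotent N) ∧ N * p = 0,
        R (1 + N) (cornerSum R p r w) := by
  simp only [cornerSum_apply, map_sum]
  rw [Finset.sum_comm, Nat.card_eq_fintype_card, ← Finset.card_univ, ← Finset.sum_const]
  refine Finset.sum_congr rfl fun (φ : corner p r) _ => ?_
  have hmem {N φ : A} (hφ : φ ∈ corner p r)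
      (hN : (N ∈ corner (r + p) (r + p) ∧ IsNilpotent N) ∧ N * p = 0) :
      (N + φ ∈ corner (r + p) (r + p) ∧ IsNilpotent (N + φ)) ∧ (N + φ) * p = 0 := by
    refine ⟨⟨add_mem hN.1.1 ?_, isNilpotent_add_corner hpp hrr hrp hN.1.1 hN.2 hφ hN.1.2⟩, ?_⟩
    · rw [add_comm r]
      exact corner_le_corner_add hpp hrr hrp hφ
    · rw [add_mul, hN.2, ← hφ.2, mul_assoc, hrp, mul_zero, add_zero]
  refine Finset.sum_bij' (fun N _ => N + -φ) (fun N _ => N + φ) ?_ ?_ ?_ ?_ ?_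
  · intro N hN
    exact Finset.mem_filter.2 ⟨Finset.mem_univ _, hmem (neg_mem φ.2) (Finset.mem_filter.1 hN).2⟩
  · intro N hN
    exact Finset.mem_filter.2 ⟨Finset.mem_univ _, hmem φ.2 (Finset.mem_filter.1 hN).2⟩
  · intro N _
    simp
  · intro N _
    simp
  · intro N hN
    have hN := (Finset.mem_filter.1 hN).2.2
    have hNφ : N * φ = 0 := by rw [← φ.2.1, ← mul_assoc, hN, zero_mul]
    have hφφ : (φ : A) * φ = 0 := corner_mul_eq_zero φ.2 φ.2 hrp
    rw [← Module.End.mul_apply, ← map_mul]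
    congr 2
    simp [mul_add, add_mul, hNφ, hφφ, add_assoc]

variable [CharZero K] {F X : Type*} [Field F] [AddCommGroup X] [Module F X]

theorem exists_mul_mul_eq_self (y : Module.End F X) : ∃ z, y * z * y = y := by
  obtain ⟨g, hg⟩ := y.rangeRestrict.exists_rightInverse_of_surjective
    y.range_rangeRestrict
  obtain ⟨z, hz⟩ := g.exists_extend
  refine ⟨z, LinearMap.ext fun x => ?_⟩
  have h₁ : z (y x) = g (y.rangeRestrict x) := LinearMap.congr_fun hz (y.rangeRestrict x)
  have h₂ := congrArg Subtype.val (LinearMap.congr_fun hg (y.rangeRestrict x))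
  simp only [Module.End.mul_apply, h₁]
  exact h₂

/-- A cuspidal vector killed by the sum of the unipotents vanishes. -/
theorem eq_zero_of_unipSum_of_cuspidal [FiniteDimensional F X] [Finite (Submodule F X)]
    [Fintype (Module.End F X)] (R : Module.End F X →* Module.End K M) {e : Module.End F X}
    (hee : e * e = e) {k : M} (hk : unipSum R e k = 0)
    (hcusp : ∀ p ∈ corner e e, p * p = p → p ≠ 0 → p ≠ e → cornerSum R p (e - p) k = 0) :
    k = 0 := by
  by_cases he : e = 0
  · subst he
    rw [unipSum_apply, Finset.sum_eq_single_of_mem 0] at hk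
    · simpa using hk
    · simp
    · intro N hN hN0
      exact absurd ((Finset.mem_filter.1 hN).2.1.1.symm.trans (zero_mul N)) hN0
  have : Fintype (Submodule F X) := Fintype.ofFinite _
  obtain ⟨μ, hμ0, hμ⟩ := exists_moebius_weights F X
  have hker : ∀ N : Module.End F X, N ∈ corner e e ∧ IsNilpotent N →
      LinearMap.ker N ⊓ LinearMap.range e ≠ ⊥ := by
    rintro N ⟨hN, hn⟩ h
    obtain ⟨y, hy0, hey, hNy⟩ := exists_ne_zero_of_isNilpotent hn he hee
      (by rw [hN.2, hN.1])
    refine hy0 (LinearMap.ext fun x => ?_)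
    have : y x ∈ LinearMap.ker N ⊓ LinearMap.range e :=
      ⟨LinearMap.congr_fun hNy x, ⟨y x, LinearMap.congr_fun hey x⟩⟩
    rw [h] at this
    exact this
  have hsum : ∑ Z : Submodule F X with Z ≠ ⊥, μ Z •
      ∑ N with (N ∈ corner e e ∧ IsNilpotent N) ∧ Z ≤ LinearMap.ker N ⊓ LinearMap.range e,
        R (1 + N) k = 0 := by
    rw [← hk, unipSum_apply]
    convert (sum_eq_sum_moebius hμ (fun N => R (1 + N) k) _ _ hker).symm
  have hre : LinearMap.range e ≠ ⊥ := by rwa [Ne, LinearMap.range_eq_bot]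
  rw [Finset.sum_eq_single_of_mem (LinearMap.range e) (by simp [hre])] at hsum
  · rw [Finset.sum_eq_single_of_mem 0] at hsum
    · rw [add_zero, map_one, Module.End.one_apply, ← Int.cast_smul_eq_zsmul K, smul_eq_zero] at hsum
      exact hsum.resolve_left (Int.cast_ne_zero.2 (hμ0 _ hre))
    · simp
    · intro N hN hN0
      obtain ⟨⟨hN, -⟩, h⟩ := (Finset.mem_filter.1 hN).2
      refine absurd ?_ hN0
      rw [← hN.2]
      exact (le_ker_iff_mul_eq_zero rfl).1 (h.trans inf_le_left)
  · intro Z hZ hZe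
    have hZ0 := (Finset.mem_filter.1 hZ).2
    by_cases hZle : Z ≤ LinearMap.range e
    swap
    · rw [Finset.filter_false_of_mem fun N _ h => hZle (h.2.trans inf_le_right), Finset.sum_empty,
        smul_zero]
    have hdisj : Disjoint Z (LinearMap.ker e) := by
      rw [Submodule.disjoint_def]
      intro x hx hx'
      obtain ⟨y, rfl⟩ := hZle hx
      rw [← hx', ← Module.End.mul_apply, hee]
    obtain ⟨p, hpp, hpZ, hpe⟩ := exists_idempotent_of_disjoint hdisj
    have hep : e * p = p := mul_eq_right_of_range_le fun x hx => by
      obtain ⟨y, rfl⟩ := hZle (hpZ ▸ hx)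
      rw [← Module.End.mul_apply, hee]
    have hpe' : p * e = p := by
      have : p * (1 - e) = 0 := (le_ker_iff_mul_eq_zero rfl).1 (by
        rintro _ ⟨x, rfl⟩
        refine hpe ?_
        change (e * (1 - e)) x = 0
        rw [mul_sub, mul_one, hee, sub_self, LinearMap.zero_apply])
      rw [mul_sub, mul_one, sub_eq_zero] at this
      exact this.symm
    have hiff (N : Module.End F X) : Z ≤ LinearMap.ker N ⊓ LinearMap.range e ↔ N * p = 0 := by
      rw [le_inf_iff, le_ker_iff_mul_eq_zero hpZ]
      exact and_iff_left hZle
    have key := card_smul_sum_annihilating R (r := e - p) hpp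
      (by rw [sub_mul, mul_sub, mul_sub, hee, hep, hpe', hpp]; abel)
      (by rw [sub_mul, hep, hpp, sub_self]) k
    rw [hcusp p ⟨hep, hpe'⟩ hpp ?_ ?_, sub_add_cancel] at key
    · simp only [map_zero, Finset.sum_const_zero] at key
      simp only [hiff]
      rw [eq_zero_of_card_corner_smul (K := K) key, smul_zero]
    · rintro rfl
      exact hZ0 (by rw [← hpZ, LinearMap.range_zero])
    · rintro rfl
      exact hZe hpZ.symm

/-- The sum of the unipotents is injective on vectors fixed by the unipotent radical `1 + pAq`, if
this holds for the diagonal blocks. -/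
theorem eq_zero_of_unipSum_of_invariant [FiniteDimensional F X] [Finite (Submodule F X)]
    [Fintype (Module.End F X)] (R : Module.End F X →* Module.End K M) {p q : Module.End F X}
    (hpp : p * p = p) (hqq : q * q = q) (hpq : p * q = 0) (hqp : q * p = 0)
    (ihp : ∀ w, unipSum R p w = 0 → w = 0) (ihq : ∀ w, unipSum R q w = 0 → w = 0) {v : M}
    (hv : ∀ x ∈ corner p q, R (1 + x) v = v) (h : unipSum R (p + q) v = 0) : v = 0 := by
  rw [unipSum_eq_cornerSum_of_invariant R hpp hqq hpq hqp hv,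
    sum_triangular_eq R hpp hqq hpq hqp] at h
  have h₁ := eq_zero_of_cornerSum_eq_zero exists_mul_mul_eq_self R hqq hpp hqp hpq
    (fun x hx => apply_cornerSum R hpq hx _) h
  have h₂ := eq_zero_of_cornerSum_eq_zero exists_mul_mul_eq_self R hpp hqq hpq hqp
    (fun x hx => apply_unipSum_left R hqp (fun y hy => apply_unipSum_right R hqp hv hy) hx) h₁
  exact ihq _ (ihp _ h₂)

theorem eq_zero_of_unipSum_eq_zero [FiniteDimensional F X] [Finite (Submodule F X)]
    [Fintype (Module.End F X)] (R : Module.End F X →* Module.End K M) {e : Module.End F X}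
    (hee : e * e = e) {k : M} (hk : unipSum R e k = 0) : k = 0 := by
  induction hn : Nat.card (corner e e) using Nat.strong_induction_on generalizing e k with
  | _ n ih =>
  subst hn
  refine eq_zero_of_unipSum_of_cuspidal R hee hk fun p hp hpp hp0 hpe => ?_
  have hrr : (e - p) * (e - p) = e - p := by
    rw [sub_mul, mul_sub, mul_sub, hee, hp.1, hp.2, hpp]; abel
  have hpr : p * (e - p) = 0 := by rw [mul_sub, hp.2, hpp, sub_self]
  have hrp : (e - p) * p = 0 := by rw [sub_mul, hp.1, hpp, sub_self]
  have hr : e - p ∈ corner e e := sub_mem ⟨hee, hee⟩ hp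
  refine eq_zero_of_unipSum_of_invariant R hpp hrr hpr hrp (fun w hw => ?_) (fun w hw => ?_)
    (fun x hx => apply_cornerSum R hrp hx k) ?_
  · refine ih _ ?_ hpp hw rfl
    have := card_corner_sub_lt hr hee hrr (sub_ne_zero.2 (Ne.symm hpe))
    rwa [sub_sub_cancel] at this
  · exact ih _ (card_corner_sub_lt hp hee hpp hp0) hrr hw rfl
  · rw [unipSum_cornerSum R hpp hrr hrp, add_sub_cancel, hk, map_zero]

end Injectivity

section Extension

open scoped Classical

/-- Extension by zero of a homomorphism from the group of units. -/
noncomputable def extendUnitsByZero {A B : Type*} [Monoid A] [IsDedekindFiniteMonoid A]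
    [MonoidWithZero B] (f : Aˣ →* B) : A →* B where
  toFun a := if h : IsUnit a then f h.unit else 0
  map_one' := by simp
  map_mul' x y := by
    by_cases hx : IsUnit x
    · by_cases hy : IsUnit y
      · rw [dif_pos hx, dif_pos hy, dif_pos (hx.mul hy), ← map_mul]
        congr 1
        exact Units.ext rfl
      · rw [dif_neg hy, dif_neg fun h => hy (IsUnit.mul_iff.1 h).2, mul_zero]
    · rw [dif_neg hx, dif_neg fun h => hx (IsUnit.mul_iff.1 h).1, zero_mul]

theorem extendUnitsByZero_apply {A B : Type*} [Monoid A] [IsDedekindFiniteMonoid A]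
    [MonoidWithZero B] (f : Aˣ →* B) (u : Aˣ) : extendUnitsByZero f u = f u := by
  change (if h : IsUnit (u : A) then f h.unit else 0) = f u
  rw [dif_pos u.isUnit, IsUnit.unit_of_val_units]

end Extension

theorem Matrix.isNilpotent_iff_pow_card_eq_zero {n : ℕ} {F : Type*} [Field F]
    {N : Matrix (Fin n) (Fin n) F} : IsNilpotent N ↔ N ^ n = 0 := by
  refine ⟨fun h => ?_, fun h => ⟨n, h⟩⟩
  have h' := h.map Matrix.toLinAlgEquiv'
  have := LinearMap.aeval_self_charpoly (Matrix.toLinAlgEquiv' N)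
  rw [(LinearMap.isNilpotent_iff_charpoly _).1 h', map_pow, Polynomial.aeval_X, ← map_pow,
    Module.finrank_fin_fun] at this
  exact Matrix.toLinAlgEquiv'.injective (this.trans (map_zero _).symm)

/-- The sum of the unipotent elements acts injectively on any complex representation. -/
theorem eq_zero_of_sum_unipotent {n : ℕ} {F K M : Type*} [Field F] [Fintype F] [DecidableEq F]
    [Field K] [CharZero K] [AddCommGroup M] [Module K M]
    (ρ : Matrix.GeneralLinearGroup (Fin n) F →* Module.End K M) {w : M}
    (hw : ∑ g ∈ Finset.univ.filter (fun g : Matrix.GeneralLinearGroup (Fin n) F =>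
      ((g : Matrix (Fin n) (Fin n) F) - 1) ^ n = 0), ρ g w = 0) : w = 0 := by
  classical
  have : Finite (Module.End F (Fin n → F)) := Module.finite_of_finite F
  have : Fintype (Module.End F (Fin n → F)) := Fintype.ofFinite _
  let E : Matrix (Fin n) (Fin n) F ≃ₐ[F] Module.End F (Fin n → F) := Matrix.toLinAlgEquiv'
  let R : Module.End F (Fin n → F) →* Module.End K M :=
    (extendUnitsByZero ρ).comp (E.symm : Module.End F (Fin n → F) →* Matrix (Fin n) (Fin n) F)
  have hR (g : Matrix.GeneralLinearGroup (Fin n) F) : R (E g) = ρ g := by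
    rw [← extendUnitsByZero_apply]
    exact congrArg (extendUnitsByZero ρ) (E.symm_apply_apply g)
  refine eq_zero_of_unipSum_eq_zero R (e := 1) (one_mul 1) ?_
  rw [← hw, unipSum_apply]
  symm
  refine Finset.sum_bij (fun g _ => E ((g : Matrix (Fin n) (Fin n) F) - 1)) ?_ ?_ ?_ ?_
  · intro g hg
    have := Matrix.isNilpotent_iff_pow_card_eq_zero.2 (Finset.mem_filter.1 hg).2
    exact Finset.mem_filter.2 ⟨Finset.mem_univ _, ⟨one_mul _, mul_one _⟩, this.map E⟩
  · intro g _ h _ hgh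
    exact Units.ext (sub_left_injective (b := 1) (E.injective hgh))
  · intro N hN
    have hn := ((Finset.mem_filter.1 hN).2.2).map E.symm
    obtain ⟨u, hu⟩ := hn.isUnit_one_add
    have hu' : (u : Matrix (Fin n) (Fin n) F) - 1 = E.symm N := by rw [hu, add_sub_cancel_left]
    refine ⟨u, Finset.mem_filter.2 ⟨Finset.mem_univ _, ?_⟩, ?_⟩
    · rw [hu']
      exact Matrix.isNilpotent_iff_pow_card_eq_zero.1 hn
    · rw [hu', AlgEquiv.apply_symm_apply]
  · intro g _
    rw [map_sub, map_one, add_sub_cancel, hR]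

open CategoryTheory in
/-- Schur's lemma for linear maps commuting with an irreducible representation. -/
theorem FDRep.exists_eq_smul_one_of_commute {k G : Type*} [Field k] [IsAlgClosed k] [Monoid G]
    (V : FDRep k G) [Simple V] (f : Module.End k V) (hf : ∀ g, Commute (V.ρ g) f) :
    ∃ c : k, f = c • 1 := by
  let φ : V ⟶ V := ⟨InducedCategory.homMk (ModuleCat.ofHom f), fun g => by
    ext1
    exact (hf g).symm⟩
  obtain ⟨c, hc⟩ := endomorphism_simple_eq_smul_id k φ
  exact ⟨c, congrArg (fun ψ : V ⟶ V => ψ.hom.hom.hom) hc.symm⟩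

open CategoryTheory in
theorem FDRep.nontrivial_of_simple {k G : Type*} [Field k] [Monoid G] (V : FDRep k G)
    [Simple V] : Nontrivial V := by
  by_contra h
  rw [not_nontrivial_iff_subsingleton] at h
  refine id_nonzero V (Action.hom_ext _ _ ?_)
  ext x
  exact Subsingleton.elim (α := V) _ _

/-- Let `q = p ^ k` be a prime power, `n ≥ 1`, and `G = GL(n, 𝔽_q)`.
For every irreducible complex character `χ` of `G`, the sum of the values of `χ`
over the unipotent elements of `G` (those `g` with `(g - 1) ^ n = 0`) is nonzero;
i.e. `χ` is directly linked across the unipotent elements to the trivial character. -/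
theorem unipotent_sum_character_ne_zero
    (p k n : ℕ) (hp : p.Prime) (hk : 0 < k) (hn : 1 ≤ n)
    (F : Type) [Field F] [Fintype F] [DecidableEq F]
    (hq : Fintype.card F = p ^ k)
    (χ : FDRep ℂ (Matrix.GeneralLinearGroup (Fin n) F))
    (hχ : CategoryTheory.Simple χ) :
    ∑ g ∈ Finset.univ.filter
        (fun g : Matrix.GeneralLinearGroup (Fin n) F =>
          ((g : Matrix (Fin n) (Fin n) F) - 1) ^ n = 0),
      χ.character g ≠ 0 := by
  set s := Finset.univ.filter (fun g : Matrix.GeneralLinearGroup (Fin n) F =>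
    ((g : Matrix (Fin n) (Fin n) F) - 1) ^ n = 0) with hs
  have hconj (g h : Matrix.GeneralLinearGroup (Fin n) F) (hh : h ∈ s) : g * h * g⁻¹ ∈ s := by
    rw [hs, Finset.mem_filter, ← Matrix.isNilpotent_iff_pow_card_eq_zero] at hh ⊢
    refine ⟨Finset.mem_univ _, ?_⟩
    have := (isNilpotent_mul_mul_unit_iff (Units.inv_mul g)).2 hh.2
    rwa [mul_sub, sub_mul, mul_one, Units.mul_inv] at this
  have hcomm (g : Matrix.GeneralLinearGroup (Fin n) F) : Commute (χ.ρ g) (∑ h ∈ s, χ.ρ h) := by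
    rw [Commute, SemiconjBy, Finset.mul_sum, Finset.sum_mul]
    refine Finset.sum_bij' (fun h _ => g * h * g⁻¹) (fun h _ => g⁻¹ * h * g) (hconj g) ?_ ?_ ?_ ?_
    · intro h hh
      simpa using hconj g⁻¹ h hh
    · intro h _
      group
    · intro h _
      group
    · intro h _
      rw [← map_mul, ← map_mul, inv_mul_cancel_right]
  obtain ⟨c, hc⟩ := FDRep.exists_eq_smul_one_of_commute χ _ hcomm
  have := FDRep.nontrivial_of_simple χ
  have hsum : ∑ g ∈ s, χ.character g = c * Module.finrank ℂ χ := by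
    have h := congrArg (LinearMap.trace ℂ χ) hc
    rwa [map_sum, map_smul, LinearMap.trace_one, smul_eq_mul] at h
  rw [hsum]
  refine mul_ne_zero ?_ (Nat.cast_ne_zero.2 Module.finrank_pos.ne')
  rintro rfl
  obtain ⟨w, hw⟩ := exists_ne (0 : χ)
  refine hw (eq_zero_of_sum_unipotent χ.ρ ?_)
  have := LinearMap.congr_fun hc w
  rwa [LinearMap.sum_apply, zero_smul, LinearMap.zero_apply] at this
end

section
/- Let q be a power of a prime, let n ≥ 1, let G = GL(n, 𝔽_q), and let G_u be the set of unipotent elements of G. Then the equivalence relation on the set of irreducible complex characters of G generated by direct linking across G_u has exactly one equivalence class: any two irreducible complex characters of G are linked across G_u (indeed each is directly linked across G_u to the trivial character). Equivalently, the only 1-block of G is the whole of Irr(G). -/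
namespace Steinberg

open Matrix

section Groups

variable {F : Type*} [Field F] {n : ℕ}

/-- The subgroup of `GL n F` of matrices that are block triangular with respect to `b`. -/
def parabolic {α : Type*} [LinearOrder α] (b : Fin n → α) : Subgroup (GL (Fin n) F) where
  carrier := {g | (g : Matrix (Fin n) (Fin n) F).BlockTriangular b}
  mul_mem' hg hh := by
    simpa using! BlockTriangular.mul hg hh
  one_mem' := by simpa using! blockTriangular_one
  inv_mem' {g} hg := by
    have := g.invertible
    simpa using! blockTriangular_inv_of_blockTriangular hg

/-- The Borel subgroup of invertible upper triangular matrices. -/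
def borel : Subgroup (GL (Fin n) F) := parabolic id

theorem mem_borel {g : GL (Fin n) F} : g ∈ borel ↔ ∀ i j, j < i → g i j = 0 := Iff.rfl

theorem mul_apply_diag_of_mem_borel {g h : GL (Fin n) F} (hg : g ∈ borel) (hh : h ∈ borel)
    (i : Fin n) : (g * h) i i = g i i * h i i := by
  rw [Units.val_mul, Matrix.mul_apply]
  refine Finset.sum_eq_single i (fun j _ hj => ?_) (by simp)
  rcases lt_or_gt_of_ne hj with h' | h'
  · rw [mem_borel.1 hg _ _ h', zero_mul]
  · rw [mem_borel.1 hh _ _ h', mul_zero]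

/-- The group of upper unitriangular matrices. -/
def unitriangular : Subgroup (GL (Fin n) F) where
  carrier := {g | g ∈ borel ∧ ∀ i, g i i = 1}
  mul_mem' hg hh := ⟨mul_mem hg.1 hh.1, fun i => by
    rw [mul_apply_diag_of_mem_borel hg.1 hh.1, hg.2, hh.2, mul_one]⟩
  one_mem' := ⟨one_mem _, fun i => by simp⟩
  inv_mem' {g} hg := ⟨inv_mem hg.1, fun i => by
    have := mul_apply_diag_of_mem_borel hg.1 (inv_mem hg.1) i
    rw [mul_inv_cancel, hg.2, one_mul] at this
    simpa using this.symm⟩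

theorem mem_unitriangular {g : GL (Fin n) F} :
    g ∈ unitriangular ↔ (∀ i j, j < i → g i j = 0) ∧ ∀ i, g i i = 1 := Iff.rfl

variable (F) in
/-- The permutation matrix sending the basis vector `e j` to `e (σ j)`. -/
def weyl : Equiv.Perm (Fin n) →* GL (Fin n) F :=
  MonoidHom.toHomUnits
    { toFun := fun σ => (Matrix.of fun i j => if i = σ j then 1 else 0 : Matrix (Fin n) (Fin n) F)
      map_one' := by ext i j; simp [Matrix.one_apply]; rfl
      map_mul' := fun σ τ => by ext i j; simp [Matrix.mul_apply]; rfl }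

theorem weyl_apply (σ : Equiv.Perm (Fin n)) (i j : Fin n) :
    weyl F σ i j = if i = σ j then 1 else 0 := rfl

theorem mul_weyl_apply (g : GL (Fin n) F) (σ : Equiv.Perm (Fin n)) (i j : Fin n) :
    (g * weyl F σ) i j = g i (σ j) := by
  simp [Matrix.mul_apply, weyl_apply]

theorem weyl_inv_mul_apply (g : GL (Fin n) F) (σ : Equiv.Perm (Fin n)) (i j : Fin n) :
    ((weyl F σ)⁻¹ * g) i j = g (σ i) j := by
  rw [← map_inv, Units.val_mul, Matrix.mul_apply, Finset.sum_eq_single (σ i)]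
  · rw [weyl_apply, if_pos (by simp), one_mul]
  · intro k _ hk
    rw [weyl_apply, if_neg, zero_mul]
    rintro rfl
    simp at hk
  · simp

/-- An upper triangular matrix which differs from the identity in the column `k` only. -/
theorem exists_mem_borel_eq_updateCol (k : Fin n) (c : Fin n → F) (hk : c k ≠ 0)
    (hc : ∀ i, k < i → c i = 0) :
    ∃ g : GL (Fin n) F, g ∈ borel ∧ (g : Matrix (Fin n) (Fin n) F) = updateCol 1 k c := by
  have hT : (updateCol (1 : Matrix (Fin n) (Fin n) F) k c).IsUpperTriangular := by
    intro i j hij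
    simp only [id] at hij
    rw [updateCol_apply]
    split_ifs with h
    · exact hc i (h ▸ hij)
    · exact one_apply_ne hij.ne'
  have hdet : (updateCol (1 : Matrix (Fin n) (Fin n) F) k c).det ≠ 0 := by
    rw [det_of_isUpperTriangular hT]
    refine Finset.prod_ne_zero_iff.2 fun i _ => ?_
    rw [updateCol_apply]
    split_ifs with h
    · rwa [h]
    · simp
  exact ⟨GeneralLinearGroup.mkOfDetNeZero _ hdet, hT, rfl⟩

theorem exists_unitriangular_eq_updateCol (k : Fin n) (c : Fin n → F) (hk : c k = 1)
    (hc : ∀ i, k < i → c i = 0) :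
    ∃ g : GL (Fin n) F, g ∈ unitriangular ∧
      (g : Matrix (Fin n) (Fin n) F) = updateCol 1 k c := by
  obtain ⟨g, hg, h⟩ := exists_mem_borel_eq_updateCol k c (by simp [hk]) hc
  refine ⟨g, ⟨hg, fun i => ?_⟩, h⟩
  rw [h, updateCol_apply]
  split_ifs with hi
  · rw [hi, hk]
  · simp

theorem injOn_of_col_eq_single (g : GL (Fin n) F) (τ : Fin n → Fin n) (s : Set (Fin n))
    (h : ∀ j ∈ s, ∀ i, g i j = if i = τ j then 1 else 0) : Set.InjOn τ s := by
  intro a ha b hb hab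
  by_contra hne
  refine g.det_ne_zero (Matrix.det_zero_of_column_eq hne fun i => ?_)
  rw [h a ha, h b hb, hab]

theorem exists_reduced_columns (g : GL (Fin n) F) (k : ℕ) (hk : k ≤ n) :
    ∃ u ∈ unitriangular, ∃ b ∈ borel, ∃ τ : Fin n → Fin n,
      ∀ j : Fin n, (j : ℕ) < k → ∀ i, (u * g * b : GL (Fin n) F) i j = if i = τ j then 1 else 0 := by
  classical
  induction k with
  | zero => exact ⟨1, one_mem _, 1, one_mem _, id, by simp⟩
  | succ k ih =>
    obtain ⟨u, hu, b, hb, τ, h⟩ := ih (by omega)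
    set M : GL (Fin n) F := u * g * b with hM
    let κ : Fin n := ⟨k, hk⟩
    have hinj : Set.InjOn τ {j | j < κ} := injOn_of_col_eq_single M τ _ fun j hj => h j hj
    let c : Fin n → F := fun j => if j < κ then -M (τ j) κ else if j = κ then 1 else 0
    let v : Fin n → F := M.1 *ᵥ c
    have hc0 : c ≠ 0 := fun h0 => by
      have := congrFun h0 κ
      simp [c] at this
    have hv0 : v ≠ 0 := fun h0 => hc0 <| by
      have := congrArg (fun x => M⁻¹.1 *ᵥ x) h0
      simpa [v, Matrix.mulVec_mulVec, ← Units.val_mul] using this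
    have hvτ : ∀ j < κ, v (τ j) = 0 := by
      intro j hj
      have e : ∀ l, M (τ j) l * c l =
          (if l = j then -M (τ j) κ else 0) + if l = κ then M (τ j) κ else 0 := by
        intro l
        rcases lt_trichotomy l κ with hl | rfl | hl
        · rw [h l hl]
          simp only [c, hl, hl.ne, if_true, if_false, add_zero]
          by_cases hlj : l = j
          · simp [hlj]
          · have : τ j ≠ τ l := fun hh => hlj (hinj hl hj hh.symm)
            simp [hlj, this]
        · simp [c, hj.ne']
        · simp [c, hl.ne', hl.not_gt, (hj.trans hl).ne']
      simp only [v, mulVec, dotProduct]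
      rw [Finset.sum_congr rfl fun l _ => e l, Finset.sum_add_distrib]
      simp
    obtain ⟨r, hr, hmax⟩ : ∃ r, v r ≠ 0 ∧ ∀ i, r < i → v i = 0 := by
      have hne : (Finset.univ.filter fun i => v i ≠ 0).Nonempty := by
        obtain ⟨i, hi⟩ := Function.ne_iff.1 hv0
        exact ⟨i, by simpa using hi⟩
      refine ⟨_, by simpa using Finset.max'_mem _ hne, fun i hi => ?_⟩
      by_contra h0
      exact hi.not_ge (Finset.le_max' _ _ (by simpa using h0))
    obtain ⟨b₁, hb₁, hb₁'⟩ := exists_mem_borel_eq_updateCol κ ((v r)⁻¹ • c)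
      (by simpa [c] using hr) (fun i hi => by simp [c, hi.not_gt, hi.ne'])
    obtain ⟨u₁, hu₁, hu₁'⟩ := exists_unitriangular_eq_updateCol r
      (fun i => if i = r then 1 else -(v i / v r)) (by simp)
      (fun i hi => by simp [hi.ne', hmax i hi])
    refine ⟨u₁ * u, mul_mem hu₁ hu, b * b₁, mul_mem hb hb₁, Function.update τ κ r, ?_⟩
    have hprod : u₁ * u * g * (b * b₁) = u₁ * (M * b₁) := by simp only [hM, mul_assoc]
    intro j hj i
    have hMb : ∀ a, (M * b₁) a j = if j = κ then (v r)⁻¹ * v a else M a j := by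
      intro a
      rw [Units.val_mul, hb₁', mul_updateCol, updateCol_apply, mulVec_smul, mul_one]
      rfl
    have hu₁a : ∀ l, u₁ i l = if l = r then (if i = r then 1 else -(v i / v r)) else
        (1 : Matrix (Fin n) (Fin n) F) i l := by
      intro l
      rw [hu₁', updateCol_apply]
    have key : ∀ x : Fin n → F, ∑ l, u₁ i l * x l =
        if i = r then x r else x i - v i / v r * x r := by
      intro x
      have e : ∀ l, u₁ i l * x l = (if l = i then x i else 0) +
          if l = r then (if i = r then 0 else -(v i / v r) * x r) else 0 := by
        intro l
        rw [hu₁a]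
        by_cases hl : l = r
        · subst hl
          by_cases hi : i = l
          · simp [hi]
          · simp [hi, Ne.symm hi]
        · by_cases hi : l = i
          · subst hi
            simp [hl]
          · simp [hl, hi, one_apply_ne (Ne.symm hi)]
      rw [Finset.sum_congr rfl fun l _ => e l, Finset.sum_add_distrib]
      split_ifs with hi <;> simp [hi, sub_eq_add_neg]
    rw [hprod, Units.val_mul, Matrix.mul_apply, key]
    rcases eq_or_ne j κ with rfl | hjκ
    · simp only [hMb, if_true, Function.update_self]
      split_ifs with hi
      · field_simp
      · field_simp; simp
    · have hj' : j < κ := lt_of_le_of_ne (Nat.lt_succ_iff.1 hj) hjκ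
      have hrτ : r ≠ τ j := fun hh => hr (hh ▸ hvτ j hj')
      simp only [hMb, hjκ, if_false, Function.update_of_ne hjκ]
      rw [h j hj' r, if_neg hrτ, h j hj' i]
      split_ifs <;> simp_all

/-- The Bruhat decomposition. -/
theorem exists_eq_unitriangular_mul_weyl_mul_borel (g : GL (Fin n) F) :
    ∃ u ∈ unitriangular, ∃ σ, ∃ b ∈ borel, g = u * weyl F σ * b := by
  obtain ⟨u, hu, b, hb, τ, h⟩ := exists_reduced_columns g n le_rfl
  have hinj : Function.Injective τ := by
    rw [← Set.injOn_univ]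
    exact injOn_of_col_eq_single (u * g * b) τ _ fun j _ => h j j.2
  refine ⟨u⁻¹, inv_mem hu, Equiv.ofBijective τ (Finite.injective_iff_bijective.1 hinj), b⁻¹,
    inv_mem hb, ?_⟩
  have : u * g * b = weyl F (Equiv.ofBijective τ (Finite.injective_iff_bijective.1 hinj)) := by
    ext i j
    rw [h j j.2, weyl_apply, Equiv.ofBijective_apply]
  rw [← this]
  group

end Groups

section Parabolic

variable {F : Type*} [Field F] {n : ℕ}

theorem borel_le_parabolic {α : Type*} [LinearOrder α] {b : Fin n → α} (hb : Monotone b) :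
    (borel : Subgroup (GL (Fin n) F)) ≤ parabolic b :=
  fun _ hg _ _ hij => hg (hb.reflect_lt hij)

theorem weyl_mem_parabolic {α : Type*} [LinearOrder α] {b : Fin n → α} {σ : Equiv.Perm (Fin n)}
    (h : ∀ i, b (σ i) = b i) : weyl F σ ∈ parabolic b := by
  intro i j hij
  rw [weyl_apply, if_neg]
  rintro rfl
  exact hij.ne (h j).symm

/-- The map on indices identifying `j` with `i`. -/
def collapse (i j : Fin n) : Fin n → Fin n := fun k => if k = j then i else k

theorem collapse_monotone {i j : Fin n} (hij : (j : ℕ) = i + 1) : Monotone (collapse i j) := by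
  intro x y hxy
  simp only [collapse, Fin.le_def, Fin.ext_iff] at *
  split_ifs <;> omega

theorem collapse_swap (i j k : Fin n) : collapse i j (Equiv.swap i j k) = collapse i j k := by
  simp only [collapse, Equiv.swap_apply_def]
  split_ifs <;> simp_all

/-- A matrix in the minimal parabolic subgroup attached to the simple reflection `(i j)` that is
not in the Borel subgroup is in the nontrivial Bruhat cell. -/
theorem exists_mul_weyl_mul_of_mem_parabolic {i j : Fin n} (hij : (j : ℕ) = i + 1)
    {σ : Equiv.Perm (Fin n)} (hσ : σ i < σ j) {h : GL (Fin n) F}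
    (hh : h ∈ parabolic (collapse i j)) (hb : h ∉ borel) :
    ∃ u ∈ unitriangular, ∃ b ∈ borel,
      weyl F σ * h = u * weyl F (σ * Equiv.swap i j) * b := by
  have hlt : i < j := by rw [Fin.lt_def]; omega
  have h0 : ∀ a b : Fin n, b < a → ¬ (a = j ∧ b = i) → h a b = 0 := by
    intro a b hba hne
    refine hh ?_
    simp only [collapse, Fin.lt_def, Fin.ext_iff] at *
    split_ifs <;> omega
  have hji : h j i ≠ 0 := by
    intro hzero
    refine hb (mem_borel.2 fun a b hba => ?_)
    by_cases hab : a = j ∧ b = i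
    · rw [hab.1, hab.2, hzero]
    · exact h0 a b hba hab
  set c : F := h i i / h j i with hc
  have hne : σ i ≠ σ j := hσ.ne
  have htrans : ∀ d : F, ((transvection (σ i) (σ j) d).det ≠ 0) := fun d => by
    rw [det_transvection_of_ne _ _ hne]; exact one_ne_zero
  let u : GL (Fin n) F := GeneralLinearGroup.mkOfDetNeZero _ (htrans c)
  have hu : u ∈ unitriangular := by
    refine mem_unitriangular.2 ⟨fun a b hba => ?_, fun a => ?_⟩
    · change transvection (σ i) (σ j) c a b = 0
      simp only [transvection, Matrix.add_apply, Matrix.single_apply, one_apply_ne hba.ne', zero_add]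
      rw [if_neg]
      rintro ⟨rfl, rfl⟩
      exact hσ.not_gt hba
    · change transvection (σ i) (σ j) c a a = 1
      simp only [transvection, Matrix.add_apply, Matrix.single_apply, one_apply_eq]
      rw [if_neg, add_zero]
      rintro ⟨h1, h2⟩
      exact hne (h1.trans h2.symm)
  have huinv : (u⁻¹ : GL (Fin n) F) = GeneralLinearGroup.mkOfDetNeZero _ (htrans (-c)) := by
    rw [inv_eq_iff_mul_eq_one]
    ext1
    change transvection (σ i) (σ j) c * transvection (σ i) (σ j) (-c) = 1
    rw [transvection_mul_transvection_same _ _ hne]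
    simp
  refine ⟨u, hu, (weyl F (σ * Equiv.swap i j))⁻¹ * (u⁻¹ * (weyl F σ * h)), ?_, by group⟩
  have hrow : ∀ a b, (weyl F σ * h) (σ a) b = h a b := fun a b => by
    rw [← weyl_inv_mul_apply, inv_mul_cancel_left]
  refine mem_borel.2 fun a b hba => ?_
  rw [weyl_inv_mul_apply, huinv, Units.val_mul]
  change (transvection (σ i) (σ j) (-c) * (weyl F σ * h).1) _ _ = 0
  rcases eq_or_ne a i with rfl | hai
  · rw [transvection_mul_apply_of_ne _ _ _ _ (by simpa using hne.symm)]
    simp only [Equiv.Perm.mul_apply, Equiv.swap_apply_left]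
    rw [hrow]
    exact h0 _ _ (hba.trans hlt) fun hh => hba.ne hh.2
  rcases eq_or_ne a j with rfl | haj
  · simp only [Equiv.Perm.mul_apply, Equiv.swap_apply_right]
    rw [transvection_mul_apply_same, hrow, hrow]
    rcases eq_or_ne b i with rfl | hbi
    · rw [hc]; field_simp; ring
    · have hb' : b < i := by
        rw [Fin.lt_def] at *
        have := Fin.val_ne_of_ne hbi
        omega
      rw [h0 _ _ hb' (fun hh => hlt.ne hh.1), h0 _ _ hba (fun hh => hbi hh.2)]
      simp
  · simp only [Equiv.Perm.mul_apply, Equiv.swap_apply_of_ne_of_ne hai haj]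
    rw [transvection_mul_apply_of_ne _ _ _ _ (by simpa using hai), hrow]
    exact h0 _ _ hba fun hh => haj hh.1

/-- An upper unitriangular matrix permuted into a triangular one by the longest element. -/
theorem weyl_inv_mul_unitriangular_mul_mem_borel {v : GL (Fin n) F} (hv : v ∈ unitriangular)
    {σ : Equiv.Perm (Fin n)} :
    (weyl F σ)⁻¹ * (v * weyl F Fin.revPerm) ∈ borel ↔ v = 1 ∧ σ = Fin.revPerm := by
  constructor
  · intro h
    have h' : ∀ a b, b < a → v (σ a) (Fin.rev b) = 0 := fun a b hba => by
      have := mem_borel.1 h a b hba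
      rwa [weyl_inv_mul_apply, mul_weyl_apply] at this
    have hle : ∀ a, a ≤ Fin.rev (σ a) := fun a => by
      by_contra hlt
      have := h' a (Fin.rev (σ a)) (not_le.1 hlt)
      rw [Fin.rev_rev, hv.2] at this
      exact one_ne_zero this
    have hσ : σ = Fin.revPerm := by
      have hsum : ∑ a : Fin n, (a : ℕ) = ∑ a : Fin n, ((Fin.rev (σ a) : Fin n) : ℕ) :=
        (Equiv.sum_comp (σ.trans Fin.revPerm) (fun a : Fin n => (a : ℕ))).symm
      have := (Finset.sum_eq_sum_iff_of_le (s := Finset.univ)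
        (f := fun a : Fin n => (a : ℕ)) (g := fun a => ((Fin.rev (σ a) : Fin n) : ℕ))
        (fun a _ => hle a)).1 hsum
      ext1 a
      rw [Fin.revPerm_apply, ← Fin.rev_rev (σ a), ← Fin.ext (this a (Finset.mem_univ a))]
    refine ⟨?_, hσ⟩
    ext a b
    rcases lt_trichotomy a b with hab | rfl | hab
    · have := h' (Fin.rev a) (Fin.rev b) (Fin.rev_lt_rev.2 hab)
      rw [hσ, Fin.revPerm_apply, Fin.rev_rev, Fin.rev_rev] at this
      rw [this, Units.val_one, one_apply_ne hab.ne]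
    · rw [hv.2, Units.val_one, one_apply_eq]
    · rw [hv.1 hab, Units.val_one, one_apply_ne hab.ne']
  · rintro ⟨rfl, rfl⟩
    simp [one_mem]

theorem eq_revPerm_or_exists_ascent (σ : Equiv.Perm (Fin n)) :
    σ = Fin.revPerm ∨ ∃ i j : Fin n, (j : ℕ) = i + 1 ∧ σ i < σ j := by
  by_contra! hcon
  obtain ⟨hne, hasc⟩ := hcon
  refine hne ?_
  cases n with
  | zero => exact Subsingleton.elim _ _
  | succ m =>
    have hanti : StrictAnti σ := Fin.strictAnti_iff_succ_lt.2 fun i =>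
      lt_of_le_of_ne (hasc i.castSucc i.succ (by simp))
        fun h => (Fin.castSucc_lt_succ (i := i)).ne' (σ.injective h)
    have hmono : StrictMono (σ.trans Fin.revPerm) := fun a b hab => by
      simpa using hanti hab
    have hid : (σ.trans Fin.revPerm : Fin (m + 1) → Fin (m + 1)) = id := by
      have := Subsingleton.elim (hmono.orderIsoOfSurjective _ (Equiv.surjective _))
        (OrderIso.refl (Fin (m + 1)))
      ext1 a
      exact congrArg (fun f => f a) this
    ext1 a
    have := congrFun hid a
    simp only [Equiv.trans_apply, Fin.revPerm_apply, id] at this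
    rw [Fin.revPerm_apply, Fin.rev_eq_iff.1 this]

end Parabolic

section Module

open scoped Classical

variable {F : Type*} [Field F] {n : ℕ}

variable (F n) in
/-- The group of upper unitriangular matrices, as a type. -/
abbrev UnitriangularGroup : Type _ := (unitriangular : Subgroup (GL (Fin n) F))

variable (F n) in
/-- The alternating sum of the indicator functions of the flags in the standard apartment. -/
noncomputable def apartment : GL (Fin n) F → ℂ := fun g =>
  ∑ σ : Equiv.Perm (Fin n),
    ((Equiv.Perm.sign σ : ℤ) : ℂ) * if (weyl F σ)⁻¹ * g ∈ borel then 1 else 0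

theorem apartment_bigCell {v : GL (Fin n) F} (hv : v ∈ unitriangular) :
    apartment F n (v * weyl F Fin.revPerm) =
      if v = 1 then ((Equiv.Perm.sign (Fin.revPerm : Equiv.Perm (Fin n)) : ℤ) : ℂ) else 0 := by
  simp only [apartment, weyl_inv_mul_unitriangular_mul_mem_borel hv]
  split_ifs with h <;> simp [h]

variable [Fintype F]

variable (F n)

/-- The Steinberg module: the functions on the flag variety `GL n F ⧸ borel` whose sum over each
fibre of the projection onto the quotient by a minimal parabolic subgroup vanishes. -/
def flagModule : Submodule ℂ (GL (Fin n) F → ℂ) where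
  carrier := {f | (∀ g, ∀ b ∈ borel, f (g * b) = f g) ∧ ∀ i j : Fin n, (j : ℕ) = i + 1 →
    ∀ g, ∑ h : (parabolic (collapse i j) : Subgroup (GL (Fin n) F)), f (g * h) = 0}
  add_mem' hf hf' := ⟨fun g b hb => by simp [hf.1 g b hb, hf'.1 g b hb], fun i j hij g => by
    simp [Finset.sum_add_distrib, hf.2 i j hij g, hf'.2 i j hij g]⟩
  zero_mem' := ⟨by simp, by simp⟩
  smul_mem' c f hf := ⟨fun g b hb => by simp [hf.1 g b hb], fun i j hij g => by
    simp [← Finset.mul_sum, hf.2 i j hij g]⟩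

/-- The Steinberg representation, by left translation of functions. -/
def rep : Representation ℂ (GL (Fin n) F) (flagModule F n) where
  toFun g :=
    { toFun := fun f => ⟨fun x => f.1 (g⁻¹ * x), fun x b hb => by
          simpa only [mul_assoc] using f.2.1 (g⁻¹ * x) b hb, fun i j hij x => by
          simpa only [mul_assoc] using f.2.2 i j hij (g⁻¹ * x)⟩
      map_add' := fun _ _ => rfl
      map_smul' := fun _ _ => rfl }
  map_one' := by ext f x; simp
  map_mul' g h := by ext f x; simp [mul_assoc]

variable {F n}

theorem rep_apply (g : GL (Fin n) F) (f : flagModule F n) (x : GL (Fin n) F) :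
    (rep F n g f).1 x = f.1 (g⁻¹ * x) := rfl

/-- A function in the Steinberg module vanishing on the big Bruhat cell is zero. -/
theorem eq_zero_of_forall_bigCell {f : GL (Fin n) F → ℂ} (hf : f ∈ flagModule F n)
    (h0 : ∀ u ∈ unitriangular, f (u * weyl F Fin.revPerm) = 0) : f = 0 := by
  have key : ∀ (x : Lex (Fin n → Fin n)) (σ : Equiv.Perm (Fin n)), x = toLex (σ : Fin n → Fin n) →
      ∀ u ∈ unitriangular, f (u * weyl F σ) = 0 := by
    intro x
    induction x using WellFoundedGT.induction with
    | ind x ih =>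
    rintro σ rfl u hu
    rcases eq_revPerm_or_exists_ascent σ with rfl | ⟨i, j, hij, hσ⟩
    · exact h0 u hu
    have hlt : toLex (σ : Fin n → Fin n) < toLex ((σ * Equiv.swap i j : Equiv.Perm (Fin n)) :
        Fin n → Fin n) := by
      refine ⟨i, fun k hk => ?_, ?_⟩
      · have hkj : k ≠ j := by
          rintro rfl
          exact absurd (Fin.lt_def.1 hk) (by omega)
        simp [Equiv.swap_apply_of_ne_of_ne (ne_of_lt hk) hkj]
      · simpa using hσ
    have hsum := hf.2 i j hij (u * weyl F σ)
    have hterm : ∀ h : (parabolic (collapse i j) : Subgroup (GL (Fin n) F)),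
        f (u * weyl F σ * h) = if h.1 ∈ borel then f (u * weyl F σ) else 0 := by
      intro h
      split_ifs with hb
      · exact hf.1 _ _ hb
      · obtain ⟨v, hv, b, hb, he⟩ := exists_mul_weyl_mul_of_mem_parabolic hij hσ h.2 hb
        rw [mul_assoc, he, ← mul_assoc, hf.1 _ b hb, ← mul_assoc]
        exact ih _ hlt _ rfl _ (mul_mem hu hv)
    rw [Finset.sum_congr rfl fun h _ => hterm h, Finset.sum_ite, Finset.sum_const_zero, add_zero,
      Finset.sum_const, smul_eq_zero] at hsum
    refine hsum.resolve_left (Finset.card_ne_zero.2 ⟨1, ?_⟩)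
    simp [one_mem]
  ext g
  obtain ⟨u, hu, σ, b, hb, rfl⟩ := exists_eq_unitriangular_mul_weyl_mul_borel g
  rw [hf.1 _ b hb, key _ σ rfl u hu]
  rfl

theorem card_mul_mem_borel {P : Subgroup (GL (Fin n) F)} (hP : borel ≤ P) (m : GL (Fin n) F) :
    ∑ h : P, (if m * h ∈ borel then (1 : ℂ) else 0) =
      if m ∈ P then ∑ h : P, (if (h : GL (Fin n) F) ∈ borel then (1 : ℂ) else 0) else 0 := by
  split_ifs with hm
  · exact Equiv.sum_comp (Equiv.mulLeft (⟨m, hm⟩ : P))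
      fun h : P => if (h : GL (Fin n) F) ∈ borel then (1 : ℂ) else 0
  · refine Finset.sum_eq_zero fun h _ => if_neg fun hb => hm ?_
    exact (Subgroup.mul_mem_cancel_right P h.2).1 (hP hb)

theorem apartment_mem : apartment F n ∈ flagModule F n := by
  refine ⟨fun g b hb => ?_, fun i j hij g => ?_⟩
  · simp only [apartment, ← mul_assoc, Subgroup.mul_mem_cancel_right _ hb]
  · set P : Subgroup (GL (Fin n) F) := parabolic (collapse i j)
    have hP : borel ≤ P := borel_le_parabolic (collapse_monotone hij)
    have hs : weyl F (Equiv.swap i j) ∈ P := weyl_mem_parabolic (collapse_swap i j)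
    have hne : i ≠ j := by
      rintro rfl
      omega
    simp only [apartment]
    rw [Finset.sum_comm]
    simp_rw [← Finset.mul_sum, ← mul_assoc, card_mul_mem_borel hP]
    refine self_eq_neg.1 ?_
    rw [← Finset.sum_neg_distrib]
    refine Fintype.sum_equiv (Equiv.mulRight (Equiv.swap i j)) _ _ fun σ => ?_
    rw [Equiv.coe_mulRight, map_mul, map_mul, Equiv.Perm.sign_swap hne, _root_.mul_inv_rev, mul_assoc,
      Subgroup.mul_mem_cancel_left P (inv_mem hs)]
    split_ifs <;> simp

variable (F n) in
/-- Restriction to the big Bruhat cell. -/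
def restrict : flagModule F n →ₗ[ℂ] (UnitriangularGroup F n → ℂ) where
  toFun f u := f.1 (u.1 * weyl F Fin.revPerm)
  map_add' _ _ := rfl
  map_smul' _ _ := rfl

theorem restrict_rep (v : UnitriangularGroup F n) (f : flagModule F n) :
    restrict F n (rep F n v f) = LinearMap.funLeft ℂ ℂ (fun u => v⁻¹ * u) (restrict F n f) := by
  ext u
  simp [restrict, rep_apply, LinearMap.funLeft_apply, mul_assoc]

theorem restrict_bijective : Function.Bijective (restrict F n) := by
  constructor
  · rw [injective_iff_map_eq_zero]
    intro f hf
    exact Subtype.ext (eq_zero_of_forall_bigCell f.2 fun u hu => congrFun hf ⟨u, hu⟩)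
  · rw [← LinearMap.range_eq_top, eq_top_iff, ← (Pi.basisFun ℂ _).span_eq, Submodule.span_le]
    rintro _ ⟨v, rfl⟩
    set s : ℂ := ((Equiv.Perm.sign (Fin.revPerm : Equiv.Perm (Fin n)) : ℤ) : ℂ) with hs
    have hs0 : s ≠ 0 := by simp [hs]
    refine ⟨s⁻¹ • rep F n v ⟨apartment F n, apartment_mem⟩, ?_⟩
    ext u
    rw [map_smul, restrict_rep, Pi.smul_apply, LinearMap.funLeft_apply, Pi.basisFun_apply]
    change s⁻¹ • apartment F n ((v⁻¹ * u : UnitriangularGroup F n) * _) = _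
    rw [apartment_bigCell (v⁻¹ * u).2, ← hs, Pi.single_apply]
    have : ((v⁻¹ * u : UnitriangularGroup F n) : GL (Fin n) F) = 1 ↔ u = v := by
      rw [OneMemClass.coe_eq_one, inv_mul_eq_one, eq_comm]
    simp only [this]
    split_ifs <;> simp [hs0]

variable (F n) in
/-- The restriction of the Steinberg module to the unitriangular group is the regular module. -/
noncomputable def restrictEquiv :
    flagModule F n ≃ₗ[ℂ] (UnitriangularGroup F n → ℂ) :=
  LinearEquiv.ofBijective (restrict F n) restrict_bijective

theorem trace_funLeft_eq_zero {ι : Type*} [Fintype ι] {s : ι → ι} (hs : ∀ i, s i ≠ i) :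
    LinearMap.trace ℂ (ι → ℂ) (LinearMap.funLeft ℂ ℂ s) = 0 := by
  rw [LinearMap.trace_eq_matrix_trace ℂ (Pi.basisFun ℂ ι), Matrix.trace]
  refine Finset.sum_eq_zero fun i _ => ?_
  simp [LinearMap.funLeft_apply, hs i]

theorem trace_rep_eq_zero {v : GL (Fin n) F} (hv : v ∈ unitriangular) (hv1 : v ≠ 1) :
    LinearMap.trace ℂ (flagModule F n) (rep F n v) = 0 := by
  rw [← LinearMap.trace_conj' (rep F n v) (restrictEquiv F n)]
  have : (restrictEquiv F n).conj (rep F n v) =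
      LinearMap.funLeft ℂ ℂ (fun u => (⟨v, hv⟩ : UnitriangularGroup F n)⁻¹ * u) := by
    refine LinearMap.ext fun φ => ?_
    obtain ⟨f, rfl⟩ := (restrictEquiv F n).surjective φ
    rw [LinearEquiv.conj_apply_apply, LinearEquiv.symm_apply_apply]
    exact restrict_rep ⟨v, hv⟩ f
  rw [this]
  refine trace_funLeft_eq_zero fun u hu => hv1 ?_
  rw [mul_eq_right, inv_eq_one] at hu
  exact congrArg Subtype.val hu

/-- A functional on the Steinberg module that is invariant under the unitriangular group is
determined up to a scalar. -/
theorem exists_eq_smul_sum_of_invariant (L : flagModule F n →ₗ[ℂ] ℂ)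
    (hL : ∀ v ∈ unitriangular, ∀ f, L (rep F n v f) = L f) :
    ∃ c : ℂ, ∀ f, L f = c * ∑ u, restrict F n f u := by
  let δ : flagModule F n := (restrictEquiv F n).symm (Pi.single 1 1)
  refine ⟨L δ, fun f => ?_⟩
  have hf : f = ∑ u : UnitriangularGroup F n,
      restrict F n f u • rep F n u δ := by
    refine restrict_bijective.1 ?_
    rw [map_sum]
    ext v
    have hδ : restrict F n δ = Pi.single 1 1 := (restrictEquiv F n).apply_symm_apply _
    simp [restrict_rep, hδ, LinearMap.funLeft_apply, Pi.single_apply, inv_mul_eq_one]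
  conv_lhs => rw [hf]
  rw [map_sum, Finset.mul_sum]
  refine Finset.sum_congr rfl fun u _ => ?_
  rw [map_smul, hL u u.2, smul_eq_mul, mul_comm]

/-- Evaluation at the identity. -/
def evalOne : flagModule F n →ₗ[ℂ] ℂ := LinearMap.proj 1 ∘ₗ (flagModule F n).subtype

theorem evalOne_rep (g : GL (Fin n) F) (f : flagModule F n) :
    evalOne (rep F n g f) = f.1 g⁻¹ := by
  change f.1 (g⁻¹ * 1) = _
  rw [mul_one]

theorem evalOne_rep_of_mem {g : GL (Fin n) F} (hg : g ∈ borel) (f : flagModule F n) :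
    evalOne (rep F n g f) = evalOne f := by
  rw [evalOne_rep, ← one_mul g⁻¹, f.2.1 1 _ (inv_mem hg)]
  rfl

instance : Nontrivial (flagModule F n) := (restrictEquiv F n).toEquiv.nontrivial

theorem exists_eq_smul_of_commute (φ : flagModule F n →ₗ[ℂ] flagModule F n)
    (hφ : ∀ g f, φ (rep F n g f) = rep F n g (φ f)) : ∃ c : ℂ, ∀ f, φ f = c • f := by
  obtain ⟨c₀, hc₀⟩ := exists_eq_smul_sum_of_invariant (F := F) (n := n) evalOne
    fun v hv f => evalOne_rep_of_mem hv.1 f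
  obtain ⟨c, hc⟩ := exists_eq_smul_sum_of_invariant (evalOne ∘ₗ φ) fun v hv f => by
    rw [LinearMap.comp_apply, hφ, evalOne_rep_of_mem hv.1, LinearMap.comp_apply]
  have hne : c₀ ≠ 0 := by
    rintro rfl
    obtain ⟨f, hf⟩ := exists_ne (0 : flagModule F n)
    refine hf (Subtype.ext (funext fun x => ?_))
    rw [← inv_inv x, ← evalOne_rep, hc₀, zero_mul]
    rfl
  refine ⟨c / c₀, fun f => Subtype.ext (funext fun x => ?_)⟩
  have h1 : (φ f).1 x = (evalOne ∘ₗ φ) (rep F n x⁻¹ f) := by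
    rw [LinearMap.comp_apply, hφ, evalOne_rep, inv_inv]
  have h2 : f.1 x = evalOne (rep F n x⁻¹ f) := by rw [evalOne_rep, inv_inv]
  change (φ f).1 x = c / c₀ * f.1 x
  rw [h1, h2, hc, hc₀]
  field_simp

end Module

section Sylow

variable {F : Type*} [Field F] {n : ℕ}

theorem exists_coe_eq_of_isUpperTriangular {M : Matrix (Fin n) (Fin n) F}
    (h0 : ∀ i j, j < i → M i j = 0) (h1 : ∀ i, M i i = 1) :
    ∃ g : GL (Fin n) F, g ∈ unitriangular ∧ (g : Matrix (Fin n) (Fin n) F) = M := by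
  have hdet : M.det ≠ 0 := by
    rw [det_of_isUpperTriangular fun i j => h0 i j]
    simp [h1]
  exact ⟨GeneralLinearGroup.mkOfDetNeZero M hdet, ⟨fun i j => h0 i j, h1⟩, rfl⟩

/-- The entries above the diagonal determine an upper unitriangular matrix. -/
theorem bijective_entries :
    Function.Bijective fun (u : UnitriangularGroup F n)
      (x : (j : Fin n) × {i : Fin n // i < j}) => u.1 x.2.1 x.1 := by
  constructor
  · intro u v huv
    refine Subtype.ext (Units.ext (Matrix.ext fun i j => ?_))
    rcases lt_trichotomy i j with h | rfl | h
    · exact congrFun huv ⟨j, i, h⟩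
    · rw [u.2.2, v.2.2]
    · rw [u.2.1 h, v.2.1 h]
  · intro φ
    obtain ⟨g, hg, he⟩ := exists_coe_eq_of_isUpperTriangular
      (M := Matrix.of fun i j => if h : i < j then φ ⟨j, i, h⟩ else if i = j then 1 else 0)
      (fun i j h => by simp [h.not_gt, h.ne']) (fun i => by simp)
    refine ⟨⟨g, hg⟩, ?_⟩
    ext ⟨j, i, h⟩
    simp [he, h]

theorem card_unitriangular [Fintype F] :
    Nat.card (UnitriangularGroup F n) = Fintype.card F ^ ∑ i : Fin n, (i : ℕ) := by
  rw [Nat.card_congr (Equiv.ofBijective _ bijective_entries), Nat.card_eq_fintype_card,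
    Fintype.card_fun, Fintype.card_sigma]
  congr 1
  refine Finset.sum_congr rfl fun j _ => ?_
  rw [Fintype.card_subtype, ← Fin.card_Iio]
  congr 1
  ext; simp

theorem not_dvd_index_unitriangular [Fintype F] {p k : ℕ} (hp : p.Prime)
    (hk : k ≠ 0) (hq : Fintype.card F = p ^ k) :
    ¬ p ∣ (unitriangular : Subgroup (GL (Fin n) F)).index := by
  have hcard := (unitriangular : Subgroup (GL (Fin n) F)).card_mul_index
  have hsplit : ∀ i : Fin n, (p ^ k) ^ n - (p ^ k) ^ (i : ℕ) =
      (p ^ k) ^ (i : ℕ) * ((p ^ k) ^ (n - i) - 1) := fun i => by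
    rw [Nat.mul_sub, mul_one, ← pow_add, Nat.add_sub_cancel' i.2.le]
  rw [card_unitriangular, Matrix.card_GL_field, hq, Finset.prod_congr rfl fun i _ => hsplit i,
    Finset.prod_mul_distrib, Finset.prod_pow_eq_pow_sum] at hcard
  rw [Nat.eq_of_mul_eq_mul_left (pow_pos (pow_pos hp.pos k) _) hcard,
    Prime.dvd_finsetProd_iff hp.prime]
  rintro ⟨i, -, hi⟩
  have hdvd : p ∣ (p ^ k) ^ (n - i) :=
    dvd_pow (dvd_pow_self p hk) (Nat.sub_ne_zero_of_lt i.2)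
  have h1 := (Nat.dvd_sub_iff_right (Nat.one_le_pow _ _ (pow_pos hp.pos k)) hdvd).1 hi
  exact hp.one_lt.ne' (Nat.dvd_one.1 h1)

theorem exists_conj_mem_unitriangular [Fintype F] {p k : ℕ} (hp : p.Prime)
    (hk : k ≠ 0) (hq : Fintype.card F = p ^ k) {g : GL (Fin n) F}
    (hg : (g.1 - 1) ^ n = 0) : ∃ x : GL (Fin n) F, x * g * x⁻¹ ∈ unitriangular := by
  classical
  have := Fact.mk hp
  have hchar : CharP F p := by
    obtain ⟨r, hr⟩ := CharP.exists F
    obtain ⟨m, hr', hm⟩ := FiniteField.card F r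
    have hpr : p ∣ r ^ (m : ℕ) := by
      rw [← hm, hq]
      exact dvd_pow_self p hk
    rwa [(Nat.prime_dvd_prime_iff_eq hp hr').1 (hp.dvd_of_dvd_pow hpr)]
  cases n with
  | zero => exact ⟨1, by rw [Subsingleton.elim (1 * g * 1⁻¹) 1]; exact one_mem _⟩
  | succ n =>
  have hpow : g ^ p ^ (n + 1) = 1 := by
    have h1 : (g.1 - 1) ^ p ^ (n + 1) = 0 :=
      pow_eq_zero_of_le (Nat.lt_pow_self hp.one_lt).le hg
    rw [sub_pow_char_pow_of_commute _ _ (Commute.one_right _), one_pow, sub_eq_zero] at h1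
    exact Units.ext h1
  have hP : IsPGroup p (Subgroup.zpowers g) := by
    rintro ⟨_, m, rfl⟩
    refine ⟨n + 1, Subtype.ext ?_⟩
    change (g ^ m) ^ p ^ (n + 1) = 1
    rw [← zpow_natCast, zpow_comm, zpow_natCast, hpow, _root_.one_zpow]
  obtain ⟨Q, hQ⟩ := hP.exists_le_sylow
  let S : Sylow p (GL (Fin (n + 1)) F) :=
    IsPGroup.toSylow (P := unitriangular) (IsPGroup.of_card
      (n := k * ∑ i : Fin (n + 1), (i : ℕ)) (by rw [card_unitriangular, hq, pow_mul]))
      (not_dvd_index_unitriangular hp hk hq)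
  obtain ⟨x, hx⟩ := MulAction.exists_smul_eq (GL (Fin (n + 1)) F) Q S
  refine ⟨x, ?_⟩
  have hmem : x * g * x⁻¹ ∈ (x • Q : Sylow p _) := by
    change x * g * x⁻¹ ∈ ((x • Q : Sylow p _) : Subgroup _)
    rw [Sylow.coe_subgroup_smul]
    exact Subgroup.smul_mem_pointwise_smul _ (MulAut.conj x) _
      (hQ (Subgroup.mem_zpowers g))
  rw [hx] at hmem
  exact hmem

end Sylow

section FDRep

open CategoryTheory

variable (F : Type) [Field F] [Fintype F] (n : ℕ)

/-- The Steinberg representation as a finite-dimensional representation. -/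
noncomputable def fdRep : FDRep ℂ (GL (Fin n) F) := FDRep.of (rep F n)

instance : Simple (fdRep F n) := by
  classical
  have : NeZero (Nat.card (GL (Fin n) F) : ℂ) := ⟨by simp⟩
  rw [FDRep.simple_iff_end_is_rank_one]
  refine finrank_eq_one (𝟙 _) (fun h => ?_) fun φ => ?_
  · obtain ⟨f, hf⟩ := exists_ne (0 : flagModule F n)
    exact hf (congrArg (fun φ : fdRep F n ⟶ fdRep F n => φ.hom.hom.hom f) h)
  · obtain ⟨c, hc⟩ := exists_eq_smul_of_commute (F := F) (n := n) φ.hom.hom.hom fun g f =>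
      congrArg (fun ψ => ψ.hom.hom f) (φ.comm g)
    refine ⟨c, ?_⟩
    ext f
    exact (hc f).symm

theorem fdRep_character_of_unipotent {p k : ℕ} (hp : p.Prime)
    (hk : k ≠ 0) (hq : Fintype.card F = p ^ k) {g : GL (Fin n) F}
    (hg : (g.1 - 1) ^ n = 0) (hg1 : g ≠ 1) : (fdRep F n).character g = 0 := by
  obtain ⟨x, hx⟩ := exists_conj_mem_unitriangular hp hk hq hg
  rw [← FDRep.char_conj _ g x]
  refine trace_rep_eq_zero hx fun h => hg1 ?_
  simpa using h

theorem character_one_ne_zero {G : Type*} [Group G] (V : FDRep ℂ G) [Simple V] :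
    V.character 1 ≠ 0 := by
  rw [FDRep.char_one, Nat.cast_ne_zero]
  intro h
  have : Subsingleton V := Module.finrank_zero_iff.1 h
  refine id_nonzero V ?_
  ext x
  exact Subsingleton.elim (α := V) _ _

theorem sum_unipotent_ne_zero [DecidableEq F] {p k : ℕ} (hp : p.Prime) (hk : k ≠ 0) (hn : n ≠ 0)
    (hq : Fintype.card F = p ^ k) (V : FDRep ℂ (GL (Fin n) F)) [Simple V] :
    ∑ g ∈ Finset.univ.filter (fun g : GL (Fin n) F =>
        ((g : Matrix (Fin n) (Fin n) F) - 1) ^ n = 0),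
      (fdRep F n).character g * V.character g⁻¹ ≠ 0 := by
  rw [Finset.sum_eq_single 1]
  · rw [inv_one]
    exact mul_ne_zero (character_one_ne_zero _) (character_one_ne_zero V)
  · intro g hg hg1
    rw [fdRep_character_of_unipotent F n hp hk hq (Finset.mem_filter.1 hg).2 hg1, zero_mul]
  · exact fun h => absurd (by simp [hn]) h

end FDRep

end Steinberg

/-- Let `q = p ^ k` be a prime power, `n ≥ 1`, `G = GL(n, 𝔽_q)` and
`G_u` the set of unipotent elements of `G`. Then the equivalence relation on the
irreducible complex characters of `G` generated by direct linking across `G_u`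
(i.e. `χ, ψ` are directly linked if `Σ_{g ∈ G_u} χ(g) ψ(g⁻¹) ≠ 0`) relates any two
irreducible characters: the only 1-block of `G` is the whole of `Irr(G)`. -/
theorem oneBlock_is_all_of_irr
    (p k n : ℕ) (hp : p.Prime) (hk : 0 < k) (hn : 1 ≤ n)
    (F : Type) [Field F] [Fintype F] [DecidableEq F]
    (hq : Fintype.card F = p ^ k)
    (χ ψ : FDRep ℂ (Matrix.GeneralLinearGroup (Fin n) F))
    (hχ : CategoryTheory.Simple χ) (hψ : CategoryTheory.Simple ψ) :
    Relation.EqvGen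
      (fun A B : FDRep ℂ (Matrix.GeneralLinearGroup (Fin n) F) =>
        CategoryTheory.Simple A ∧ CategoryTheory.Simple B ∧
        ∑ g ∈ Finset.univ.filter
            (fun g : Matrix.GeneralLinearGroup (Fin n) F =>
              ((g : Matrix (Fin n) (Fin n) F) - 1) ^ n = 0),
          A.character g * B.character g⁻¹ ≠ 0)
      χ ψ := by
  have key : ∀ V : FDRep ℂ (Matrix.GeneralLinearGroup (Fin n) F), CategoryTheory.Simple V → _ :=
    fun V hV => Steinberg.sum_unipotent_ne_zero F n hp hk.ne' (by omega) hq V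
  refine .trans _ (Steinberg.fdRep F n) _ (.symm _ _ (.rel _ _ ⟨inferInstance, hχ, key χ hχ⟩)) ?_
  exact .rel _ _ ⟨inferInstance, hψ, key ψ hψ⟩
end

section
/- Let q be a prime power, let f be a monic irreducible polynomial over 𝔽_q of degree d with f ≠ X, let k ≥ 1, and let V be an 𝔽_q-vector space of dimension k·d. Let h ∈ GL(V) be an (invertible, semisimple, primary) element whose minimal polynomial over 𝔽_q equals f. Then the centralizer of h in GL(V) is isomorphic, as a group, to the general linear group GL(k, K) of degree k over the field K = 𝔽_q[X]/(f), a field with q^d elements; i.e. C_{GL(kd, q)}(h) ≅ GL(k, q^d). -/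
/-- If `a` generates `K` over `F`, an `F`-linear map commuting with the action of `a`
commutes with the action of all of `K`. -/
theorem map_smul_of_adjoin_singleton_eq_top {F K V : Type*} [CommSemiring F] [CommSemiring K]
    [Algebra F K] [AddCommMonoid V] [Module F V] [Module K V] [IsScalarTower F K V] {a : K}
    (ha : Algebra.adjoin F {a} = ⊤) (g : Module.End F V) (hg : ∀ v, g (a • v) = a • g v)
    (c : K) (v : V) : g (c • v) = c • g v := by
  have hc : c ∈ Algebra.adjoin F {a} := ha ▸ Algebra.mem_top
  induction hc using Algebra.adjoin_induction generalizing v with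
  | mem x hx => obtain rfl := hx; exact hg v
  | algebraMap r => simp [algebraMap_smul]
  | add x y _ _ hx hy => simp [add_smul, hx, hy]
  | mul x y _ _ hx hy => simp [mul_smul, hx, hy]

/-- Restriction of scalars as a monoid homomorphism between endomorphism monoids. -/
def Module.End.restrictScalarsMonoidHom (F K V : Type*) [CommSemiring F] [CommSemiring K]
    [Algebra F K] [AddCommMonoid V] [Module F V] [Module K V] [IsScalarTower F K V] :
    Module.End K V →* Module.End F V where
  toFun g := g.restrictScalars F
  map_one' := rfl
  map_mul' _ _ := rfl

/-- If `a` generates `K` over `F` and `h` acts on `V` as `a`, then the centralizer of `h` among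
the `F`-linear automorphisms of `V` is the group of `K`-linear automorphisms. -/
theorem nonempty_centralizer_mulEquiv_units_end {F K V : Type*} [CommSemiring F] [CommSemiring K]
    [Algebra F K] [AddCommMonoid V] [Module F V] [Module K V] [IsScalarTower F K V] {a : K}
    (ha : Algebra.adjoin F {a} = ⊤) (h : (Module.End F V)ˣ)
    (hh : ∀ v, (h : Module.End F V) v = a • v) :
    Nonempty ((Subgroup.centralizer {h} : Subgroup (Module.End F V)ˣ) ≃* (Module.End K V)ˣ) := by
  let φ : (Module.End K V)ˣ →* (Module.End F V)ˣ :=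
    Units.map (Module.End.restrictScalarsMonoidHom F K V)
  have hinj : Function.Injective φ :=
    Units.map_injective (LinearMap.restrictScalars_injective F)
  have hrange : φ.range = Subgroup.centralizer {h} := by
    ext g
    rw [Subgroup.mem_centralizer_singleton_iff]
    constructor
    · rintro ⟨u, rfl⟩
      ext v
      change (u : Module.End K V) ((h : Module.End F V) v) =
        (h : Module.End F V) ((u : Module.End K V) v)
      simp [hh]
    · intro hg
      have key : ∀ x : (Module.End F V)ˣ, x * h = h * x → ∀ (c : K) (v : V),
          (x : Module.End F V) (c • v) = c • (x : Module.End F V) v := fun x hx =>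
        map_smul_of_adjoin_singleton_eq_top ha _ fun v => by
          rw [← hh, ← hh]
          exact LinearMap.congr_fun (congrArg Units.val hx) v
      have hg' : g⁻¹ * h = h * g⁻¹ := (Commute.inv_left (show Commute g h from hg)).eq
      refine ⟨⟨{ (g : Module.End F V) with map_smul' := key g hg },
        { ((g⁻¹ : (Module.End F V)ˣ) : Module.End F V) with map_smul' := key g⁻¹ hg' },
        ?_, ?_⟩, ?_⟩
      · ext v
        exact LinearMap.congr_fun g.mul_inv v
      · ext v
        exact LinearMap.congr_fun g.inv_mul v
      · ext v
        rfl
  exact ⟨((φ.ofInjective hinj).trans (MulEquiv.subgroupCongr hrange)).symm⟩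

/-- Let `𝔽_q` be a finite field, `f ≠ X` a monic irreducible
polynomial over `𝔽_q` of degree `d`, `k ≥ 1`, and `V` an `𝔽_q`-vector space of
dimension `k·d`. If `h ∈ GL(V)` has minimal polynomial `f` (such an element is
invertible, semisimple and primary), then the centralizer of `h` in `GL(V)` is
isomorphic as a group to `GL(k, K)` where `K = 𝔽_q[X]/(f)` is a field with `q^d`
elements; i.e. `C_{GL(kd,q)}(h) ≅ GL(k, q^d)`. -/
theorem centralizer_semisimple_primary_iso
    (F : Type) [Field F] [Fintype F]
    (f : Polynomial F) (hmonic : f.Monic) (hirr : Irreducible f)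
    (hfX : f ≠ Polynomial.X)
    (d k : ℕ) (hd : f.natDegree = d) (hk : 1 ≤ k)
    (V : Type) [AddCommGroup V] [Module F V] [FiniteDimensional F V]
    (hdim : Module.finrank F V = k * d)
    (h : (Module.End F V)ˣ)
    (hmin : minpoly F (h : Module.End F V) = f) :
    Nonempty
      ((Subgroup.centralizer {h} : Subgroup (Module.End F V)ˣ) ≃*
        Matrix.GeneralLinearGroup (Fin k) (AdjoinRoot f)) := by
  subst hd hmin
  set f := minpoly F (h : Module.End F V)
  have : Fact (Irreducible f) := ⟨hirr⟩
  let ψ : AdjoinRoot f →ₐ[F] Module.End F V :=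
    Ideal.Quotient.liftₐ (Ideal.span {f}) (Polynomial.aeval (h : Module.End F V)) fun p hp =>
      (minpoly.dvd_iff (A := F)).mp (Ideal.mem_span_singleton.mp hp)
  let _ : Module (AdjoinRoot f) V := Module.compHom V ψ.toRingHom
  have : IsScalarTower F (AdjoinRoot f) V :=
    ⟨fun r x v => LinearMap.congr_fun (map_smul ψ r x) v⟩
  have hroot : ∀ v, (h : Module.End F V) v = AdjoinRoot.root f • v := fun v =>
    (LinearMap.congr_fun (Polynomial.aeval_X (R := F) (h : Module.End F V)) v).symm
  have : Module.Finite (AdjoinRoot f) V := Module.Finite.of_restrictScalars_finite F _ _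
  have hfinrank : Module.finrank (AdjoinRoot f) V = k := by
    have hK : Module.finrank F (AdjoinRoot f) = f.natDegree :=
      (AdjoinRoot.powerBasis hirr.ne_zero).finrank
    have hmul := Module.finrank_mul_finrank F (AdjoinRoot f) V
    rw [hK, hdim, mul_comm] at hmul
    exact Nat.eq_of_mul_eq_mul_right hirr.natDegree_pos hmul
  obtain ⟨e⟩ := nonempty_centralizer_mulEquiv_units_end AdjoinRoot.adjoinRoot_eq_top h hroot
  exact ⟨e.trans (Units.mapEquiv
    (algEquivMatrix (Module.finBasisOfFinrankEq (AdjoinRoot f) V hfinrank)).toMulEquiv)⟩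
end

section
/- Fix an integer d ≥ 1, let x ∈ 𝒳_d and let y ∈ 𝒴_d(x). Then the centralizer of the product xy in G is contained in the centralizer of x: C_G(xy) ≤ C_G(x). -/
open Polynomial

/-- For `g ∈ GL(V)` with `n = dim V`, the subspace `V_g = range((g - 1)^n)`. -/
noncomputable def primaryRange {F V : Type} [Field F] [AddCommGroup V] [Module F V]
    (g : (Module.End F V)ˣ) : Submodule F V :=
  LinearMap.range (((g : Module.End F V) - 1) ^ Module.finrank F V)

/-- For `g ∈ GL(V)` with `n = dim V`, the subspace `V_g⁰ = ker((g - 1)^n)`. -/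
noncomputable def primaryKer {F V : Type} [Field F] [AddCommGroup V] [Module F V]
    (g : (Module.End F V)ˣ) : Submodule F V :=
  LinearMap.ker (((g : Module.End F V) - 1) ^ Module.finrank F V)

/-- The set `𝒳_d` of `d`-elements of `GL(V)`: those `g` fixing `V_g⁰` pointwise such
that every monic irreducible factor of the characteristic polynomial of `g` other
than `X - 1` has degree divisible by `d`. -/
noncomputable def dElements (F V : Type) [Field F] [AddCommGroup V] [Module F V]
    [FiniteDimensional F V] (d : ℕ) : Set (Module.End F V)ˣ :=
  {g | (∀ v ∈ primaryKer g, (g : Module.End F V) v = v) ∧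
    ∀ f : Polynomial F, f.Monic → Irreducible f →
      f ∣ LinearMap.charpoly (g : Module.End F V) → f ≠ X - 1 → d ∣ f.natDegree}

/-- For `x ∈ 𝒳_d`, the set `𝒴_d(x)`: those `y ∈ GL(V)` fixing `V_x` pointwise,
mapping `V_x⁰` into itself, and such that every monic irreducible factor of the
characteristic polynomial of `y` other than `X - 1` has degree not divisible by `d`. -/
noncomputable def dRegular (F V : Type) [Field F] [AddCommGroup V] [Module F V]
    [FiniteDimensional F V] (d : ℕ) (x : (Module.End F V)ˣ) :
    Set (Module.End F V)ˣ :=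
  {y | (∀ v ∈ primaryRange x, (y : Module.End F V) v = v) ∧
    (∀ v ∈ primaryKer x, (y : Module.End F V) v ∈ primaryKer x) ∧
    ∀ f : Polynomial F, f.Monic → Irreducible f →
      f ∣ LinearMap.charpoly (y : Module.End F V) → f ≠ X - 1 → ¬ d ∣ f.natDegree}

/-- An element commuting with `b` commutes with every polynomial in `b`. -/
theorem Commute.polynomial_aeval_right {R A : Type*} [CommSemiring R] [Semiring A] [Algebra R A]
    {a b : A} (h : Commute a b) (p : R[X]) : Commute a (aeval b p) := by
  induction p using Polynomial.induction_on' with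
  | add p q hp hq =>
    rw [map_add]
    exact hp.add_right hq
  | monomial n c =>
    rw [aeval_monomial]
    exact (Algebra.commute_algebraMap_right c a).mul_right (h.pow_right n)

/-- If `g` and `h` agree on an `h`-stable subspace `W`, then so do `p(g)` and `p(h)`. -/
theorem aeval_apply_eq_of_eqOn {F V : Type} [Field F] [AddCommGroup V] [Module F V]
    {g h : Module.End F V} {W : Submodule F V} (hgh : ∀ w ∈ W, g w = h w)
    (hW : ∀ w ∈ W, h w ∈ W) (p : F[X]) : ∀ w ∈ W, aeval g p w = aeval h p w := by
  induction p using Polynomial.induction_on' with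
  | add p q hp hq =>
    intro w hw
    simp only [map_add, LinearMap.add_apply, hp w hw, hq w hw]
  | monomial n a =>
    intro w hw
    have hpow : (g ^ n) w = (h ^ n) w := by
      induction n generalizing w with
      | zero => simp
      | succ n ih =>
        rw [pow_succ, pow_succ, Module.End.mul_apply, Module.End.mul_apply, hgh w hw,
          ih _ (hW w hw)]
    simp only [aeval_monomial, Module.End.mul_apply, hpow]

/-- The characteristic polynomial of `x` splits off its factors `X - 1`; the cofactor
annihilates the range of `(x - 1) ^ n`. -/
theorem exists_dvd_charpoly_not_X_sub_one_dvd {F V : Type} [Field F] [AddCommGroup V]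
    [Module F V] [FiniteDimensional F V] (x : Module.End F V) :
    ∃ P : F[X], P ∣ x.charpoly ∧ ¬ (X - 1 : F[X]) ∣ P ∧
      aeval x (P * (X - 1) ^ Module.finrank F V) = 0 := by
  obtain ⟨P, hP, hdvd⟩ := exists_eq_pow_rootMultiplicity_mul_and_not_dvd x.charpoly
    x.charpoly_monic.ne_zero 1
  rw [map_one] at hP hdvd
  refine ⟨P, hP ▸ dvd_mul_left _ _, hdvd, ?_⟩
  have hle : x.charpoly.rootMultiplicity 1 ≤ Module.finrank F V := by
    classical
    rw [← x.charpoly_natDegree, ← count_roots]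
    exact (Multiset.count_le_card _ _).trans (card_roots' _)
  obtain ⟨Q, hQ⟩ : x.charpoly ∣ P * (X - 1) ^ Module.finrank F V := by
    rw [mul_comm P]
    exact hP.dvd.trans (mul_dvd_mul_right (pow_dvd_pow _ hle) _)
  rw [hQ, map_mul, LinearMap.aeval_self_charpoly, zero_mul]

/-- Polynomials over a field without a common monic irreducible factor are coprime. -/
theorem isCoprime_of_forall_monic_irreducible {F : Type} [Field F] {p q : F[X]} (hq : q ≠ 0)
    (h : ∀ f : F[X], f.Monic → Irreducible f → f ∣ p → ¬ f ∣ q) : IsCoprime p q := by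
  refine isCoprime_of_irreducible_dvd (fun hpq => hq hpq.2) fun f hf hp hq' => ?_
  have hassoc : Associated (f * C f.leadingCoeff⁻¹) f :=
    associated_mul_unit_left _ _ (isUnit_C.mpr
      (isUnit_iff_ne_zero.mpr (inv_ne_zero (leadingCoeff_ne_zero.mpr hf.ne_zero))))
  exact h _ (monic_mul_leadingCoeff_inv hf.ne_zero) (hassoc.irreducible_iff.mpr hf)
    (hassoc.dvd.trans hp) (hassoc.dvd.trans hq')

/-- Every `d`-element `x` is a polynomial in `x * y` for `y` in `𝒴_d(x)`. -/
theorem exists_aeval_mul_eq {F V : Type} [Field F] [AddCommGroup V] [Module F V]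
    [FiniteDimensional F V] {d : ℕ} {x y : (Module.End F V)ˣ}
    (hx : x ∈ dElements F V d) (hy : y ∈ dRegular F V d x) :
    ∃ q : F[X], aeval ((x : Module.End F V) * y) q = x := by
  obtain ⟨hxfix, hxdeg⟩ := hx
  obtain ⟨hyfix, hystab, hydeg⟩ := hy
  obtain ⟨P, hPdvd, hPone, hPzero⟩ := exists_dvd_charpoly_not_X_sub_one_dvd (x : Module.End F V)
  have hpow : aeval (x : Module.End F V) ((X - 1 : F[X]) ^ Module.finrank F V) =
      ((x : Module.End F V) - 1) ^ Module.finrank F V := by simp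
  have hcop : IsCoprime P (LinearMap.charpoly (y : Module.End F V)) := by
    refine isCoprime_of_forall_monic_irreducible (LinearMap.charpoly_monic _).ne_zero
      fun f hmon hirr hfP hfy => ?_
    have hne : f ≠ X - 1 := fun hf => hPone (hf ▸ hfP)
    exact hydeg f hmon hirr hfy hne (hxdeg f hmon hirr (hfP.trans hPdvd) hne)
  have hcop' : IsCoprime P ((X - 1) ^ Module.finrank F V) := by
    have hirr : Irreducible (X - 1 : F[X]) := by simpa using irreducible_X_sub_C (1 : F)
    exact ((hirr.coprime_iff_not_dvd.mpr hPone).symm).pow_right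
  have hrange : ∀ w ∈ primaryRange x,
      ((x : Module.End F V) * y) w = (x : Module.End F V) w := fun w hw => by
    rw [Module.End.mul_apply, hyfix w hw]
  have hrange_stab : ∀ w ∈ primaryRange x, (x : Module.End F V) w ∈ primaryRange x := by
    rintro _ ⟨v, rfl⟩
    refine ⟨(x : Module.End F V) v, ?_⟩
    rw [← Module.End.mul_apply, ← Module.End.mul_apply]
    congr 1
    exact (((Commute.refl (x : Module.End F V)).sub_left (Commute.one_left _)).pow_left _).eq
  have hker : ∀ u ∈ primaryKer x,
      ((x : Module.End F V) * y) u = (y : Module.End F V) u := fun u hu => by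
    rw [Module.End.mul_apply, hxfix _ (hystab u hu)]
  obtain ⟨a, b, hab⟩ := hcop
  obtain ⟨a', b', hab'⟩ := hcop'
  have hsplit : primaryRange x ⊔ primaryKer x = ⊤ := by
    refine eq_top_iff.mpr fun v _ => Submodule.mem_sup.mpr
      ⟨aeval (x : Module.End F V) (b' * (X - 1) ^ Module.finrank F V) v, ?_,
        aeval (x : Module.End F V) (a' * P) v, ?_, ?_⟩
    · rw [mul_comm, map_mul, hpow]
      exact ⟨_, rfl⟩
    · rw [primaryKer, LinearMap.mem_ker, ← hpow, ← Module.End.mul_apply, ← map_mul,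
        mul_comm, mul_assoc, map_mul, hPzero, mul_zero, LinearMap.zero_apply]
    · rw [← LinearMap.add_apply, ← map_add, add_comm, hab', map_one, Module.End.one_apply]
  set g : Module.End F V := (x : Module.End F V) * y
  have hPg : ∀ w ∈ primaryRange x, aeval g P w = 0 := fun w hw => by
    rw [aeval_apply_eq_of_eqOn hrange hrange_stab P w hw]
    obtain ⟨v, rfl⟩ := hw
    rw [← hpow, ← Module.End.mul_apply, ← map_mul, hPzero, LinearMap.zero_apply]
  have hyg : ∀ u ∈ primaryKer x, aeval g (LinearMap.charpoly (y : Module.End F V)) u = 0 :=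
    fun u hu => by
      rw [aeval_apply_eq_of_eqOn hker hystab _ u hu, LinearMap.aeval_self_charpoly,
        LinearMap.zero_apply]
  refine ⟨(X - 1) * (b * LinearMap.charpoly (y : Module.End F V)) + 1, LinearMap.ext fun v => ?_⟩
  obtain ⟨w, hw, u, hu, rfl⟩ := Submodule.mem_sup.mp (hsplit ▸ Submodule.mem_top : v ∈ _)
  rw [map_add (aeval g _), map_add (x : Module.End F V)]
  congr 1
  · rw [eq_sub_of_add_eq' hab, ← hrange w hw]
    simp [hPg w hw]
  · rw [hxfix u hu]
    simp [hyg u hu]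

/-- For `d ≥ 1`, `x ∈ 𝒳_d` and `y ∈ 𝒴_d(x)`, the centralizer of
`x * y` in `G = GL(V)` is contained in the centralizer of `x`: `C_G(xy) ≤ C_G(x)`. -/
theorem centralizer_mul_le_centralizer
    (F V : Type) [Field F] [Fintype F] [AddCommGroup V] [Module F V]
    [FiniteDimensional F V] (hn : 1 ≤ Module.finrank F V)
    (d : ℕ) (hd : 1 ≤ d)
    (x : (Module.End F V)ˣ) (hx : x ∈ dElements F V d)
    (y : (Module.End F V)ˣ) (hy : y ∈ dRegular F V d x) :
    Subgroup.centralizer ({x * y} : Set (Module.End F V)ˣ) ≤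
      Subgroup.centralizer ({x} : Set (Module.End F V)ˣ) := by
  intro z hz
  rw [Subgroup.mem_centralizer_singleton_iff] at hz ⊢
  obtain ⟨q, hq⟩ := exists_aeval_mul_eq hx hy
  have hcomm : Commute (z : Module.End F V) ((x : Module.End F V) * y) := by
    simpa [Commute, SemiconjBy] using congrArg Units.val hz
  have hzx : Commute (z : Module.End F V) (aeval ((x : Module.End F V) * y) q) :=
    hcomm.polynomial_aeval_right q
  rw [hq] at hzx
  exact Units.ext hzx
end
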